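/- arXiv:1304.0745 — 3 statements merged into one kernel-verified Lean document; each statement's English description precedes it below -/
import Mathlib

section
/- Let n ≥ 2 and R = K[x, y, a_{1,1}, …, a_{2,n−2}] be a polynomial ring in 2n − 2 variables over a field K. Let I = (x², y², a_{1,1}x + a_{2,1}y, …, a_{1,n−2}x + a_{2,n−2}y), an ideal generated by n quadrics. Then pd(R/I) = 2n − 2; equivalently, the element xy represents a nonzero socle element of R/I, so depth(R/I) = 0. -/
open MvPolynomial Filter

universe u

/-- `PdLE R n M` means the `R`-module `M` has projective dimension at most `n`:
either `M` is projective (`n = 0`), or `M` is a quotient of a free module by a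
submodule of projective dimension at most `n - 1`. -/
def PdLE (R : Type u) [CommRing R] : ℕ → (M : Type u) → [AddCommGroup M] → [Module R M] → Prop
  | 0, M, _, _ => Module.Projective R M
  | n + 1, M, _, _ => ∃ (F : Type u) (_ : AddCommGroup F) (_ : Module R F),
      Module.Free R F ∧ ∃ f : F →ₗ[R] M, Function.Surjective f ∧ PdLE R n (LinearMap.ker f)

/-- The projective dimension of an `R`-module `M`, as an element of `ℕ∞`
(`⊤` if `M` has no finite free resolution). -/
noncomputable def projDim (R : Type u) [CommRing R] (M : Type u) [AddCommGroup M]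
    [Module R M] : ℕ∞ :=
  sInf ((fun n : ℕ => (n : ℕ∞)) '' {n : ℕ | PdLE R n M})

/-- The height of an ideal: the infimum of the heights of the prime ideals containing it. -/
noncomputable def idealHeight {R : Type*} [CommRing R] (I : Ideal R) : ℕ∞ :=
  ⨅ p ∈ {p : PrimeSpectrum R | I ≤ p.asIdeal}, Order.height p

/-- The length of a module, defined as the Krull dimension of its lattice of submodules. -/
noncomputable def moduleLength (R : Type u) [CommRing R] (M : Type u) [AddCommGroup M]
    [Module R M] : WithBot ℕ∞ :=
  Order.krullDim (Submodule R M)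

/-- `IsHSMultiplicity R mx I e` asserts that the Hilbert–Samuel multiplicity of `R/I`
with respect to the ideal `mx` equals `e`: for `d = dim R/I` there is a polynomial `P`
of degree `d` with `e = d! · (leading coefficient of P)` such that
`length (R/(I + mx^n)) = P(n)` for all large `n`. -/
def IsHSMultiplicity (R : Type u) [CommRing R] (mx I : Ideal R) (e : ℕ) : Prop :=
  ∃ (d : ℕ) (P : Polynomial ℚ),
    ringKrullDim (R ⧸ I) = (d : WithBot ℕ∞) ∧
    P.natDegree = d ∧
    (e : ℚ) = P.leadingCoeff * d.factorial ∧
    ∀ᶠ n : ℕ in Filter.atTop, ∃ k : ℕ, (k : ℚ) = P.eval (n : ℚ) ∧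
      moduleLength R (R ⧸ (I ⊔ mx ^ n)) = ((k : ℕ∞) : WithBot ℕ∞)

/-- A matrix over a `K`-algebra is `1`-generic if it has no generalized zero entry:
for every nonzero vectors `u`, `v` of scalars, `uᵀ M v ≠ 0`. -/
def OneGeneric (K : Type*) [Field K] {R : Type u} [CommRing R] [Algebra K R]
    {m l : ℕ} (M : Matrix (Fin m) (Fin l) R) : Prop :=
  ∀ (u : Fin m → K) (v : Fin l → K), u ≠ 0 → v ≠ 0 →
    ∑ i, ∑ j, algebraMap K R (u i * v j) * M i j ≠ 0

/-- The ideal of all `2 × 2` minors of a `2 × l` matrix. -/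
def minors2 {R : Type u} [CommRing R] {l : ℕ} (M : Matrix (Fin 2) (Fin l) R) : Ideal R :=
  Ideal.span (Set.range fun p : Fin l × Fin l => M 0 p.1 * M 1 p.2 - M 0 p.2 * M 1 p.1)

/-- The homogeneous maximal ideal of a polynomial ring. -/
noncomputable def maxIdeal (K : Type*) [Field K] (σ : Type*) : Ideal (MvPolynomial σ K) :=
  Ideal.span (Set.range (X : σ → MvPolynomial σ K))

/-- The ideal represented by minors by the `2 × (n+1)` matrix with first column `(x, y)ᵀ`
and remaining columns `(u j, v j)ᵀ`: it is generated by the `2 × 2` minors involving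
the first column. -/
def repByMinors {R : Type u} [CommRing R] {n : ℕ} (x y : R) (u v : Fin n → R) : Ideal R :=
  Ideal.span (Set.range fun j : Fin n => x * v j - y * u j)


section Lower
open CategoryTheory Abelian RingTheory.Sequence

lemma ext_vanish_of_weaklyRegular {R : Type u} [CommRing R] (N : ModuleCat.{u} R)
    (rs : List R) (mem : ∀ r ∈ rs, r ∈ Module.annihilator R N)
    (M : ModuleCat.{u} R) (reg : IsWeaklyRegular M rs) :
    ∀ i < rs.length, Subsingleton (Ext N M i) := by
  induction rs generalizing M with
  | nil => simp
  | cons a rs ih =>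
    rintro i hi
    rw [isWeaklyRegular_cons_iff] at reg
    simp only [List.mem_cons, forall_eq_or_imp] at mem
    simp only [List.length_cons] at hi
    match i with
    | 0 =>
      have : Subsingleton (N →ₗ[R] M) := by
        refine subsingleton_of_forall_eq 0 fun f => ?_
        ext x
        apply reg.1
        simp only [LinearMap.zero_apply, smul_zero]
        rw [← map_smul, Module.mem_annihilator.mp mem.1, map_zero]
      exact (Ext.addEquiv₀.trans ModuleCat.homAddEquiv).subsingleton
    | i + 1 =>
      let g := (AddCommGrpCat.ofHom ((Ext.mk₀ (ModuleCat.smulShortComplex M a).f).postcomp N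
        (add_zero (i + 1))))
      have mono_g : Mono g := by
        apply (Ext.covariant_sequence_exact₁' N reg.1.smulShortComplex_shortExact i (i + 1)
          rfl).mono_g ((AddCommGrpCat.isZero_of_iff_subsingleton.mpr ?_).eq_zero_of_src _)
        exact ih mem.2 (ModuleCat.of R (QuotSMulTop a M)) reg.2 i (by omega)
      have zero_g : g = 0 := Ext.postcomp_smul_id_eq_zero_of_mem_annihilator mem.1 (i + 1)
      exact AddCommGrpCat.subsingleton_of_isZero (Limits.IsZero.of_mono_eq_zero _ zero_g)

lemma weaklyRegular_of_flat {R : Type u} [CommRing R] (rs : List R) (h : IsWeaklyRegular R rs)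
    (M : Type u) [AddCommGroup M] [Module R M] [Module.Flat R M] : IsWeaklyRegular M rs :=
  ((TensorProduct.rid R M).isWeaklyRegular_congr rs).mp h.isWeaklyRegular_lTensor

lemma ext_vanish_of_pdLE {R : Type u} [CommRing R] (N : ModuleCat.{u} R)
    (rs : List R) (mem : ∀ r ∈ rs, r ∈ Module.annihilator R N) (reg : IsWeaklyRegular R rs)
    (k : ℕ) : ∀ (M : Type u) [AddCommGroup M] [Module R M], PdLE R k M →
      ∀ i, i + k < rs.length → Subsingleton (Ext N (ModuleCat.of R M) i) := by
  induction k with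
  | zero =>
    intro M _ _ h i hi
    have : Module.Projective R M := h
    exact ext_vanish_of_weaklyRegular N rs mem (ModuleCat.of R M)
      (weaklyRegular_of_flat rs reg M) i hi
  | succ k ih =>
    intro M _ _ h i hi
    obtain ⟨F, _, _, hF, f, hf, hk⟩ := h
    have hS := LinearMap.shortExact_shortComplexKer hf
    have z2 : Subsingleton (Ext N (ModuleCat.of R F) i) :=
      ext_vanish_of_weaklyRegular N rs mem (ModuleCat.of R F)
        (weaklyRegular_of_flat rs reg F) i (by omega)
    have z1 : Subsingleton (Ext N (ModuleCat.of R (LinearMap.ker f)) (i + 1)) :=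
      ih _ hk (i + 1) (by omega)
    exact AddCommGrpCat.subsingleton_of_isZero <| ShortComplex.Exact.isZero_of_both_zeros
        ((Ext.covariant_sequence_exact₃' N hS) i (i + 1) rfl)
        ((AddCommGrpCat.isZero_of_iff_subsingleton.mpr z2).eq_zero_of_src _)
        ((AddCommGrpCat.isZero_of_iff_subsingleton.mpr z1).eq_zero_of_tgt _)

lemma weaklyRegular_X {K : Type u} [Field K] {σ : Type} (l : List σ) (hl : l.Nodup) :
    IsWeaklyRegular (MvPolynomial σ K) (l.map (X : σ → MvPolynomial σ K)) := by
  rw [isWeaklyRegular_iff]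
  intro i hi
  have hi' : i < l.length := by simpa using hi
  have key : ∀ f : MvPolynomial σ K,
      f ∈ (Ideal.ofList ((l.map (X : σ → MvPolynomial σ K)).take i) • ⊤ :
        Submodule (MvPolynomial σ K) (MvPolynomial σ K)) ↔
      ∀ m ∈ f.support, ∃ j ∈ {j | j ∈ l.take i}, m j ≠ 0 := by
    intro f
    rw [← mem_ideal_span_X_image, smul_eq_mul, Ideal.mul_top, Ideal.ofList]
    congr! 2
    ext g
    simp [← List.map_take]
  rw [isSMulRegular_quotient_iff_mem_of_smul_mem]
  intro f hf
  rw [key] at hf ⊢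
  intro m hm
  simp only [List.getElem_map, smul_eq_mul] at hf
  obtain ⟨j, hj, hne⟩ := hf (Finsupp.single l[i] 1 + m) (by
    rw [mem_support_iff] at hm ⊢
    rwa [coeff_X_mul])
  refine ⟨j, hj, ?_⟩
  have : l[i] ≠ j := by
    rintro rfl
    simp only [Set.mem_ofPred_eq, List.mem_take_iff_getElem] at hj
    obtain ⟨k, hk, e⟩ := hj
    have := (hl.getElem_inj_iff).mp e
    omega
  simpa [Finsupp.single_apply, this] using hne

lemma not_pdLE_of_socle {K : Type u} [Field K] {σ : Type} [Fintype σ]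
    (I : Ideal (MvPolynomial σ K)) (s : MvPolynomial σ K) (hs : s ∉ I)
    (hsoc : ∀ f ∈ maxIdeal K σ, f * s ∈ I) (k : ℕ) (hk : k < Fintype.card σ) :
    ¬ PdLE (MvPolynomial σ K) k (MvPolynomial σ K ⧸ I) := by
  intro h
  let l : List σ := Finset.univ.toList
  have := ext_vanish_of_pdLE (ModuleCat.of _ (MvPolynomial σ K ⧸ maxIdeal K σ))
    (l.map (X : σ → MvPolynomial σ K)) (by
      intro r hr
      simp only [List.mem_map] at hr
      obtain ⟨j, -, rfl⟩ := hr
      rw [Ideal.annihilator_quotient]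
      exact Ideal.subset_span ⟨j, rfl⟩) (weaklyRegular_X l (Finset.nodup_toList _)) k _ h 0
      (by simpa [l] using hk)
  have h0 : Subsingleton ((MvPolynomial σ K ⧸ maxIdeal K σ) →ₗ[MvPolynomial σ K]
      (MvPolynomial σ K ⧸ I)) :=
    ((Ext.addEquiv₀.trans ModuleCat.homAddEquiv).symm : (ModuleCat.of _ (MvPolynomial σ K ⧸ maxIdeal K σ) →ₗ[MvPolynomial σ K] ModuleCat.of _ (MvPolynomial σ K ⧸ I)) ≃+ _).subsingleton
  let φ : (MvPolynomial σ K ⧸ maxIdeal K σ) →ₗ[MvPolynomial σ K] (MvPolynomial σ K ⧸ I) :=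
    Submodule.liftQ _ (LinearMap.toSpanSingleton _ _ (Submodule.Quotient.mk s)) (by
      intro f hf
      rw [LinearMap.mem_ker, LinearMap.toSpanSingleton_apply, ← Submodule.Quotient.mk_smul,
        Submodule.Quotient.mk_eq_zero]
      exact hsoc f hf)
  have h1 : φ (Submodule.Quotient.mk 1) = 0 := by
    rw [Subsingleton.elim φ 0]; rfl
  apply hs
  rw [← Submodule.Quotient.mk_eq_zero I]
  have h2 : φ (Submodule.Quotient.mk 1) = (1 : MvPolynomial σ K) • Submodule.Quotient.mk s := rfl
  rw [one_smul] at h2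
  exact h2.symm.trans h1

end Lower

lemma xy_not_mem (K : Type u) [Field K] (m : ℕ) :
    (X (Sum.inl 0) * X (Sum.inl 1) : MvPolynomial (Fin 2 ⊕ Fin 2 × Fin m) K) ∉ Ideal.span
      (({X (Sum.inl 0) ^ 2, X (Sum.inl 1) ^ 2} : Set (MvPolynomial (Fin 2 ⊕ Fin 2 × Fin m) K)) ∪
        Set.range fun j : Fin m =>
          X (Sum.inr (0, j)) * X (Sum.inl 0) + X (Sum.inr (1, j)) * X (Sum.inl 1)) := by
  let S : Set ((Fin 2 ⊕ Fin 2 × Fin m) →₀ ℕ) :=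
    {Finsupp.single (Sum.inl 0) 2, Finsupp.single (Sum.inl 1) 2} ∪
      Set.range fun p => Finsupp.single (Sum.inr p) 1
  intro h
  have hle : Ideal.span
      (({X (Sum.inl 0) ^ 2, X (Sum.inl 1) ^ 2} : Set (MvPolynomial (Fin 2 ⊕ Fin 2 × Fin m) K)) ∪
        Set.range fun j : Fin m =>
          X (Sum.inr (0, j)) * X (Sum.inl 0) + X (Sum.inr (1, j)) * X (Sum.inl 1)) ≤
      Ideal.span ((fun s => monomial s (1 : K)) '' S) := by
    have hX : ∀ p, (X (Sum.inr p) : MvPolynomial (Fin 2 ⊕ Fin 2 × Fin m) K) ∈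
        Ideal.span ((fun s => monomial s (1 : K)) '' S) := fun p =>
      Ideal.subset_span ⟨Finsupp.single (Sum.inr p) 1, Or.inr ⟨p, rfl⟩, rfl⟩
    rw [Ideal.span_le]
    rintro _ ((rfl | rfl) | ⟨j, rfl⟩)
    · exact Ideal.subset_span ⟨Finsupp.single (Sum.inl 0) 2, Or.inl (Or.inl rfl),
        X_pow_eq_monomial.symm⟩
    · exact Ideal.subset_span ⟨Finsupp.single (Sum.inl 1) 2, Or.inl (Or.inr rfl),
        X_pow_eq_monomial.symm⟩
    · exact Ideal.add_mem _ (Ideal.mul_mem_right _ _ (hX _)) (Ideal.mul_mem_right _ _ (hX _))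
  have h2 := mem_ideal_span_monomial_image.mp (hle h)
    (Finsupp.single (Sum.inl 0) 1 + Finsupp.single (Sum.inl 1) 1) (by
      rw [mem_support_iff, X, X, monomial_mul, coeff_monomial]; simp)
  obtain ⟨s, hs, hle⟩ := h2
  rcases hs with (rfl | rfl) | ⟨p, rfl⟩
  · have := hle (Sum.inl 0); simp at this
  · have := hle (Sum.inl 1); simp at this
  · have := hle (Sum.inr p); simp at this

lemma xy_socle (K : Type u) [Field K] (m : ℕ) (I : Ideal (MvPolynomial (Fin 2 ⊕ Fin 2 × Fin m) K))
    (h0 : X (Sum.inl 0) ^ 2 ∈ I) (h1 : X (Sum.inl 1) ^ 2 ∈ I)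
    (h2 : ∀ j : Fin m, X (Sum.inr (0, j)) * X (Sum.inl 0) +
      X (Sum.inr (1, j)) * X (Sum.inl 1) ∈ I) :
    ∀ f ∈ maxIdeal K (Fin 2 ⊕ Fin 2 × Fin m), f * (X (Sum.inl 0) * X (Sum.inl 1)) ∈ I := by
  intro f hf
  refine Submodule.span_induction (p := fun f _ => f * (X (Sum.inl 0) * X (Sum.inl 1)) ∈ I)
    ?_ ?_ ?_ ?_ hf
  · rintro _ ⟨(i | ⟨i, j⟩), rfl⟩
    · fin_cases i
      · have := I.mul_mem_right (X (Sum.inl 1)) h0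
        convert this using 1
        simp only [Fin.mk_zero', Fin.isValue]
        ring
      · have := I.mul_mem_right (X (Sum.inl 0)) h1
        convert this using 1
        simp only [Fin.isValue, Fin.mk_one]
        ring
    · fin_cases i
      · have := I.sub_mem (I.mul_mem_right (X (Sum.inl 1)) (h2 j))
          (I.mul_mem_right (X (Sum.inr (1, j))) h1)
        convert this using 1
        simp only [Fin.isValue, Fin.zero_eta]
        ring
      · have := I.sub_mem (I.mul_mem_right (X (Sum.inl 0)) (h2 j))
          (I.mul_mem_right (X (Sum.inr (0, j))) h0)
        convert this using 1
        simp only [Fin.isValue, Fin.mk_one]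
        ring
  · simp
  · intro a b _ _ ha hb
    rw [add_mul]
    exact I.add_mem ha hb
  · intro a b _ hb
    rw [smul_eq_mul, mul_assoc]
    exact I.mul_mem_left a hb

section Upper
open CategoryTheory Abelian
open scoped TensorProduct

lemma pdLE_of_hasPD {R : Type u} [CommRing R] (n : ℕ) : ∀ (M : Type u) [AddCommGroup M]
    [Module R M], HasProjectiveDimensionLE (ModuleCat.of R M) n → PdLE R n M := by
  induction n with
  | zero =>
    intro M _ _ h
    rw [← projective_iff_hasProjectiveDimensionLE_zero, ← IsProjective.iff_projective] at h
    exact h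
  | succ n ih =>
    intro M _ _ h
    have hf : Function.Surjective (Finsupp.linearCombination R (id : M → M)) :=
      Finsupp.linearCombination_id_surjective R M
    refine ⟨M →₀ R, inferInstance, inferInstance, inferInstance,
      Finsupp.linearCombination R (id : M → M), hf, ih _ ?_⟩
    have hS := LinearMap.shortExact_shortComplexKer hf
    have hP : Projective (ModuleCat.of R (M →₀ R)) := by
      rw [← IsProjective.iff_projective]; infer_instance
    exact (hS.hasProjectiveDimensionLT_X₃_iff n hP).mp h

lemma baseChange_exact_aux {R A : Type u} [CommRing R] [CommRing A] [Algebra R A]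
    {P Q T : Type u} [AddCommGroup P] [AddCommGroup Q] [AddCommGroup T] [Module R P] [Module R Q]
    [Module R T] (f : P →ₗ[R] Q) (g : Q →ₗ[R] T) (h : Function.Exact f g)
    (hg : Function.Surjective g) : Function.Exact (f.baseChange A) (g.baseChange A) :=
  lTensor_exact A h hg

lemma hasPD_baseChange {R A : Type u} [CommRing R] [CommRing A] [Algebra R A] [Module.Flat R A]
    (n : ℕ) : ∀ (M : Type u) [AddCommGroup M] [Module R M],
      HasProjectiveDimensionLE (ModuleCat.of R M) n →
      HasProjectiveDimensionLE (ModuleCat.of A (A ⊗[R] M)) n := by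
  induction n with
  | zero =>
    intro M _ _ h
    rw [← projective_iff_hasProjectiveDimensionLE_zero, ← IsProjective.iff_projective] at h ⊢
    have : Module.Projective R M := h
    exact (inferInstance : Module.Projective A (A ⊗[R] M))
  | succ n ih =>
    intro M _ _ h
    obtain ⟨F, _, _, hF, f, hf⟩ : ∃ (F : Type u) (_ : AddCommGroup F) (_ : Module R F)
        (_ : Module.Free R F) (f : F →ₗ[R] M), Function.Surjective f :=
      ⟨M →₀ R, inferInstance, inferInstance, inferInstance,
        Finsupp.linearCombination R (id : M → M), Finsupp.linearCombination_id_surjective R M⟩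
    have hS := LinearMap.shortExact_shortComplexKer hf
    have hP : Projective (ModuleCat.of R F) := by
      rw [← IsProjective.iff_projective]; infer_instance
    have h1 := ih _ ((hS.hasProjectiveDimensionLT_X₃_iff n hP).mp h)
    have hex : Function.Exact ((LinearMap.ker f).subtype.baseChange A) (f.baseChange A) :=
      baseChange_exact_aux _ _ (LinearMap.exact_subtype_ker_map f) hf
    have hS' : (ModuleCat.shortComplexOfCompEqZero ((LinearMap.ker f).subtype.baseChange A)
        (f.baseChange A) hex.linearMap_comp_eq_zero).ShortExact :=
      { exact := ModuleCat.shortComplex_exact _ hex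
        mono_f := (ModuleCat.mono_iff_injective _).mpr
          (Module.Flat.lTensor_preserves_injective_linearMap _ (Submodule.injective_subtype _))
        epi_g := (ModuleCat.epi_iff_surjective _).mpr (LinearMap.lTensor_surjective A hf) }
    have hP' : Projective (ModuleCat.of A (A ⊗[R] F)) := by
      rw [← IsProjective.iff_projective]
      exact (inferInstance : Module.Projective A (A ⊗[R] F))
    exact (hS'.hasProjectiveDimensionLT_X₃_iff n hP').mpr h1

open Polynomial in
lemma hasPD_polynomial {R : Type u} [CommRing R] (n : ℕ)
    (H : ∀ (M : Type u) [AddCommGroup M] [Module R M],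
      HasProjectiveDimensionLE (ModuleCat.of R M) n)
    (M : Type u) [AddCommGroup M] [Module R[X] M] :
      HasProjectiveDimensionLE (ModuleCat.of R[X] M) (n + 1) := by
  let _ : Module R M := Module.compHom M (algebraMap R R[X])
  have : IsScalarTower R R[X] M := ⟨fun r p m => by
    change _ = (algebraMap R R[X] r) • p • m
    rw [Algebra.smul_def, mul_smul]⟩
  have hT := hasPD_baseChange (A := R[X]) n M (H M)
  -- multiplication by `X` on `M`
  let t : M →ₗ[R] M := (LinearMap.lsmul R[X] M (Polynomial.X : R[X])).restrictScalars R
  have ht : ∀ m, t m = (Polynomial.X : R[X]) • m := fun m => rfl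
  let d : R[X] ⊗[R] M →ₗ[R[X]] R[X] ⊗[R] M :=
    LinearMap.lsmul R[X] _ (Polynomial.X : R[X]) - t.baseChange R[X]
  have hd : ∀ (p : R[X]) (m : M), d (p ⊗ₜ m) = (Polynomial.X * p) ⊗ₜ m - p ⊗ₜ (t m) := by
    intro p m
    simp [d, TensorProduct.smul_tmul']
  let ε : R[X] ⊗[R] M →ₗ[R[X]] M := LinearMap.liftBaseChange R[X] (LinearMap.id : M →ₗ[R] M)
  have hε : ∀ (p : R[X]) (m : M), ε (p ⊗ₜ m) = p • m := by
    intro p m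
    simp [ε]
  have hsurj : Function.Surjective ε := fun m => ⟨1 ⊗ₜ m, by rw [hε, one_smul]⟩
  have hcomp : ∀ z, ε (d z) = 0 := by
    intro z
    induction z with
    | zero => simp
    | add a b ha hb => rw [map_add, map_add, ha, hb, add_zero]
    | tmul p m => rw [hd, map_sub, hε, hε, ht, smul_smul, mul_comm, sub_self]
  have hmod : ∀ z, z - 1 ⊗ₜ (ε z) ∈ LinearMap.range d := by
    intro z
    induction z with
    | zero => simp
    | add a b ha hb =>
      have := add_mem ha hb
      rw [map_add, TensorProduct.tmul_add]
      convert this using 1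
      abel
    | tmul p m =>
      rw [hε]
      induction p using Polynomial.induction_on' generalizing m with
      | add p q hp hq =>
        have := add_mem (hp m) (hq m)
        rw [add_smul, TensorProduct.tmul_add, TensorProduct.add_tmul]
        convert this using 1
        abel
      | monomial k a =>
        induction k generalizing m with
        | zero =>
          have : (Polynomial.monomial 0 a : R[X]) = a • 1 := by
            rw [Polynomial.smul_eq_C_mul, mul_one]; rfl
          rw [this, smul_assoc, one_smul, TensorProduct.smul_tmul, sub_self]
          exact zero_mem _
        | succ k ih =>
          have h1 : (Polynomial.monomial (k + 1) a : R[X]) =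
            Polynomial.X * Polynomial.monomial k a := by
            rw [Polynomial.X_mul_monomial]
          have := add_mem (ih (t m)) (⟨_, hd (Polynomial.monomial k a) m⟩ :
            _ ∈ LinearMap.range d)
          rw [ht] at this
          rw [h1]
          convert this using 1
          rw [smul_smul, mul_comm Polynomial.X]
          abel
  have hex : Function.Exact d ε := by
    intro z
    refine ⟨fun h => ?_, ?_⟩
    · have := hmod z
      rw [h, TensorProduct.tmul_zero, sub_zero] at this
      exact this
    · rintro ⟨w, rfl⟩
      exact hcomp w
  have hinj : Function.Injective d := by
    rw [injective_iff_map_eq_zero]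
    intro z hz
    let e : R[X] ⊗[R] M ≃ₗ[R] ℕ →₀ M :=
      TensorProduct.equivFinsuppOfBasisLeft (Polynomial.basisMonomials R)
    have he : ∀ (p : R[X]) (m : M) (i : ℕ), e (p ⊗ₜ m) i = p.coeff i • m := by
      intro p m i
      rw [TensorProduct.equivFinsuppOfBasisLeft_apply_tmul_apply]
      rfl
    have hed : ∀ z i, e (d z) (i + 1) = e z i - t (e z (i + 1)) := by
      intro z i
      induction z with
      | zero => simp
      | add a b ha hb =>
        simp only [map_add, Finsupp.add_apply, ha, hb]
        abel
      | tmul p m =>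
        rw [hd, map_sub, Finsupp.sub_apply, he, he, he, he, Polynomial.coeff_X_mul, map_smul]
    have hrec : ∀ i, e z i = t (e z (i + 1)) := by
      intro i
      have := hed z i
      rw [hz] at this
      simpa [sub_eq_zero] using this.symm
    have hz' : ∀ k i, (e z).support.sup id < i + k → e z i = 0 := by
      intro k
      induction k with
      | zero =>
        intro i hi
        by_contra hne
        have : i ≤ (e z).support.sup id :=
          Finset.le_sup (f := id) (Finsupp.mem_support_iff.mpr hne)
        omega
      | succ k ih =>
        intro i hi
        rw [hrec, ih (i + 1) (by omega), map_zero]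
    apply e.injective
    rw [map_zero]
    ext i
    exact hz' ((e z).support.sup id + 1) i (by omega)
  have hS : (ModuleCat.shortComplexOfCompEqZero d ε hex.linearMap_comp_eq_zero).ShortExact :=
    { exact := ModuleCat.shortComplex_exact _ hex
      mono_f := (ModuleCat.mono_iff_injective _).mpr hinj
      epi_g := (ModuleCat.epi_iff_surjective _).mpr hsurj }
  exact hS.hasProjectiveDimensionLT_X₃ (n + 1) hT
    (@hasProjectiveDimensionLT_of_ge _ _ _ _ (n + 1) (n + 1 + 1) (by omega) hT)

attribute [local instance] RingHomInvPair.of_ringEquiv in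
lemma hasPD_ringEquiv {R R' : Type u} [CommRing R] [CommRing R'] (e : R ≃+* R') (n : ℕ)
    (H : ∀ (M : Type u) [AddCommGroup M] [Module R M],
      HasProjectiveDimensionLE (ModuleCat.of R M) n)
    (M : Type u) [AddCommGroup M] [Module R' M] :
      HasProjectiveDimensionLE (ModuleCat.of R' M) n := by
  let _ : Module R M := Module.compHom M (e : R →+* R')
  have h := H M
  let e' : ModuleCat.of R M ≃ₛₗ[RingHomClass.toRingHom e] ModuleCat.of R' M :=
    { AddEquiv.refl M with map_smul' := fun _ _ => rfl }
  exact ModuleCat.hasProjectiveDimensionLE_of_semiLinearEquiv e e' n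

lemma hasPD_mvPolynomial (K : Type u) [Field K] (n : ℕ) : ∀ (M : Type u) [AddCommGroup M]
    [Module (MvPolynomial (Fin n) K) M],
      HasProjectiveDimensionLE (ModuleCat.of (MvPolynomial (Fin n) K) M) n := by
  induction n with
  | zero =>
    refine hasPD_ringEquiv (MvPolynomial.isEmptyRingEquiv K (Fin 0)).symm 0 ?_
    intro M _ _
    rw [← projective_iff_hasProjectiveDimensionLE_zero, ← IsProjective.iff_projective]
    exact (inferInstance : Module.Projective K M)
  | succ n ih =>
    exact hasPD_ringEquiv (MvPolynomial.finSuccEquiv K n).symm.toRingEquiv (n + 1)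
      (hasPD_polynomial n ih)

end Upper

/-- for `n = m + 2 ≥ 2`, in `R = K[x, y, a₁₁, …, a₂,(n-2)]`, the ideal
`I = (x², y², a₁₁x + a₂₁y, …)` has `pd(R/I) = 2n - 2`; equivalently `xy` is a nonzero
socle element of `R/I`. Here `x = X (inl 0)`, `y = X (inl 1)`, `aᵢⱼ = X (inr (i, j))`. -/
theorem stmt1 (K : Type u) [Field K] (m : ℕ)
    (I : Ideal (MvPolynomial (Fin 2 ⊕ Fin 2 × Fin m) K))
    (hI : I = Ideal.span
      ({X (Sum.inl 0) ^ 2, X (Sum.inl 1) ^ 2} ∪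
        Set.range fun j : Fin m =>
          X (Sum.inr (0, j)) * X (Sum.inl 0) + X (Sum.inr (1, j)) * X (Sum.inl 1))) :
    projDim (MvPolynomial (Fin 2 ⊕ Fin 2 × Fin m) K) (MvPolynomial (Fin 2 ⊕ Fin 2 × Fin m) K ⧸ I) = ((2 * (m + 2) - 2 : ℕ) : ℕ∞) ∧
      X (Sum.inl 0) * X (Sum.inl 1) ∉ I ∧
      ∀ f ∈ maxIdeal K (Fin 2 ⊕ Fin 2 × Fin m),
        f * (X (Sum.inl 0) * X (Sum.inl 1)) ∈ I := by
  subst hI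
  have hx := xy_not_mem K m
  have hs := xy_socle K m _ (Ideal.subset_span (Or.inl (Or.inl rfl)))
    (Ideal.subset_span (Or.inl (Or.inr rfl)))
    (fun j => Ideal.subset_span (Or.inr ⟨j, rfl⟩) : ∀ j : Fin m, _ ∈ Ideal.span
      (({X (Sum.inl 0) ^ 2, X (Sum.inl 1) ^ 2} : Set (MvPolynomial (Fin 2 ⊕ Fin 2 × Fin m) K)) ∪
        Set.range fun j : Fin m =>
          X (Sum.inr (0, j)) * X (Sum.inl 0) + X (Sum.inr (1, j)) * X (Sum.inl 1)))
  refine ⟨?_, hx, hs⟩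
  have hc : Fintype.card (Fin 2 ⊕ Fin 2 × Fin m) = 2 * (m + 2) - 2 := by
    simp; omega
  apply le_antisymm
  · apply sInf_le
    refine ⟨2 * (m + 2) - 2, ?_, rfl⟩
    apply pdLE_of_hasPD
    have e := Fintype.equivFinOfCardEq hc
    exact hasPD_ringEquiv (MvPolynomial.renameEquiv K e.symm).toRingEquiv _
      (hasPD_mvPolynomial K _) _
  · apply le_sInf
    rintro _ ⟨k, hk, rfl⟩
    by_contra hlt
    have hlt' : k < 2 * (m + 2) - 2 := by
      simpa only [not_le, Nat.cast_lt] using hlt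
    exact not_pdLE_of_socle _ _ hx hs k (by rw [hc]; exact hlt') hk
end

section
/- Let R be a polynomial ring over a field K and let I be an ideal of R minimally generated by n ≥ 3 quadrics with ht(I) = 2. Then the Hilbert–Samuel multiplicity satisfies e(R/I) ≤ 3. -/
open MvPolynomial Filter

universe u

namespace HS

section hilb
variable {K : Type u} [Field K] {N : ℕ}

local notation "R" => MvPolynomial (Fin N) K
local notation "𝔪" => maxIdeal K (Fin N)

def Hm (I : Ideal R) : Prop := ∀ f ∈ I, ∀ k, homogeneousComponent k f ∈ I

lemma mem_mx_pow (n : ℕ) (f : R) :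
    f ∈ 𝔪 ^ n ↔ ∀ k < n, homogeneousComponent k f = 0 := by
  have : f ∈ 𝔪 ^ n ↔ ∀ x, Finsupp.degree x < n → f.coeff x = 0 :=
    mem_pow_idealOfVars_iff' n f
  rw [this]
  constructor
  · intro h k hk
    ext d
    rw [coeff_homogeneousComponent]
    split_ifs with hd
    · rw [h d (by omega)]; simp
    · simp
  · intro h x hx
    have := congrArg (coeff x) (h _ hx)
    rw [coeff_homogeneousComponent] at this
    simpa using this

lemma comp_mul {q : R} {d : ℕ} (hq : q.IsHomogeneous d) (f : R) (k : ℕ) :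
    homogeneousComponent (k + d) (f * q) = homogeneousComponent k f * q := by
  conv_lhs => rw [← sum_homogeneousComponent f]
  rw [Finset.sum_mul, map_sum]
  have : ∀ i, homogeneousComponent (k + d) (homogeneousComponent i f * q)
      = if i = k then homogeneousComponent k f * q else 0 := by
    intro i
    rw [homogeneousComponent_of_mem (((homogeneousComponent_isHomogeneous i f).mul hq))]
    by_cases h : i = k
    · simp [h]
    · simp [h]; omega
  simp only [this]
  rw [Finset.sum_ite_eq']
  split_ifs with h
  · rfl
  · rw [homogeneousComponent_eq_zero _ _ (by simpa using h)]; simp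

lemma comp_mul_lt {q : R} {d : ℕ} (hq : q.IsHomogeneous d) (f : R) (k : ℕ) (hk : k < d) :
    homogeneousComponent k (f * q) = 0 := by
  conv_lhs => rw [← sum_homogeneousComponent f]
  rw [Finset.sum_mul, map_sum]
  refine Finset.sum_eq_zero fun i _ => ?_
  rw [homogeneousComponent_of_mem (((homogeneousComponent_isHomogeneous i f).mul hq))]
  rw [if_neg (by omega)]

lemma Hm.sup {I J : Ideal R} (hI : Hm I) (hJ : Hm J) : Hm (I ⊔ J) := by
  intro f hf k
  obtain ⟨a, ha, b, hb, rfl⟩ := Submodule.mem_sup.1 hf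
  rw [map_add]
  exact Submodule.add_mem_sup (hI a ha k) (hJ b hb k)

lemma Hm.bot : Hm (⊥ : Ideal R) := by
  intro f hf k
  rw [Ideal.mem_bot] at hf
  simp [hf]

lemma Hm.span_range {ι : Type*} [Fintype ι] {g : ι → R} {d : ℕ} (hg : ∀ i, (g i).IsHomogeneous d) :
    Hm (Ideal.span (Set.range g)) := by
  intro f hf k
  obtain ⟨c, rfl⟩ := Ideal.mem_span_range_iff_exists_fun.1 hf
  rw [map_sum]
  refine Ideal.sum_mem _ fun i _ => ?_
  by_cases h : k < d
  · rw [comp_mul_lt (hg i) _ _ h]; exact zero_mem _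
  · obtain ⟨j, rfl⟩ := Nat.exists_eq_add_of_le' (not_lt.1 h)
    rw [comp_mul (hg i)]
    exact Ideal.mul_mem_left _ _ (Ideal.subset_span ⟨i, rfl⟩)

lemma Hm.span_singleton {q : R} {d : ℕ} (hq : q.IsHomogeneous d) : Hm (Ideal.span {q}) := by
  have := Hm.span_range (g := fun _ : Fin 1 => q) (d := d) (fun _ => hq)
  simpa using this

lemma Hm.colon {I : Ideal R} (hI : Hm I) {q : R} {d : ℕ} (hq : q.IsHomogeneous d) :
    Hm (I.colon {q}) := by
  intro f hf k
  rw [Submodule.mem_colon_singleton] at hf ⊢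
  rw [smul_eq_mul] at hf ⊢
  rw [← comp_mul hq]
  exact hI _ hf _

lemma colon_pow {I : Ideal R} (hI : Hm I) {q : R} {d : ℕ} (hq : q.IsHomogeneous d) (n : ℕ) :
    (I ⊔ 𝔪 ^ (n + d)).colon {q} = I.colon {q} ⊔ 𝔪 ^ n := by
  ext f
  rw [Submodule.mem_colon_singleton, smul_eq_mul]
  constructor
  · intro h
    obtain ⟨a, ha, b, hb, hab⟩ := Submodule.mem_sup.1 h
    rw [mem_mx_pow] at hb
    have key : ∀ k < n, homogeneousComponent k f ∈ I.colon {q} := by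
      intro k hk
      rw [Submodule.mem_colon_singleton, smul_eq_mul, ← comp_mul hq, ← hab, map_add,
        hb _ (by omega), add_zero]
      exact hI _ ha _
    have : f = (∑ k ∈ Finset.range n, homogeneousComponent k f) +
        (f - ∑ k ∈ Finset.range n, homogeneousComponent k f) := by ring
    rw [this]
    refine Submodule.add_mem_sup (Ideal.sum_mem _ fun k hk => key k (Finset.mem_range.1 hk)) ?_
    rw [mem_mx_pow]
    intro k hk
    rw [map_sub, map_sum]
    rw [Finset.sum_eq_single k]
    · rw [homogeneousComponent_of_mem (homogeneousComponent_isHomogeneous k f)]; simp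
    · intro j _ hj
      rw [homogeneousComponent_of_mem (homogeneousComponent_isHomogeneous j f), if_neg (Ne.symm hj)]
    · intro h; exact absurd (Finset.mem_range.2 hk) h
  · intro h
    obtain ⟨a, ha, b, hb, rfl⟩ := Submodule.mem_sup.1 h
    rw [Submodule.mem_colon_singleton, smul_eq_mul] at ha
    rw [mem_mx_pow] at hb
    rw [add_mul]
    refine Submodule.add_mem_sup ha ?_
    rw [mem_mx_pow]
    intro k hk
    by_cases h : k < d
    · exact comp_mul_lt hq _ _ h
    · obtain ⟨j, rfl⟩ := Nat.exists_eq_add_of_le' (not_lt.1 h)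
      rw [comp_mul hq, hb j (by omega), zero_mul]

end hilb

section exact
variable {A : Type*} [CommRing A]

def colonMap (L : Ideal A) (q : A) : (A ⧸ L.colon {q}) →ₗ[A] (A ⧸ L) :=
  Submodule.mapQ (L.colon {q}) L (LinearMap.toSpanSingleton A A q) (by
    intro f hf
    rw [Submodule.mem_colon_singleton] at hf
    simpa using hf)

lemma colonMap_inj (L : Ideal A) (q : A) : Function.Injective (colonMap L q) := by
  rw [← LinearMap.ker_eq_bot, LinearMap.ker_eq_bot']
  intro x hx
  obtain ⟨f, rfl⟩ := Submodule.Quotient.mk_surjective _ x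
  rw [colonMap, Submodule.mapQ_apply, Submodule.Quotient.mk_eq_zero] at hx
  rw [Submodule.Quotient.mk_eq_zero, Submodule.mem_colon_singleton]
  simpa using hx

def supMap (L : Ideal A) (q : A) : (A ⧸ L) →ₗ[A] (A ⧸ (L ⊔ Ideal.span {q})) :=
  Submodule.factor le_sup_left

lemma supMap_surj (L : Ideal A) (q : A) : Function.Surjective (supMap L q) :=
  Submodule.factor_surjective (le_sup_left : L ≤ L ⊔ Ideal.span {q})

lemma colon_exact (L : Ideal A) (q : A) : Function.Exact (colonMap L q) (supMap L q) := by
  intro x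
  obtain ⟨f, rfl⟩ := Submodule.Quotient.mk_surjective _ x
  have : supMap L q (Submodule.Quotient.mk f) = Submodule.Quotient.mk f := rfl
  rw [this, Submodule.Quotient.mk_eq_zero]
  constructor
  · intro h
    obtain ⟨a, ha, b, hb, rfl⟩ := Submodule.mem_sup.1 h
    obtain ⟨c, rfl⟩ := Ideal.mem_span_singleton'.1 hb
    refine ⟨Submodule.Quotient.mk c, ?_⟩
    rw [colonMap, Submodule.mapQ_apply, Submodule.Quotient.eq]
    simpa using ha
  · rintro ⟨y, hy⟩
    obtain ⟨c, rfl⟩ := Submodule.Quotient.mk_surjective _ y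
    rw [colonMap, Submodule.mapQ_apply, Submodule.Quotient.eq] at hy
    have h2 : c * q - f ∈ L := by simpa using hy
    have : f = -(c * q - f) + c * q := by ring
    rw [this]
    exact Submodule.add_mem_sup (neg_mem h2) (Ideal.mem_span_singleton'.2 ⟨c, rfl⟩)

lemma length_colon (L : Ideal A) (q : A) :
    Module.length A (A ⧸ L) = Module.length A (A ⧸ L.colon {q}) +
      Module.length A (A ⧸ (L ⊔ Ideal.span {q})) :=
  Module.length_eq_add_of_exact _ _ (colonMap_inj L q) (supMap_surj L q) (colon_exact L q)

lemma lengthK_colon (K : Type*) [Field K] [Algebra K A] (L : Ideal A) (q : A) :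
    Module.length K (A ⧸ L) = Module.length K (A ⧸ L.colon {q}) +
      Module.length K (A ⧸ (L ⊔ Ideal.span {q})) :=
  Module.length_eq_add_of_exact ((colonMap L q).restrictScalars K) ((supMap L q).restrictScalars K)
    (colonMap_inj L q) (supMap_surj L q) (colon_exact L q)
end exact

end HS

namespace HS

section count
variable {K : Type u} [Field K] {N : ℕ}

local notation "R" => MvPolynomial (Fin N) K
local notation "𝔪" => maxIdeal K (Fin N)

def lowSet (N n : ℕ) : Finset (Fin N →₀ ℕ) :=
  (Finset.range n).biUnion fun k => Finset.finsuppAntidiag Finset.univ k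

lemma mem_lowSet {n : ℕ} (x : Fin N →₀ ℕ) : x ∈ lowSet N n ↔ Finsupp.degree x < n := by
  simp [lowSet, Finset.mem_finsuppAntidiag, Finsupp.degree_eq_sum]

lemma card_lowSet (N n : ℕ) : (lowSet N (n + 1)).card = (n + N).choose N := by
  rw [lowSet, Finset.card_biUnion]
  · simp only [Finset.card_finsuppAntidiag_nat_eq_multichoose, Finset.card_univ, Fintype.card_fin]
    induction n with
    | zero => simp
    | succ n ih =>
      rw [Finset.sum_range_succ, ih]
      rcases N with _ | N
      · simp [Nat.multichoose_zero_succ]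
      · rw [Nat.multichoose_eq]
        have e1 : N + 1 + (n + 1) - 1 = n + (N + 1) := by omega
        have e2 : n + 1 + (N + 1) = (n + (N + 1)) + 1 := by omega
        rw [e1, e2, Nat.choose_succ_succ, add_comm]
        congr 1
        rw [show n + (N + 1) = N + (n + 1) by omega]
        exact (Nat.choose_symm_add).symm
  · intro i _ j _ hij
    rw [Function.onFun, Finset.disjoint_left]
    intro x hx hx'
    rw [Finset.mem_finsuppAntidiag] at hx hx'
    exact hij (hx.1.symm.trans hx'.1)

noncomputable def coeffMap (n : ℕ) : R →ₗ[K] (lowSet N n → K) :=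
  LinearMap.pi fun x => MvPolynomial.lcoeff K x.1

lemma coeffMap_surj (n : ℕ) : Function.Surjective (coeffMap (K := K) (N := N) n) := by
  classical
  intro c
  refine ⟨∑ x : lowSet N n, monomial x.1 (c x), ?_⟩
  ext y
  simp only [coeffMap, LinearMap.pi_apply, map_sum]
  rw [Finset.sum_eq_single y]
  · simp
  · intro b _ hb
    have : b.1 ≠ y.1 := fun h => hb (Subtype.ext h)
    simp [coeff_monomial, this]
  · simp

lemma coeffMap_ker (n : ℕ) : LinearMap.ker (coeffMap (K := K) (N := N) n) =
    (𝔪 ^ n).restrictScalars K := by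
  ext f
  have h2 : f ∈ 𝔪 ^ n ↔ ∀ x, Finsupp.degree x < n → f.coeff x = 0 :=
    mem_pow_idealOfVars_iff' n f
  rw [Submodule.restrictScalars_mem, h2, LinearMap.mem_ker]
  constructor
  · intro h x hx
    exact congrFun h ⟨x, (mem_lowSet x).2 hx⟩
  · intro h
    ext y
    exact h y.1 ((mem_lowSet _).1 y.2)

noncomputable def quotEquiv (n : ℕ) : (R ⧸ 𝔪 ^ n) ≃ₗ[K] (lowSet N n → K) :=
  (Submodule.Quotient.restrictScalarsEquiv K (𝔪 ^ n)).symm.trans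
    ((Submodule.quotEquivOfEq ((𝔪 ^ n).restrictScalars K)
      (LinearMap.ker (coeffMap (K := K) (N := N) n)) (coeffMap_ker n).symm).trans
      (LinearMap.quotKerEquivOfSurjective (coeffMap (K := K) (N := N) n) (coeffMap_surj n)))

instance (n : ℕ) : Module.Finite K (R ⧸ 𝔪 ^ n) := Module.Finite.equiv (quotEquiv n).symm

lemma finrank_pow (n : ℕ) : Module.finrank K (R ⧸ 𝔪 ^ (n + 1)) = (n + N).choose N := by
  rw [(quotEquiv (n + 1)).finrank_eq, Module.finrank_fintype_fun_eq_card, Fintype.card_coe,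
    card_lowSet]

lemma finite_of_le {L : Ideal R} {n : ℕ} (h : 𝔪 ^ n ≤ L) : Module.Finite K (R ⧸ L) :=
  Module.Finite.of_surjective ((Submodule.factor h).restrictScalars K)
    (Submodule.factor_surjective h)

lemma finrank_colon {L : Ideal R} {n : ℕ} (h : 𝔪 ^ n ≤ L) (q : R) :
    Module.finrank K (R ⧸ L) = Module.finrank K (R ⧸ L.colon {q}) +
      Module.finrank K (R ⧸ (L ⊔ Ideal.span {q})) := by
  have := finite_of_le h
  have := finite_of_le (h.trans (Ideal.le_colon (S := {q})))
  have := finite_of_le (h.trans (le_sup_left (b := Ideal.span {q})))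
  have h := lengthK_colon K L q
  simp only [Module.length_eq_finrank] at h
  exact_mod_cast h

lemma mx_eq_ker : 𝔪 = RingHom.ker (constantCoeff : R →+* K) := by
  ext f
  have := mem_mx_pow 1 f
  rw [pow_one] at this
  rw [this, RingHom.mem_ker, constantCoeff_eq]
  constructor
  · intro h
    have := h 0 (by omega)
    rw [homogeneousComponent_zero] at this
    simpa using this
  · intro h k hk
    obtain rfl : k = 0 := by omega
    rw [homogeneousComponent_zero, h]; simp

instance mx_max : (𝔪).IsMaximal := by
  rw [mx_eq_ker]
  exact RingHom.ker_isMaximal_of_surjective _ (fun c => ⟨C c, by simp⟩)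

lemma length_eq (L : Ideal R) : ∀ n, 𝔪 ^ n ≤ L → 
    Module.length R (R ⧸ L) = Module.finrank K (R ⧸ L) := by
  induction L using IsNoetherian.induction with
  | hgt L ih =>
    intro n hn
    classical
    by_cases htop : L = ⊤
    · subst htop
      have : Subsingleton (R ⧸ (⊤ : Ideal R)) := Submodule.Quotient.subsingleton_iff.2 rfl
      rw [Module.length_eq_zero, Module.finrank_zero_of_subsingleton]; rfl
    have hex : ∃ k, 𝔪 ^ k ≤ L := ⟨n, hn⟩
    obtain ⟨k, hk⟩ : ∃ k, Nat.find hex = k + 1 := by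
      refine Nat.exists_eq_succ_of_ne_zero fun h0 => htop ?_
      have := Nat.find_spec hex
      rw [h0, pow_zero, Ideal.one_eq_top] at this
      exact top_le_iff.1 this
    have h1 := Nat.find_spec hex
    rw [hk] at h1
    have h2 : ¬ 𝔪 ^ k ≤ L := Nat.find_min hex (by omega)
    obtain ⟨z, hz, hzL⟩ := SetLike.not_le_iff_exists.1 h2
    have hcol : L.colon {z} = 𝔪 := by
      symm
      refine mx_max.eq_of_le ?_ ?_
      · rw [Ne, Ideal.eq_top_iff_one, Submodule.mem_colon_singleton, one_smul]
        exact hzL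
      · intro a ha
        rw [Submodule.mem_colon_singleton, smul_eq_mul]
        exact h1 (by rw [pow_succ']; exact Ideal.mul_mem_mul ha hz)
    rw [length_colon L z, finrank_colon hn z, hcol,
      ih (L ⊔ Ideal.span {z}) (left_lt_sup.2 (fun h => hzL (h (Ideal.mem_span_singleton_self z)))) n
        (hn.trans le_sup_left)]
    have : IsSimpleModule R (R ⧸ 𝔪) := isSimpleModule_iff_isCoatom.2 mx_max.out
    have h3 : Module.finrank K (R ⧸ 𝔪) = 1 := by
      have := finrank_pow (K := K) (N := N) 0
      have e : 𝔪 ^ (0 + 1) = 𝔪 := by rw [zero_add, pow_one]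
      rw [e] at this
      rw [this]; simp
    rw [Module.length_eq_one, h3]
    push_cast
    rfl

noncomputable def Hf (I : Ideal R) (n : ℕ) : ℕ := Module.finrank K (R ⧸ (I ⊔ 𝔪 ^ n))

lemma Hf_length (I : Ideal R) (n : ℕ) :
    moduleLength R (R ⧸ (I ⊔ 𝔪 ^ n)) = ((Hf I n : ℕ∞) : WithBot ℕ∞) := by
  rw [moduleLength, ← Module.coe_length, length_eq _ n le_sup_right]; rfl

lemma Hf_step {I : Ideal R} (hI : Hm I) {q : R} {d : ℕ} (hq : q.IsHomogeneous d) (n : ℕ) :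
    Hf I (n + d) = Hf (I.colon {q}) n + Hf (I ⊔ Ideal.span {q}) (n + d) := by
  unfold Hf
  rw [finrank_colon (le_sup_right : 𝔪 ^ (n + d) ≤ I ⊔ 𝔪 ^ (n + d)) q, colon_pow hI hq,
    sup_right_comm]

lemma Hf_anti {I J : Ideal R} (h : I ≤ J) (n : ℕ) : Hf J n ≤ Hf I n := by
  have := finite_of_le (le_sup_right : 𝔪 ^ n ≤ I ⊔ 𝔪 ^ n)
  have h' : I ⊔ 𝔪 ^ n ≤ J ⊔ 𝔪 ^ n := sup_le_sup_right h (𝔪 ^ n)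
  let f : (R ⧸ (I ⊔ 𝔪 ^ n)) →ₗ[K] (R ⧸ (J ⊔ 𝔪 ^ n)) := (Submodule.factor h').restrictScalars K
  have hf : Function.Surjective f := Submodule.factor_surjective h'
  exact LinearMap.finrank_le_finrank_of_surjective hf

lemma Hf_bot (n : ℕ) : Hf (⊥ : Ideal R) (n + 1) = (n + N).choose N := by
  unfold Hf
  rw [bot_sup_eq, finrank_pow]

lemma exists_antidiff (Q : Polynomial ℚ) :
    ∃ S : Polynomial ℚ, ∀ n : ℕ, S.eval ((n : ℚ) + 1) = S.eval (n : ℚ) + Q.eval (n : ℚ) := by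
  induction Q using Polynomial.induction_on' with
  | add p q hp hq =>
    obtain ⟨a, ha⟩ := hp
    obtain ⟨b, hb⟩ := hq
    exact ⟨a + b, fun n => by simp only [Polynomial.eval_add, ha, hb]; ring⟩
  | monomial k c =>
    refine ⟨Polynomial.C (c / (k + 1)) * Polynomial.bernoulli (k + 1), fun n => ?_⟩
    have h1 := Polynomial.sum_range_pow_eq_bernoulli_sub (n + 1) k
    have h2 := Polynomial.sum_range_pow_eq_bernoulli_sub n k
    rw [Finset.sum_range_succ] at h1
    push_cast at h1
    have h3 : (Polynomial.bernoulli (k + 1)).eval ((n : ℚ) + 1) =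
      (Polynomial.bernoulli (k + 1)).eval (n : ℚ) + (k + 1) * (n : ℚ) ^ k := by
      simp only [Nat.succ_eq_add_one] at h1 h2
      linarith
    simp only [Polynomial.eval_mul, Polynomial.eval_C, Polynomial.eval_monomial, h3]
    have : (k : ℚ) + 1 ≠ 0 := by positivity
    field_simp

lemma exists_poly (I : Ideal R) : Hm I → ∃ P : Polynomial ℚ, ∀ᶠ n : ℕ in atTop,
    (Hf I n : ℚ) = P.eval (n : ℚ) := by
  induction I using IsNoetherian.induction with
  | hgt I ih =>
    intro hI
    by_cases hall : ∀ i, (X i : R) ∈ I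
    · have hm : 𝔪 ≤ I := by
        rw [maxIdeal, Ideal.span_le]
        rintro _ ⟨i, rfl⟩
        exact hall i
      refine ⟨Polynomial.C (Module.finrank K (R ⧸ I) : ℚ), ?_⟩
      filter_upwards [eventually_ge_atTop 1] with n hn
      unfold Hf
      rw [sup_eq_left.2 ((Ideal.pow_le_self (by omega)).trans hm), Polynomial.eval_C]
    · push Not at hall
      obtain ⟨i, hi⟩ := hall
      have hX : (X i : R).IsHomogeneous 1 := isHomogeneous_X _ _
      obtain ⟨Q, hQ⟩ := ih (I ⊔ Ideal.span {X i})
        (left_lt_sup.2 (fun h => hi (h (Ideal.mem_span_singleton_self _))))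
        (hI.sup (Hm.span_singleton hX))
      by_cases hc : I.colon {(X i : R)} = I
      · obtain ⟨S, hS⟩ := exists_antidiff (Q.comp (Polynomial.X + 1))
        obtain ⟨n₀, hn₀⟩ := eventually_atTop.1 hQ
        refine ⟨S + Polynomial.C ((Hf I n₀ : ℚ) - S.eval (n₀ : ℚ)), ?_⟩
        filter_upwards [eventually_ge_atTop n₀] with n hn
        induction n, hn using Nat.le_induction with
        | base => simp
        | succ n hn ih2 =>
          rw [Hf_step hI hX, hc]
          push_cast
          rw [ih2, hn₀ _ (by omega)]
          simp only [Polynomial.eval_add, hS, Polynomial.eval_comp, Polynomial.eval_X,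
            Polynomial.eval_one, Polynomial.eval_C]
          push_cast
          ring
      · obtain ⟨P, hP⟩ := ih (I.colon {X i}) (lt_of_le_of_ne Ideal.le_colon (Ne.symm hc)) (hI.colon hX)
        refine ⟨P.comp (Polynomial.X - 1) + Q, ?_⟩
        obtain ⟨n₀, hn₀⟩ := eventually_atTop.1 hQ
        obtain ⟨n₁, hn₁⟩ := eventually_atTop.1 hP
        filter_upwards [eventually_ge_atTop (n₀ + n₁ + 1)] with n hn
        obtain ⟨m, rfl⟩ : ∃ m, n = m + 1 := ⟨n - 1, by omega⟩
        rw [Hf_step hI hX]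
        push_cast
        rw [hn₀ _ (by omega), hn₁ _ (by omega)]
        simp

/-- lower bound -/
lemma Hf_lower {d : ℕ} {L : Ideal R} (hL : Hm L) (φ : MvPolynomial (Fin d) K →ₐ[K] R)
    (hφ : ∀ i, (φ (X i)).IsHomogeneous 1) (h0 : ∀ f, φ f ∈ L → f = 0) (n : ℕ) :
    (n + d).choose d ≤ Hf L (n + 1) := by
  have hhom : ∀ f k, homogeneousComponent k (φ f) = φ (homogeneousComponent k f) := by
    intro f k
    have hg : ∀ j, (φ (homogeneousComponent j f)).IsHomogeneous j := by
      intro j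
      have h1 : φ = aeval (fun i => φ (X i)) := by
        ext i; simp
      rw [h1]
      have := (homogeneousComponent_isHomogeneous j f).aeval (fun i => φ (X i)) hφ
      simpa using this
    conv_lhs => rw [← sum_homogeneousComponent f]
    rw [map_sum, map_sum]
    simp only [homogeneousComponent_of_mem (hg _)]
    rw [Finset.sum_ite_eq]
    split_ifs with h
    · rfl
    · rw [homogeneousComponent_eq_zero _ _ (by simpa using h)]; simp
  let ψ : (MvPolynomial (Fin d) K ⧸ maxIdeal K (Fin d) ^ (n + 1)) →ₗ[K] (R ⧸ (L ⊔ 𝔪 ^ (n + 1))) :=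
    (Ideal.quotientMapₐ (L ⊔ 𝔪 ^ (n + 1)) φ (by
      intro f hf
      rw [Ideal.mem_comap]
      refine Ideal.mem_sup_right ?_
      rw [mem_mx_pow] at hf ⊢
      intro k hk
      have := hhom f k
      rw [hf k hk, map_zero] at this
      exact this)).toLinearMap
  have hinj : Function.Injective ψ := by
    rw [← LinearMap.ker_eq_bot, LinearMap.ker_eq_bot']
    intro x hx
    obtain ⟨f, rfl⟩ := Ideal.Quotient.mk_surjective x
    have hx' : Ideal.Quotient.mk (L ⊔ 𝔪 ^ (n + 1)) (φ f) = 0 := hx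
    rw [Ideal.Quotient.eq_zero_iff_mem] at hx' ⊢
    obtain ⟨a, ha, b, hb, hab⟩ := Submodule.mem_sup.1 hx'
    rw [mem_mx_pow] at hb ⊢
    intro k hk
    apply h0
    rw [← hhom, ← hab, map_add, hb k hk, add_zero]
    exact hL _ ha _
  have := finite_of_le (le_sup_right : 𝔪 ^ (n + 1) ≤ L ⊔ 𝔪 ^ (n + 1))
  have h := LinearMap.finrank_le_finrank_of_injective hinj
  rwa [finrank_pow] at h

end count
end HS

namespace HS

section A1
open Polynomial
variable {A : Type*} [CommRing A] [IsDomain A] [UniqueFactorizationMonoid A]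

lemma coprime_frac {F G : A[X]} (hF : F.Monic) (h : IsRelPrime F G) :
    IsCoprime (F.map (algebraMap A (FractionRing A))) (G.map (algebraMap A (FractionRing A))) := by
  apply IsRelPrime.isCoprime
  intro D hDF hDG
  have hinj : Function.Injective (algebraMap A (FractionRing A)) :=
    IsFractionRing.injective A (FractionRing A)
  obtain ⟨g', hg'⟩ := IsIntegrallyClosed.eq_map_mul_C_of_dvd (FractionRing A) hF hDF
  have hD0 : D ≠ 0 := by
    rintro rfl
    exact (hF.map (algebraMap A (FractionRing A))).ne_zero (zero_dvd_iff.1 hDF)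
  have hl : D.leadingCoeff ≠ 0 := leadingCoeff_ne_zero.2 hD0
  have hm : (g'.map (algebraMap A (FractionRing A))).Monic := by
    have := congrArg Polynomial.leadingCoeff hg'
    rw [leadingCoeff_mul, Polynomial.leadingCoeff_C] at this
    exact mul_right_cancel₀ hl (by rw [this, one_mul])
  have hm' : g'.Monic := by
    exact Polynomial.monic_of_injective hinj hm
  have hd : g'.map (algebraMap A (FractionRing A)) ∣ D := ⟨_, hg'.symm⟩
  have h1 : g' ∣ F := (Polynomial.map_dvd_map _ hinj hm').1 (hd.trans hDF)
  have h2 : g' ∣ G := (Polynomial.map_dvd_map _ hinj hm').1 (hd.trans hDG)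
  have h3 := h h1 h2
  rw [← hg']
  exact (h3.map (Polynomial.mapRingHom (algebraMap A (FractionRing A)))).mul
    (Polynomial.isUnit_C.2 (isUnit_iff_ne_zero.2 hl))

lemma exists_C_mem {F G : A[X]} (hF : F.Monic) (h : IsRelPrime F G) :
    ∃ a : A, a ≠ 0 ∧ Polynomial.C a ∈ Ideal.span {F, G} := by
  by_cases h1 : F = 1
  · refine ⟨1, one_ne_zero, ?_⟩
    subst h1
    rw [Polynomial.C_1]
    exact Ideal.subset_span (by simp)
  have hd : F.natDegree ≠ 0 := fun h0 => h1 (hF.natDegree_eq_zero.1 h0)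
  obtain ⟨p, q, -, -, e⟩ := exists_mul_add_mul_eq_C_resultant F G le_rfl le_rfl (Or.inl hd)
  refine ⟨F.resultant G, ?_, ?_⟩
  rotate_left
  · rw [← e]
    exact Ideal.mem_span_pair.2 ⟨p, q, by ring⟩
  · have h2 := resultant_ne_zero _ _ (coprime_frac hF h)
    have hinj : Function.Injective (algebraMap A (FractionRing A)) :=
      IsFractionRing.injective A (FractionRing A)
    rw [natDegree_map_eq_of_injective hinj, natDegree_map_eq_of_injective hinj,
      resultant_map_map] at h2
    intro h0
    rw [h0] at h2
    simp at h2

lemma not_relprime {F G Z : A[X]} (hF : F.Monic) (h : IsRelPrime F G)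
    (hZ : Z ∉ Ideal.span {F, G}) {a b : A} (ha0 : a ≠ 0) (ha : Polynomial.C a * Z ∈ Ideal.span {F, G})
    (hb : Polynomial.C b * Z ∈ Ideal.span {F, G}) : ¬ IsRelPrime a b := by
  intro hab
  obtain ⟨u, c, e1⟩ := Ideal.mem_span_pair.1 ha
  obtain ⟨u', c', e2⟩ := Ideal.mem_span_pair.1 hb
  have hdv : F ∣ Polynomial.C b * c - Polynomial.C a * c' := by
    refine h.dvd_of_dvd_mul_right (z := G) ⟨Polynomial.C a * u' - Polynomial.C b * u, ?_⟩
    linear_combination Polynomial.C b * e1 - Polynomial.C a * e2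
  set r := c %ₘ F
  set r' := c' %ₘ F
  have hr : r + F * (c /ₘ F) = c := modByMonic_add_div c F
  have hr' : r' + F * (c' /ₘ F) = c' := modByMonic_add_div c' F
  have hz : Polynomial.C b * r - Polynomial.C a * r' = 0 := by
    have : (Polynomial.C b * c - Polynomial.C a * c') %ₘ F = 0 := (modByMonic_eq_zero_iff_dvd hF).2 hdv
    rw [sub_modByMonic, ← Polynomial.smul_eq_C_mul, ← Polynomial.smul_eq_C_mul, smul_modByMonic, smul_modByMonic] at this
    rw [← Polynomial.smul_eq_C_mul, ← Polynomial.smul_eq_C_mul]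
    exact this
  have hCr : Polynomial.C a ∣ r := by
    rw [Polynomial.C_dvd_iff_dvd_coeff]
    intro i
    refine hab.dvd_of_dvd_mul_left (z := r.coeff i) ⟨r'.coeff i, ?_⟩
    have := congrArg (fun p => Polynomial.coeff p i) hz
    simp only [Polynomial.coeff_sub, Polynomial.coeff_C_mul, Polynomial.coeff_zero] at this
    linear_combination this
  obtain ⟨s, hs⟩ := hCr
  have h4 : Polynomial.C a * (Z - G * s) = F * (u + (c /ₘ F) * G) := by
    rw [hs] at hr
    linear_combination -e1 - hr * G
  have h5 : Polynomial.C a ∣ u + (c /ₘ F) * G := by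
    have : Polynomial.C a ∣ F * (u + (c /ₘ F) * G) := ⟨_, h4.symm⟩
    rw [Polynomial.C_dvd_iff_dvd_coeff]
    by_contra hcon
    set v := u + (c /ₘ F) * G
    -- reduce modulo a
    have hm : (F * v).map (Ideal.Quotient.mk (Ideal.span {a})) = 0 := by
      ext i
      rw [Polynomial.coeff_map, Polynomial.coeff_zero, Ideal.Quotient.eq_zero_iff_mem, Ideal.mem_span_singleton]
      exact (Polynomial.C_dvd_iff_dvd_coeff _ _).1 this i
    rw [Polynomial.map_mul, (hF.map _).mul_right_eq_zero_iff] at hm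
    apply hcon
    intro i
    rw [← Ideal.mem_span_singleton, ← Ideal.Quotient.eq_zero_iff_mem, ← Polynomial.coeff_map, hm, Polynomial.coeff_zero]
  obtain ⟨w, hw⟩ := h5
  apply hZ
  rw [hw] at h4
  have : Z - G * s = F * w :=
    mul_left_cancel₀ (Polynomial.C_ne_zero.2 ha0) (by rw [h4]; ring)
  exact Ideal.mem_span_pair.2 ⟨w, s, by linear_combination -this⟩

lemma exists_prime {F G Z : A[X]} (hF : F.Monic) (h : IsRelPrime F G)
    (hZ : Z ∉ Ideal.span {F, G}) :
    ∃ π : A, Prime π ∧ ∀ a, Polynomial.C a * Z ∈ Ideal.span {F, G} → π ∣ a := by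
  classical
  obtain ⟨a, ha0, ha⟩ := exists_C_mem hF h
  have ha' : Polynomial.C a * Z ∈ Ideal.span {F, G} := Ideal.mul_mem_right _ _ ha
  let p : Ideal A := ((Ideal.span {F, G}).colon {Z}).comap Polynomial.C
  have hp : ∀ b, b ∈ p ↔ Polynomial.C b * Z ∈ Ideal.span {F, G} := fun b => by
    simp only [p, Ideal.mem_comap, Submodule.mem_colon_singleton, smul_eq_mul]
  let s := (UniqueFactorizationMonoid.factors a).toFinset
  have hs : ∀ i ∈ s, Prime i := fun i hi =>
    UniqueFactorizationMonoid.prime_of_factor i (Multiset.mem_toFinset.1 hi)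
  have hsub : (p : Set A) ⊆ ⋃ i ∈ (s : Set A), ((Ideal.span {i} : Ideal A) : Set A) := by
    intro b hb
    have := not_relprime hF h hZ ha0 ha' ((hp b).1 hb)
    rw [UniqueFactorizationMonoid.isRelPrime_iff_no_prime_factors ha0] at this
    push Not at this
    obtain ⟨d, hda, hdb, hd⟩ := this
    obtain ⟨q, hq, hdq⟩ := UniqueFactorizationMonoid.exists_mem_factors_of_dvd ha0 hd.irreducible hda
    simp only [Set.mem_iUnion]
    exact ⟨q, by simpa [s] using hq, Ideal.mem_span_singleton.2 (hdq.symm.dvd.trans hdb)⟩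
  obtain ⟨i, hi, hle⟩ := (Ideal.subset_union_prime (f := fun i : A => Ideal.span {i}) 0 0
    (fun i hi _ _ => (Ideal.span_singleton_prime (hs i hi).ne_zero).2 (hs i hi))).1 hsub
  exact ⟨i, hs i hi, fun b hb => Ideal.mem_span_singleton.1 (hle ((hp b).2 hb))⟩

end A1

section A2
variable {K : Type*} [Field K]

lemma prime_elim {d : ℕ} {π : MvPolynomial (Fin (d + 1)) K} (h : Prime π) :
    ∃ i : Fin (d + 1), ∀ f : MvPolynomial (Fin d) K, π ∣ rename i.succAbove f → f = 0 := by
  classical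
  have : ∃ i, degreeOf i π ≠ 0 := by
    by_contra hcon
    push Not at hcon
    have : π = C (coeff 0 π) := by
      ext m
      rw [coeff_C]
      split_ifs with hm
      · rw [hm]
      · by_contra hne
        apply hm
        ext i
        have := monomial_le_degreeOf i (mem_support_iff.2 hne)
        rw [hcon] at this
        simp; omega
    apply h.not_isUnit
    rw [this]
    apply IsUnit.map
    rw [isUnit_iff_ne_zero]
    intro h0
    rw [h0, C_0] at this
    exact h.ne_zero this
  obtain ⟨i, hi⟩ := this
  refine ⟨i, fun f hf => ?_⟩
  by_contra hf0
  have hr0 : rename i.succAbove f ≠ 0 := fun h0 => hf0 (rename_injective _ Fin.succAbove_right_injective (by rw [h0, map_zero]))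
  obtain ⟨c, hc⟩ := hf
  have hc0 : c ≠ 0 := by rintro rfl; rw [mul_zero] at hc; exact hr0 hc
  have h1 : degreeOf i (rename i.succAbove f) = 0 := by
    by_contra hm0
    have hm := mem_vars_iff_degreeOf_ne_zero.2 hm0
    have := vars_rename i.succAbove f hm
    simp only [Finset.mem_image] at this
    obtain ⟨j, -, hj⟩ := this
    exact Fin.succAbove_ne i j hj
  rw [hc, degreeOf_mul_eq h.ne_zero hc0] at h1
  omega

end A2
end HS

namespace HS
section claimA
variable {K : Type u} [Field K]

lemma eval_two {N : ℕ} {q : MvPolynomial (Fin N) K} (v : Fin N → K)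
    (m₀ : Fin N →₀ ℕ) (hv : ∀ k, m₀ k ≠ 0 → v k = 1)
    (h : ∀ m ∈ q.support, (∀ k, v k = 0 → m k = 0) → m = m₀) :
    eval v q = coeff m₀ q := by
  rw [eval_eq', Finset.sum_eq_single m₀]
  · rw [Finset.prod_eq_one, mul_one]
    intro k _
    by_cases hk : m₀ k = 0
    · rw [hk, pow_zero]
    · rw [hv k hk, one_pow]
  · intro m hm hne
    by_contra hcon
    apply hne
    refine h m hm fun k hk => ?_
    by_contra hmk
    apply hcon
    rw [Finset.prod_eq_zero (Finset.mem_univ k), mul_zero]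
    rw [hk, zero_pow hmk]
  · intro hm
    rw [notMem_support_iff.1 hm, zero_mul]

lemma deg_two {N : ℕ} {q : MvPolynomial (Fin N) K} (hq : q.IsHomogeneous 2) {m : Fin N →₀ ℕ}
    (hm : m ∈ q.support) : ∑ k, m k = 2 := by
  have := hq (mem_support_iff.1 hm)
  rw [Finsupp.weight_apply, Finsupp.sum_fintype _ _ (by simp)] at this
  simpa using this

lemma eval_e {N : ℕ} {q : MvPolynomial (Fin N) K} (hq : q.IsHomogeneous 2) (i : Fin N) :
    eval (Pi.single i 1) q = coeff (Finsupp.single i 2) q := by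
  classical
  refine eval_two _ _ ?_ ?_
  · intro k hk
    by_cases h : k = i
    · subst h; simp
    · simp [Finsupp.single_apply, Ne.symm h] at hk
  · intro m hm h
    have h2 := deg_two hq hm
    have h3 : ∀ k, k ≠ i → m k = 0 := fun k hk => h k (by simp [hk])
    rw [Finset.sum_eq_single i (fun k _ hk => h3 k hk) (by simp)] at h2
    ext k
    by_cases hk : k = i
    · subst hk; simp [h2]
    · rw [h3 k hk, Finsupp.single_apply, if_neg (Ne.symm hk)]

lemma exists_eval {N : ℕ} {q : MvPolynomial (Fin N) K} (hq : q.IsHomogeneous 2) (h0 : q ≠ 0) :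
    ∃ i j : Fin N, eval (Pi.single i 1) q ≠ 0 ∨
      (i ≠ j ∧ eval (Pi.single i 1 + Pi.single j 1) q ≠ 0) := by
  classical
  by_cases hc : ∃ i, eval (Pi.single i 1) q ≠ 0
  · obtain ⟨i, hi⟩ := hc
    exact ⟨i, i, Or.inl hi⟩
  push Not at hc
  obtain ⟨m₀, hm₀⟩ := support_nonempty.2 h0
  have hsq : ∀ m ∈ q.support, ∀ i, m i = 2 → False := by
    intro m hm i hi
    have h2 := deg_two hq hm
    rw [← Finset.add_sum_erase _ _ (Finset.mem_univ i), hi] at h2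
    have h3 : ∑ x ∈ Finset.univ.erase i, m x = 0 := by omega
    have : m = Finsupp.single i 2 := by
      ext k
      by_cases hk : k = i
      · subst hk; simp [hi]
      · rw [Finsupp.single_apply, if_neg (Ne.symm hk)]
        exact Finset.sum_eq_zero_iff.1 h3 k (by simp [hk])
    rw [this, mem_support_iff, ← eval_e hq] at hm
    exact hm (hc i)
  have key : ∀ m ∈ q.support, ∀ i j, i ≠ j → (∀ k, k ≠ i → k ≠ j → m k = 0) → m i = 1 ∧ m j = 1 := by
    intro m hm i j hij h
    have h2 := deg_two hq hm
    rw [← Finset.add_sum_erase _ _ (Finset.mem_univ i),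
      Finset.sum_eq_single j (fun k hk hkj => h k (by simpa using hk) hkj)
        (by simp [Ne.symm hij])] at h2
    have h3 : m i ≠ 2 := hsq m hm i
    have h4 : m j ≠ 2 := hsq m hm j
    omega
  have h2 := deg_two hq hm₀
  obtain ⟨i, -, hi⟩ := Finset.exists_ne_zero_of_sum_ne_zero (by rw [h2]; norm_num)
  have h3 : ∑ x ∈ Finset.univ.erase i, m₀ x ≠ 0 := by
    intro h3
    rw [← Finset.add_sum_erase _ _ (Finset.mem_univ i), h3] at h2
    exact hsq m₀ hm₀ i (by omega)
  obtain ⟨j, hj, hj0⟩ := Finset.exists_ne_zero_of_sum_ne_zero h3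
  have hij : i ≠ j := by rw [Finset.mem_erase] at hj; exact Ne.symm hj.1
  have hoth : ∀ k, k ≠ i → k ≠ j → m₀ k = 0 := by
    intro k hki hkj
    rw [← Finset.add_sum_erase _ _ (Finset.mem_univ i), ← Finset.add_sum_erase _ _ hj,
      ← Finset.add_sum_erase _ _ (by simp [hki, hkj] : k ∈ (Finset.univ.erase i).erase j)] at h2
    omega
  refine ⟨i, j, Or.inr ⟨hij, ?_⟩⟩
  rw [eval_two _ m₀]
  · exact mem_support_iff.1 hm₀
  · intro k hk
    by_cases h1 : k = i
    · subst h1; simp [hij]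
    · by_cases h2 : k = j
      · subst h2; simp [h1]
      · exact absurd (hoth k h1 h2) hk
  · intro m hm h
    have h1 : ∀ k, k ≠ i → k ≠ j → m k = 0 := fun k hki hkj => h k (by simp [hki, hkj])
    have a := key m hm i j hij h1
    have b := key m₀ hm₀ i j hij hoth
    ext k
    by_cases e1 : k = i
    · subst e1; omega
    · by_cases e2 : k = j
      · subst e2; omega
      · rw [h1 k e1 e2, hoth k e1 e2]

noncomputable def shearHom {N : ℕ} (i j : Fin N) (c : K) :
    MvPolynomial (Fin N) K →ₐ[K] MvPolynomial (Fin N) K :=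
  aeval (fun k => if k = j then X j + C c * X i else X k)

lemma shear_comp {N : ℕ} {i j : Fin N} (hij : i ≠ j) (c c' : K) (h : c + c' = 0) :
    (shearHom i j c).comp (shearHom i j c') = AlgHom.id K _ := by
  ext1 k
  by_cases hk : k = j
  · subst hk
    have hc : (C c : MvPolynomial (Fin N) K) + C c' = 0 := by rw [← C_add, h, C_0]
    simp [shearHom, hij, algebraMap_eq]
    linear_combination X i * hc
  · simp [shearHom, hk]

noncomputable def shear {N : ℕ} {i j : Fin N} (hij : i ≠ j) :
    MvPolynomial (Fin N) K ≃ₐ[K] MvPolynomial (Fin N) K :=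
  AlgEquiv.ofAlgHom (shearHom i j 1) (shearHom i j (-1)) (shear_comp hij _ _ (by ring))
    (shear_comp hij _ _ (by ring))

lemma shearHom_hom {N : ℕ} (i j : Fin N) (c : K) (k : Fin N) :
    (shearHom i j c (X k)).IsHomogeneous 1 := by
  simp only [shearHom, aeval_X]
  split_ifs
  · exact (isHomogeneous_X _ _).add (by simpa using (isHomogeneous_C _ c).mul (isHomogeneous_X K i))
  · exact isHomogeneous_X _ _

lemma hom_of_lin {N M : ℕ} (φ : MvPolynomial (Fin N) K →ₐ[K] MvPolynomial (Fin M) K)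
    (h : ∀ k, (φ (X k)).IsHomogeneous 1) {f : MvPolynomial (Fin N) K} {d : ℕ}
    (hf : f.IsHomogeneous d) : (φ f).IsHomogeneous d := by
  have h1 : φ = aeval (fun i => φ (X i)) := by
    ext i; simp
  rw [h1]
  have := hf.aeval (fun i => φ (X i)) h
  simpa using this

lemma exists_auto {m : ℕ} {q : MvPolynomial (Fin (m + 1)) K} (hq : q.IsHomogeneous 2) (h0 : q ≠ 0) :
    ∃ ψ : MvPolynomial (Fin (m + 1)) K ≃ₐ[K] MvPolynomial (Fin (m + 1)) K,
      (∀ k, (ψ.symm (X k)).IsHomogeneous 1) ∧ (ψ q).IsHomogeneous 2 ∧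
      coeff (Finsupp.single 0 2) (ψ q) ≠ 0 := by
  classical
  have step1 : ∀ (q : MvPolynomial (Fin (m + 1)) K), q.IsHomogeneous 2 → ∀ i,
      eval (Pi.single i 1) q ≠ 0 → ∃ ψ : MvPolynomial (Fin (m + 1)) K ≃ₐ[K] MvPolynomial (Fin (m + 1)) K,
      (∀ k, (ψ.symm (X k)).IsHomogeneous 1) ∧ (ψ q).IsHomogeneous 2 ∧
      coeff (Finsupp.single 0 2) (ψ q) ≠ 0 := by
    intro q hq i hi
    have hh : (renameEquiv K (Equiv.swap 0 i) q).IsHomogeneous 2 := hq.rename_isHomogeneous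
    refine ⟨renameEquiv K (Equiv.swap 0 i), ?_, hh, ?_⟩
    · intro k
      simp only [renameEquiv_symm, renameEquiv_apply, rename_X]
      exact isHomogeneous_X _ _
    · rw [← eval_e hh, renameEquiv_apply, eval_rename]
      convert hi using 3
      ext k
      simp only [Function.comp, Pi.single_apply]
      congr 1
      rw [eq_iff_iff, Equiv.swap_apply_eq_iff, Equiv.swap_apply_left]
  obtain ⟨i, j, h | ⟨hij, h⟩⟩ := exists_eval hq h0
  · exact step1 q hq i h
  · have hh : (shear hij q).IsHomogeneous 2 :=
      hom_of_lin (shearHom i j 1) (shearHom_hom i j 1) hq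
    obtain ⟨ψ, h1, h2, h3⟩ := step1 (shear hij q) hh i (by
      have : eval (Pi.single i 1) (shear hij q) = eval (Pi.single i 1 + Pi.single j 1) q := by
        have e : ((aeval (Pi.single i (1 : K)) : _ →ₐ[K] K).comp (shearHom i j 1)) =
            aeval (Pi.single i (1 : K) + Pi.single j 1) := by
          ext k
          by_cases hk : k = j
          · subst hk; simp [shearHom, hij, Ne.symm hij]
          · simp [shearHom, hk]
        exact DFunLike.congr_fun e q
      rw [this]; exact h)
    refine ⟨(shear hij).trans ψ, ?_, h2, h3⟩
    intro k
    exact hom_of_lin (shearHom i j (-1)) (shearHom_hom i j (-1)) (h1 k)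

lemma mem_pair_iff {A B : Type*} [CommRing A] [CommRing B] (e : A ≃+* B) {u : B} (hu : IsUnit u)
    {a b : A} (x : A) : e x ∈ Ideal.span {u * e a, e b} ↔ x ∈ Ideal.span {a, b} := by
  obtain ⟨v, hv⟩ := hu.exists_right_inv
  rw [Ideal.mem_span_pair, Ideal.mem_span_pair]
  constructor
  · rintro ⟨s, t, h⟩
    refine ⟨e.symm (s * u), e.symm t, e.injective ?_⟩
    simp only [map_add, map_mul, RingEquiv.apply_symm_apply]
    rw [← h]; ring
  · rintro ⟨s, t, h⟩
    refine ⟨e s * v, e t, ?_⟩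
    rw [← h]
    simp only [map_add, map_mul]
    linear_combination e s * e a * hv

lemma claimA {d : ℕ} {q₁ q₂ z : MvPolynomial (Fin (d + 2)) K} (hq : q₁.IsHomogeneous 2)
    (h0 : q₁ ≠ 0) (hrel : IsRelPrime q₁ q₂) (hz : z ∉ Ideal.span {q₁, q₂}) :
    ∃ φ : MvPolynomial (Fin d) K →ₐ[K] MvPolynomial (Fin (d + 2)) K,
      (∀ k, (φ (X k)).IsHomogeneous 1) ∧ ∀ f, φ f * z ∈ Ideal.span {q₁, q₂} → f = 0 := by
  obtain ⟨ψ, hψ, hψq, hc⟩ := exists_auto hq h0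
  set c := coeff (Finsupp.single 0 2) (ψ q₁) with hcdef
  let e : MvPolynomial (Fin (d + 2)) K ≃ₐ[K] Polynomial (MvPolynomial (Fin (d + 1)) K) :=
    ψ.trans (finSuccEquiv K (d + 1))
  have hco : (e q₁).coeff 2 = C c := by
    ext m
    change coeff m ((finSuccEquiv K (d + 1) (ψ q₁)).coeff 2) = _
    rw [finSuccEquiv_coeff_coeff, coeff_C]
    split_ifs with hm
    · subst hm
      rw [hcdef]
      congr 1
      ext k
      refine Fin.cases ?_ (fun k => ?_) k
      · simp
      · simp [Finsupp.single_apply, Fin.succ_ne_zero, (Fin.succ_ne_zero _).symm]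
    · by_contra hne
      apply hm
      have := deg_two hψq (mem_support_iff.2 hne)
      rw [Fin.sum_univ_succ] at this
      simp only [Finsupp.cons_zero, Finsupp.cons_succ] at this
      have h3 : ∑ i, m i = 0 := by omega
      ext k
      exact (Finset.sum_eq_zero_iff.1 h3 k (Finset.mem_univ k)).symm
  have hdeg : (e q₁).natDegree ≤ 2 := by
    change (finSuccEquiv K (d + 1) (ψ q₁)).natDegree ≤ 2
    rw [natDegree_finSuccEquiv]
    exact (degreeOf_le_totalDegree _ _).trans hψq.totalDegree_le
  let u : Polynomial (MvPolynomial (Fin (d + 1)) K) := Polynomial.C (C c⁻¹)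
  have hu : IsUnit u := by
    apply IsUnit.map; apply IsUnit.map
    exact isUnit_iff_ne_zero.2 (inv_ne_zero hc)
  have hmonic : (u * e q₁).Monic := by
    apply Polynomial.monic_of_natDegree_le_of_coeff_eq_one 2
    · exact (Polynomial.natDegree_C_mul_le _ _).trans hdeg
    · simp only [u]
      rw [Polynomial.coeff_C_mul, hco, ← C_mul, inv_mul_cancel₀ hc, C_1]
  have hrel' : IsRelPrime (u * e q₁) (e q₂) := by
    rw [isRelPrime_mul_unit_left_left hu]
    intro D h1 h2
    have a := hrel (d := e.symm D) (by simpa using map_dvd e.symm h1) (by simpa using map_dvd e.symm h2)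
    simpa using a.map e
  have hmem : ∀ x, e x ∈ Ideal.span {u * e q₁, e q₂} ↔ x ∈ Ideal.span {q₁, q₂} :=
    fun x => mem_pair_iff e.toRingEquiv hu x
  obtain ⟨π, hπ, hdiv⟩ := exists_prime (Z := e z) hmonic hrel' (fun h => hz ((hmem z).1 h))
  obtain ⟨i, hi⟩ := prime_elim hπ
  have hren : ∀ f : MvPolynomial (Fin (d + 1)) K,
      finSuccEquiv K (d + 1) (rename Fin.succ f) = Polynomial.C f := fun f => by
    induction f using MvPolynomial.induction_on with
    | C a => simp [finSuccEquiv_apply]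
    | add p q hp hq => simp only [map_add, hp, hq]
    | mul_X p i hp => simp only [map_mul, hp, rename_X, finSuccEquiv_X_succ]
  refine ⟨(ψ.symm : _ →ₐ[K] _).comp ((rename Fin.succ).comp (rename i.succAbove)), ?_, ?_⟩
  · intro k
    simpa using hψ _
  · intro f hf
    apply hi f
    apply hdiv
    rw [← hmem, map_mul] at hf
    convert hf using 2
    rw [← hren]
    simp [e]

end claimA
end HS

namespace HS
section sel
variable {K : Type u} [Field K]

lemma two_le_height {A : Type*} [CommRing A] {I : Ideal A} (h : idealHeight I = 2) {P : Ideal A}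
    [hP : P.IsPrime] (hIP : I ≤ P) : 2 ≤ P.height := by
  rw [← h, show P.height = Order.height (⟨P, hP⟩ : PrimeSpectrum A) from
    PrimeSpectrum.height_eq_orderHeight ⟨P, hP⟩]
  exact iInf₂_le (⟨P, hP⟩ : PrimeSpectrum A) hIP

lemma exists_prime_height {A : Type*} [CommRing A] {I : Ideal A} (h : idealHeight I = 2) :
    ∃ P : Ideal A, P.IsPrime ∧ I ≤ P ∧ P.height = 2 := by
  by_contra hcon
  push Not at hcon
  have : (3 : ℕ∞) ≤ idealHeight I := by
    refine le_iInf₂ fun p hp => ?_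
    have h1 := two_le_height h (P := p.asIdeal) hp
    have h2 := hcon p.asIdeal p.2 hp
    rw [← PrimeSpectrum.height_eq_orderHeight]
    have h3 : (2 : ℕ∞) < p.asIdeal.height := lt_of_le_of_ne h1 (Ne.symm h2)
    have := Order.add_one_le_of_lt h3
    exact le_trans (by norm_num) this
  rw [h] at this
  exact absurd this (by norm_num)

lemma prime_not_dvd_all {N n : ℕ} {I : Ideal (MvPolynomial (Fin N) K)}
    {g : Fin n → MvPolynomial (Fin N) K}
    (hI : I = Ideal.span (Set.range g)) (hht : idealHeight I = 2) {π : MvPolynomial (Fin N) K}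
    (hπ : Prime π) : ∃ i, ¬ π ∣ g i := by
  by_contra hcon
  push Not at hcon
  have hle : I ≤ Ideal.span {π} := by
    rw [hI, Ideal.span_le]
    rintro _ ⟨i, rfl⟩
    exact Ideal.mem_span_singleton.2 (hcon i)
  have : (Ideal.span {π}).IsPrime := (Ideal.span_singleton_prime hπ.ne_zero).2 hπ
  have h1 := two_le_height hht hle
  have h2 := Ideal.height_span_singleton_le_one hπ.not_isUnit
  exact absurd (h1.trans h2) (by norm_num)

lemma unit_of_deg {N : ℕ} {s : MvPolynomial (Fin N) K} (h0 : s ≠ 0) (h : s.totalDegree = 0) :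
    IsUnit s := by
  rw [totalDegree_eq_zero_iff_eq_C] at h
  rw [h]
  apply IsUnit.map
  rw [isUnit_iff_ne_zero]
  intro h1
  rw [h1, C_0] at h
  exact h0 h

lemma exists_q2 {N n : ℕ} {I : Ideal (MvPolynomial (Fin N) K)}
    {g : Fin n → MvPolynomial (Fin N) K} (hg : ∀ i, (g i).IsHomogeneous 2)
    (hI : I = Ideal.span (Set.range g)) (hht : idealHeight I = 2) {q₁ : MvPolynomial (Fin N) K}
    (hq₁ : q₁.IsHomogeneous 2) (h1 : q₁ ∈ I) (h0 : q₁ ≠ 0) :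
    ∃ q₂ ∈ I, q₂.IsHomogeneous 2 ∧ IsRelPrime q₁ q₂ := by
  have hgI : ∀ i, g i ∈ I := fun i => hI ▸ Ideal.subset_span ⟨i, rfl⟩
  suffices h : ∃ q₂ ∈ I, q₂.IsHomogeneous 2 ∧ ∀ π, Prime π → π ∣ q₁ → ¬ π ∣ q₂ by
    obtain ⟨q₂, a, b, c⟩ := h
    refine ⟨q₂, a, b, ?_⟩
    rw [UniqueFactorizationMonoid.isRelPrime_iff_no_prime_factors h0]
    exact fun d hd1 hd2 hd => c d hd hd1 hd2
  by_cases hp1 : ∃ π₁, Prime π₁ ∧ π₁ ∣ q₁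
  · obtain ⟨π₁, hπ₁, r, hr⟩ := hp1
    obtain ⟨a, ha⟩ := prime_not_dvd_all hI hht hπ₁
    have hr0 : r ≠ 0 := by rintro rfl; simp at hr; exact h0 hr
    have hdvd : ∀ {p p' x : MvPolynomial (Fin N) K}, Prime p → Prime p' → p ∣ p' → p ∣ x → p' ∣ x :=
      fun hp hp' h hx => ((hp.associated_of_dvd hp' h).symm.dvd).trans hx
    by_cases hp2 : ∃ π₂, Prime π₂ ∧ π₂ ∣ r
    · obtain ⟨π₂, hπ₂, s, hs⟩ := hp2
      have hs0 : s ≠ 0 := by rintro rfl; simp at hs; exact hr0 hs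
      have hd : q₁.totalDegree = π₁.totalDegree + (π₂.totalDegree + s.totalDegree) := by
        rw [hr, totalDegree_mul_of_isDomain hπ₁.ne_zero hr0, hs,
          totalDegree_mul_of_isDomain hπ₂.ne_zero hs0]
      have hd1 : π₁.totalDegree ≠ 0 := fun h => hπ₁.not_isUnit (unit_of_deg hπ₁.ne_zero h)
      have hd2 : π₂.totalDegree ≠ 0 := fun h => hπ₂.not_isUnit (unit_of_deg hπ₂.ne_zero h)
      have hd3 := hq₁.totalDegree_le
      have hsu : IsUnit s := unit_of_deg hs0 (by omega)
      have key : ∀ q₂, ¬ π₁ ∣ q₂ → ¬ π₂ ∣ q₂ → ∀ π, Prime π → π ∣ q₁ → ¬ π ∣ q₂ := by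
        intro q₂ h1 h2 π hπ hd hd'
        rw [hr, hs] at hd
        rcases hπ.dvd_or_dvd hd with h | h
        · exact h1 (hdvd hπ hπ₁ h hd')
        · rcases hπ.dvd_or_dvd h with h | h
          · exact h2 (hdvd hπ hπ₂ h hd')
          · exact hπ.not_isUnit (isUnit_of_dvd_unit h hsu)
      obtain ⟨b, hb⟩ := prime_not_dvd_all hI hht hπ₂
      by_cases c1 : π₂ ∣ g a
      · by_cases c2 : π₁ ∣ g b
        · refine ⟨g a + g b, I.add_mem (hgI a) (hgI b), (hg a).add (hg b), key _ ?_ ?_⟩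
          · intro h; exact ha ((dvd_add_left c2).1 h)
          · intro h; exact hb ((dvd_add_right c1).1 h)
        · exact ⟨g b, hgI b, hg b, key _ c2 hb⟩
      · exact ⟨g a, hgI a, hg a, key _ ha c1⟩
    · refine ⟨g a, hgI a, hg a, fun π hπ hd hd' => ?_⟩
      rw [hr] at hd
      rcases hπ.dvd_or_dvd hd with h | h
      · exact ha (hdvd hπ hπ₁ h hd')
      · exact hp2 ⟨π, hπ, h⟩
  · exact ⟨q₁, h1, hq₁, fun π hπ hd => absurd ⟨π, hπ, hd⟩ hp1⟩

lemma height_pair {A : Type*} [CommRing A] [IsDomain A] [UniqueFactorizationMonoid A]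
    {q₁ q₂ : A} (h0 : q₁ ≠ 0) (hrel : IsRelPrime q₁ q₂) {P : Ideal A}
    [hP : P.IsPrime] (hJ : Ideal.span {q₁, q₂} ≤ P) : 2 ≤ P.height := by
  have h1 : q₁ ∈ P := hJ (Ideal.subset_span (by simp))
  have h2 : q₂ ∈ P := hJ (Ideal.subset_span (by simp))
  obtain ⟨π, hπP, hπ, hd⟩ : ∃ π ∈ P, Prime π ∧ π ∣ q₁ := by
    obtain ⟨u, hu⟩ := UniqueFactorizationMonoid.factors_prod h0
    have : (UniqueFactorizationMonoid.factors q₁).prod ∈ P := by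
      rw [← hu] at h1
      exact (hP.mem_or_mem h1).resolve_right
        (fun h => hP.ne_top (Ideal.eq_top_of_isUnit_mem _ h u.isUnit))
    obtain ⟨p, hp, hpP⟩ := (Ideal.IsPrime.multiset_prod_mem_iff_exists_mem hP _).1 this
    exact ⟨p, hpP, UniqueFactorizationMonoid.prime_of_factor p hp,
      UniqueFactorizationMonoid.dvd_of_mem_factors hp⟩
  have hpr : (Ideal.span {π}).IsPrime := (Ideal.span_singleton_prime hπ.ne_zero).2 hπ
  have hlt : Ideal.span {π} < P := by
    refine lt_of_le_of_ne ((Ideal.span_singleton_le_iff_mem _).2 hπP) ?_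
    intro h
    rw [← h, Ideal.mem_span_singleton] at h2
    exact hπ.not_isUnit (hrel hd h2)
  have hlt0 : (⊥ : Ideal A) < Ideal.span {π} := by
    rw [bot_lt_iff_ne_bot, Ne, Ideal.span_singleton_eq_bot]
    exact hπ.ne_zero
  have a := Ideal.height_add_one_le_of_lt_of_isPrime hlt
  have b := Ideal.height_add_one_le_of_lt_of_isPrime hlt0
  calc (2 : ℕ∞) = 0 + 1 + 1 := by norm_num
    _ ≤ (⊥ : Ideal A).height + 1 + 1 := by gcongr; exact zero_le
    _ ≤ (Ideal.span {π}).height + 1 := by gcongr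
    _ ≤ P.height := a

lemma exists_colon {A : Type*} [CommRing A] [IsDomain A] [UniqueFactorizationMonoid A]
    [IsNoetherianRing A]
    {q₁ q₂ : A} (h0 : q₁ ≠ 0) (hrel : IsRelPrime q₁ q₂) {P : Ideal A}
    [hP : P.IsPrime] (hJ : Ideal.span {q₁, q₂} ≤ P) (hP2 : P.height = 2) :
    ∃ z, z ∉ Ideal.span {q₁, q₂} ∧ ∀ f ∈ P, f * z ∈ Ideal.span {q₁, q₂} := by
  have hJ2 : 2 ≤ (Ideal.span {q₁, q₂}).height := by
    rw [Ideal.height_eq_inf_minimalPrimes]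
    refine le_iInf₂ fun p hp => ?_
    have := hp.1.1
    exact height_pair h0 hrel hp.1.2
  have hmin : P ∈ (Ideal.span {q₁, q₂}).minimalPrimes :=
    Ideal.mem_minimalPrimes_of_height_le hJ (hP2.trans_le hJ2)
  have hass : P ∈ associatedPrimes A (A ⧸ Ideal.span {q₁, q₂}) := by
    apply Module.associatedPrimes.minimalPrimes_annihilator_subset_associatedPrimes
    rwa [Ideal.annihilator_quotient]
  rw [AssociatedPrimes.mem_iff, isAssociatedPrime_iff] at hass
  obtain ⟨-, x, hx⟩ := hass
  obtain ⟨z, rfl⟩ := Ideal.Quotient.mk_surjective x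
  have hmem : ∀ f, f ∈ P ↔ f * z ∈ Ideal.span {q₁, q₂} := by
    intro f
    rw [hx, Submodule.mem_colon_singleton, Submodule.mem_bot, ← Ideal.Quotient.eq_zero_iff_mem,
      map_mul]
    rfl
  refine ⟨z, ?_, fun f hf => (hmem f).1 hf⟩
  intro hz
  apply hP.ne_top
  rw [Ideal.eq_top_iff_one, hmem, one_mul]
  exact hz

lemma dim_le {A : Type*} [CommRing A] {I : Ideal A} {d : ℕ} (hht : idealHeight I = 2)
    (hA : ringKrullDim A = ((d + 2 : ℕ) : WithBot ℕ∞)) : ringKrullDim (A ⧸ I) ≤ d := by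
  rw [ringKrullDim_quotient]
  refine iSup_le fun l => ?_
  have key : ∀ i : ℕ, ∀ hi : i < l.length + 1, ((2 + i : ℕ) : ℕ∞) ≤ Order.height (l ⟨i, hi⟩).1 := by
    intro i
    induction i with
    | zero =>
      intro hi
      have := two_le_height hht (P := (l ⟨0, hi⟩).1.asIdeal) (l ⟨0, hi⟩).2
      rwa [PrimeSpectrum.height_eq_orderHeight] at this
    | succ i ih =>
      intro hi
      have h1 := ih (by omega)
      have h2 : (l ⟨i, by omega⟩).1 < (l ⟨i + 1, hi⟩).1 := l.step ⟨i, by omega⟩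
      refine le_trans ?_ (Order.height_add_one_le h2)
      push_cast at h1 ⊢
      rw [← add_assoc]
      gcongr
  have h1 := key l.length (by omega)
  have h2 : ((Order.height (l ⟨l.length, by omega⟩).1 : ℕ∞) : WithBot ℕ∞) ≤ ringKrullDim A :=
    Order.height_le_krullDim _
  rw [hA] at h2
  have h3 : ((2 + l.length : ℕ) : ℕ∞) ≤ ((d + 2 : ℕ) : ℕ∞) := h1.trans (WithBot.coe_le_coe.1 h2)
  have h4 : 2 + l.length ≤ d + 2 := by exact_mod_cast h3
  have : l.length ≤ d := by omega
  exact_mod_cast this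

lemma dim_mono {A B : Type*} [CommRing A] [CommRing B] [Algebra A B] [Algebra.IsIntegral A B]
    [FaithfulSMul A B] [IsDomain B] [IsDomain A]: ringKrullDim A ≤ ringKrullDim B := by
  refine iSup_le fun l => ?_
  obtain ⟨Q, -, hQ, hQ2⟩ := Ideal.exists_ideal_over_prime_of_isIntegral l.head.asIdeal (⊥ : Ideal B) (by
    rw [Ideal.comap_bot_of_injective _ (FaithfulSMul.algebraMap_injective A B)]; exact bot_le)
  have : Q.LiesOver l.head.asIdeal := ⟨hQ2.symm⟩
  obtain ⟨L, hL, -⟩ := Ideal.exists_ltSeries_of_hasGoingUp l Q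
  rw [← hL]
  exact Order.LTSeries.length_le_krullDim L

lemma dim_ge {B : Type u} [CommRing B] [IsDomain B] [Algebra K B] [Algebra.FiniteType K B] {d : ℕ}
    (φ : MvPolynomial (Fin d) K →ₐ[K] B) (hφ : Function.Injective φ) :
    (d : WithBot ℕ∞) ≤ ringKrullDim B := by
  obtain ⟨s, g, hg, hfin⟩ := exists_finite_inj_algHom_of_fg K B
  algebraize [g.toRingHom]
  have : IsScalarTower K (MvPolynomial (Fin s) K) B := IsScalarTower.of_algebraMap_eq fun x => by
    change _ = g (algebraMap _ _ x)
    rw [g.commutes]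
  have hfa : FaithfulSMul (MvPolynomial (Fin s) K) B :=
    (faithfulSMul_iff_algebraMap_injective _ _).2 hg
  have h1 := trdeg_add_eq K (MvPolynomial (Fin s) K) (A := B)
  have hmf : Module.Finite (MvPolynomial (Fin s) K) B := hfin
  have hint : Algebra.IsIntegral (MvPolynomial (Fin s) K) B := inferInstance
  have hds : d ≤ s := by
    have h2 := trdeg_le_of_injective φ hφ
    rw [← h1, trdeg_eq_zero (R := MvPolynomial (Fin s) K) (A := B), MvPolynomial.trdeg_of_isDomain,
      MvPolynomial.trdeg_of_isDomain] at h2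
    simpa using h2
  have h3 := dim_mono (A := MvPolynomial (Fin s) K) (B := B)
  rw [MvPolynomial.ringKrullDim_of_isNoetherianRing] at h3
  refine le_trans ?_ h3
  simp
  exact_mod_cast hds

end sel
end HS

namespace HS
section asym

lemma lc_nonneg {P : Polynomial ℚ} (h : ∀ᶠ n : ℕ in atTop, 0 ≤ P.eval (n : ℚ)) :
    0 ≤ P.leadingCoeff := by
  by_contra hc
  push Not at hc
  by_cases hd : 0 < P.degree
  · have h1 := (P.tendsto_atBot_of_leadingCoeff_nonpos hd hc.le).comp
      (tendsto_natCast_atTop_atTop (R := ℚ))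
    obtain ⟨n, hn, hn2⟩ := (h.and (h1.eventually (eventually_lt_atBot 0))).exists
    exact absurd hn2 (not_lt.2 hn)
  · rw [Polynomial.eq_C_of_degree_le_zero (not_lt.1 hd)] at h hc
    obtain ⟨n, hn⟩ := h.exists
    simp at hn hc
    linarith

lemma coeff_nonneg {P : Polynomial ℚ} {d : ℕ} (h : ∀ᶠ n : ℕ in atTop, 0 ≤ P.eval (n : ℚ))
    (hd : P.natDegree ≤ d) : 0 ≤ P.coeff d := by
  rcases hd.eq_or_lt with rfl | h1
  · exact lc_nonneg h
  · rw [Polynomial.coeff_eq_zero_of_natDegree_lt h1]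

lemma sandwich {P Q T : Polynomial ℚ} {d : ℕ}
    (hQ : ∀ᶠ n : ℕ in atTop, Q.eval (n : ℚ) ≤ P.eval (n : ℚ))
    (hT : ∀ᶠ n : ℕ in atTop, P.eval (n : ℚ) ≤ T.eval (n : ℚ))
    (hQd : Q.natDegree ≤ d) (hTd : T.natDegree ≤ d) (hpos : 0 < Q.coeff d) :
    P.natDegree = d ∧ P.leadingCoeff ≤ T.coeff d := by
  have h1 : ∀ᶠ n : ℕ in atTop, 0 ≤ (P - Q).eval (n : ℚ) := by
    filter_upwards [hQ] with n hn
    rw [Polynomial.eval_sub]; linarith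
  have h2 : ∀ᶠ n : ℕ in atTop, 0 ≤ (T - P).eval (n : ℚ) := by
    filter_upwards [hT] with n hn
    rw [Polynomial.eval_sub]; linarith
  have hle : P.natDegree ≤ d := by
    by_contra hc
    push Not at hc
    have a := coeff_nonneg (d := P.natDegree) h1 (Polynomial.natDegree_sub_le_of_le le_rfl (by omega)|>.trans (by simp [hc.le]))
    have b := coeff_nonneg (d := P.natDegree) h2 (Polynomial.natDegree_sub_le_of_le (by omega) le_rfl|>.trans (by simp [hc.le]))
    rw [Polynomial.coeff_sub] at a b
    rw [Polynomial.coeff_eq_zero_of_natDegree_lt (p := Q) (by omega)] at a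
    rw [Polynomial.coeff_eq_zero_of_natDegree_lt (p := T) (by omega)] at b
    have : P.leadingCoeff = 0 := by
      rw [Polynomial.leadingCoeff]; linarith
    rw [Polynomial.leadingCoeff_eq_zero] at this
    rw [this] at hc
    simp at hc
  have a := coeff_nonneg (d := d) h1 (Polynomial.natDegree_sub_le_of_le hle hQd |>.trans (by simp))
  have b := coeff_nonneg (d := d) h2 (Polynomial.natDegree_sub_le_of_le hTd hle |>.trans (by simp))
  rw [Polynomial.coeff_sub] at a b
  have hd : P.natDegree = d := le_antisymm hle (Polynomial.le_natDegree_of_ne_zero (by linarith))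
  refine ⟨hd, ?_⟩
  rw [Polynomial.leadingCoeff, hd]
  linarith

lemma lc_int {P : Polynomial ℚ} {F : ℕ → ℕ} (h : ∀ᶠ n : ℕ in atTop, (F n : ℚ) = P.eval (n : ℚ)) :
    ∃ e : ℕ, (e : ℚ) = P.leadingCoeff * P.natDegree.factorial := by
  obtain ⟨n₀, hn⟩ := eventually_atTop.1 h
  have h1 := congrFun P.fwdDiff_iter_degree_eq_factorial (n₀ : ℚ)
  rw [fwdDiff_iter_eq_sum_shift] at h1
  have h0 : 0 ≤ P.leadingCoeff := lc_nonneg (by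
    filter_upwards [h] with n hn
    rw [← hn]; positivity)
  have h2 : (((∑ k ∈ Finset.range (P.natDegree + 1),
      ((-1 : ℤ) ^ (P.natDegree - k) * P.natDegree.choose k) * (F (n₀ + k) : ℤ)) : ℤ) : ℚ) =
      P.leadingCoeff * P.natDegree.factorial := by
    rw [show P.leadingCoeff * (P.natDegree.factorial : ℚ) =
      (P.leadingCoeff • ((P.natDegree.factorial : ℕ) : ℚ → ℚ)) (n₀ : ℚ) by
        simp [Pi.smul_apply], ← h1]
    push_cast
    refine Finset.sum_congr rfl fun k _ => ?_
    rw [hn (n₀ + k) (by omega)]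
    simp
  obtain ⟨e, he⟩ := Int.eq_ofNat_of_zero_le (a := ∑ k ∈ Finset.range (P.natDegree + 1),
      ((-1 : ℤ) ^ (P.natDegree - k) * P.natDegree.choose k) * (F (n₀ + k) : ℤ)) (by
    have : (0 : ℚ) ≤ P.leadingCoeff * P.natDegree.factorial := by positivity
    rw [← h2] at this
    exact_mod_cast this)
  refine ⟨e, ?_⟩
  rw [← h2, he]
  simp

lemma final_poly {P : Polynomial ℚ} {F : ℕ → ℕ} {d : ℕ}
    (h : ∀ᶠ n : ℕ in atTop, (F n : ℚ) = P.eval (n : ℚ))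
    (hlow : ∀ m, (m + d).choose d ≤ F (m + 1))
    (hup : ∀ m, F (m + 5) + (m + 2 + d).choose d ≤ 4 * (m + 4 + d).choose d) :
    P.natDegree = d ∧ ∃ e : ℕ, e ≤ 3 ∧ (e : ℚ) = P.leadingCoeff * d.factorial := by
  have hev : ∀ k n : ℕ, k ≤ n → (Polynomial.preHilbertPoly ℚ d k).eval (n : ℚ) =
      ((n - k + d).choose d : ℕ) := fun k n hkn =>
    Polynomial.preHilbertPoly_eq_choose_sub_add ℚ d hkn
  have hd : (0 : ℚ) < d.factorial := by positivity
  obtain ⟨h1, h2⟩ := sandwich (P := P) (Q := Polynomial.preHilbertPoly ℚ d 1)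
    (T := (4 : ℚ) • Polynomial.preHilbertPoly ℚ d 1 - Polynomial.preHilbertPoly ℚ d 3) (d := d)
    (by
      filter_upwards [h, eventually_ge_atTop 1] with n hn h1
      rw [← hn, hev _ _ h1]
      obtain ⟨m, rfl⟩ := Nat.exists_eq_add_of_le' h1
      simpa using hlow m)
    (by
      filter_upwards [h, eventually_ge_atTop 5] with n hn h1
      rw [← hn, Polynomial.eval_sub, Polynomial.eval_smul, hev _ _ (by omega), hev _ _ (by omega)]
      obtain ⟨m, rfl⟩ := Nat.exists_eq_add_of_le' h1
      have := hup m
      rw [show m + 5 - 1 = m + 4 by omega, show m + 5 - 3 = m + 2 by omega, smul_eq_mul,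
        le_sub_iff_add_le]
      exact_mod_cast this)
    (Polynomial.natDegree_preHilbertPoly ℚ d 1).le
    ((Polynomial.natDegree_sub_le_of_le ((Polynomial.natDegree_smul_le _ _).trans
      (Polynomial.natDegree_preHilbertPoly ℚ d 1).le)
      (Polynomial.natDegree_preHilbertPoly ℚ d 3).le).trans (by simp))
    (by rw [Polynomial.coeff_preHilbertPoly_self]; positivity)
  rw [Polynomial.coeff_sub, Polynomial.coeff_smul, Polynomial.coeff_preHilbertPoly_self,
    Polynomial.coeff_preHilbertPoly_self] at h2
  refine ⟨h1, ?_⟩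
  obtain ⟨e, he⟩ := lc_int h
  rw [h1] at he
  refine ⟨e, ?_, he⟩
  have : (e : ℚ) ≤ 3 := by
    rw [he]
    calc P.leadingCoeff * d.factorial ≤ _ * d.factorial := mul_le_mul_of_nonneg_right h2 hd.le
      _ = 3 := by
        rw [smul_eq_mul]
        field_simp
        norm_num
  exact_mod_cast this
end asym

section main
variable {K : Type u} [Field K]

lemma choose_id (a d : ℕ) : (a + 2).choose (d + 2) = a.choose (d + 2) + a.choose (d + 1) + (a + 1).choose (d + 1) := by
  rw [Nat.choose_succ_succ (a + 1) (d + 1), Nat.choose_succ_succ a (d + 1)]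
  ring

lemma upper {d : ℕ} {q₁ q₂ : MvPolynomial (Fin (d + 2)) K} (hq₁ : q₁.IsHomogeneous 2)
    (hq₂ : q₂.IsHomogeneous 2) (h0 : q₁ ≠ 0) (hrel : IsRelPrime q₁ q₂) (m : ℕ) :
    Hf (Ideal.span {q₁, q₂}) (m + 5) ≤ 4 * (m + 4 + d).choose d := by
  have c1 : (⊥ : Ideal (MvPolynomial (Fin (d + 2)) K)).colon {q₁} = ⊥ := by
    ext f
    rw [Submodule.mem_colon_singleton, Ideal.mem_bot, Ideal.mem_bot, smul_eq_mul, mul_eq_zero]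
    tauto
  have c2 : (Ideal.span {q₁}).colon {q₂} = Ideal.span {q₁} := by
    ext f
    rw [Submodule.mem_colon_singleton, smul_eq_mul, Ideal.mem_span_singleton,
      Ideal.mem_span_singleton]
    exact ⟨fun h => hrel.dvd_of_dvd_mul_right h, fun h => h.mul_right _⟩
  have c3 : Ideal.span {q₁} ⊔ Ideal.span {q₂} = Ideal.span {q₁, q₂} := by
    rw [← Ideal.span_union, Set.singleton_union]
  have s1 := Hf_step (Hm.bot (K := K) (N := d + 2)) hq₁ (m + 1)
  have s2 := Hf_step (Hm.bot (K := K) (N := d + 2)) hq₁ (m + 3)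
  have s3 := Hf_step (Hm.span_singleton hq₁) hq₂ (m + 3)
  rw [c1, bot_sup_eq] at s1 s2
  rw [c2, c3] at s3
  have b1 := Hf_bot (K := K) (N := d + 2) m
  have b3 := Hf_bot (K := K) (N := d + 2) (m + 2)
  have b5 := Hf_bot (K := K) (N := d + 2) (m + 4)
  have e1 := choose_id (m + (d + 2)) d
  have e2 := choose_id (m + 2 + (d + 2)) d
  have e3 := Nat.choose_succ_succ (m + d + 4) d
  have e4 := Nat.choose_succ_succ (m + d + 3) d
  have e5 := Nat.choose_succ_succ (m + d + 2) d
  have l1 : (m + d + 3).choose d ≤ (m + d + 4).choose d := Nat.choose_le_choose _ (by omega)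
  have l2 : (m + d + 2).choose d ≤ (m + d + 4).choose d := Nat.choose_le_choose _ (by omega)
  simp only [Nat.succ_eq_add_one, add_assoc, Nat.reduceAdd] at *
  ring_nf at *
  omega
end main
end HS
/-- an ideal minimally generated by `n ≥ 3` quadrics with `ht I = 2` has
Hilbert–Samuel multiplicity `e(R/I) ≤ 3` (w.r.t. the homogeneous maximal ideal). -/
theorem stmt2 (K : Type u) [Field K] (N n : ℕ) (hn : 3 ≤ n)
    (I : Ideal (MvPolynomial (Fin N) K)) (g : Fin n → MvPolynomial (Fin N) K)
    (hg : ∀ i, (g i).IsHomogeneous 2)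
    (hI : I = Ideal.span (Set.range g))
    (hmin : ∀ (k : ℕ) (h : Fin k → MvPolynomial (Fin N) K),
      I = Ideal.span (Set.range h) → n ≤ k)
    (hht : idealHeight I = 2) :
    ∃ e : ℕ, e ≤ 3 ∧ IsHSMultiplicity (MvPolynomial (Fin N) K) (maxIdeal K (Fin N)) I e := by
  classical
  obtain ⟨P, hP, hIP, hP2⟩ := HS.exists_prime_height hht
  have hdimR : ringKrullDim (MvPolynomial (Fin N) K) = (N : WithBot ℕ∞) := by
    rw [MvPolynomial.ringKrullDim_of_isNoetherianRing]
    simp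
  have hN : 2 ≤ N := by
    have h1 := Ideal.height_le_ringKrullDim_of_isPrime (I := P)
    rw [hP2, hdimR] at h1
    exact_mod_cast h1
  obtain ⟨d, rfl⟩ := Nat.exists_eq_add_of_le' hN
  have hgI : ∀ i, g i ∈ I := fun i => hI ▸ Ideal.subset_span ⟨i, rfl⟩
  obtain ⟨i₀, hi₀⟩ : ∃ i, g i ≠ 0 := by
    obtain ⟨i, hi⟩ := HS.prime_not_dvd_all hI hht
      (MvPolynomial.X_prime (R := K) (i := (0 : Fin (d + 2))))
    exact ⟨i, fun h => hi (h ▸ dvd_zero _)⟩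
  obtain ⟨q₂, hq₂I, hq₂, hrel⟩ := HS.exists_q2 hg hI hht (hg i₀) (hgI i₀) hi₀
  have hJI : Ideal.span {g i₀, q₂} ≤ I := by
    rw [Ideal.span_le]
    rintro x (rfl | rfl)
    · exact hgI i₀
    · exact hq₂I
  obtain ⟨i₁, hi₁⟩ : ∃ i, g i ∉ Ideal.span {g i₀, q₂} := by
    by_contra hcon
    push Not at hcon
    have h1 : I = Ideal.span (Set.range ![g i₀, q₂]) := by
      rw [Matrix.range_cons_cons_empty]
      refine le_antisymm ?_ hJI
      rw [hI, Ideal.span_le]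
      rintro _ ⟨i, rfl⟩
      exact hcon i
    have := hmin 2 _ h1
    omega
  have hHI : HS.Hm I := hI ▸ HS.Hm.span_range hg
  obtain ⟨z, hz, hzP⟩ := HS.exists_colon hi₀ hrel (hJI.trans hIP) hP2
  obtain ⟨φ, hφ1, hφ⟩ := HS.claimA (hg i₀) hi₀ hrel hz
  obtain ⟨ψ, hψ1, hψ⟩ := HS.claimA (hg i₀) hi₀ hrel hi₁
  have hφP : ∀ f, φ f ∈ P → f = 0 := fun f hf => hφ f (hzP _ hf)
  have hdim : ringKrullDim (MvPolynomial (Fin (d + 2)) K ⧸ I) = (d : WithBot ℕ∞) := by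
    refine le_antisymm (HS.dim_le hht hdimR) ?_
    refine le_trans (HS.dim_ge ((Ideal.Quotient.mkₐ K P).comp φ) ?_)
      (ringKrullDim_le_of_surjective _ (Ideal.Quotient.factor_surjective hIP))
    rw [injective_iff_map_eq_zero]
    intro f hf
    exact hφP f (Ideal.Quotient.eq_zero_iff_mem.1 hf)
  obtain ⟨p, hp⟩ := HS.exists_poly I hHI
  have hJm : HS.Hm (Ideal.span {g i₀, q₂}) := by
    have := (HS.Hm.span_singleton (hg i₀)).sup (HS.Hm.span_singleton hq₂)
    rwa [← Ideal.span_union, Set.singleton_union] at this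
  obtain ⟨hdeg, e, he, he2⟩ := HS.final_poly hp
    (fun m => HS.Hf_lower hHI φ hφ1 (fun f hf => hφP f (hIP hf)) m)
    (fun m => by
      have h1 := HS.upper (hg i₀) hq₂ hi₀ hrel m
      have h2 := HS.Hf_step hJm (hg i₁) (m + 3)
      have h3 := HS.Hf_lower (hJm.colon (hg i₁)) ψ hψ1 (fun f hf => hψ f (by
        rwa [Submodule.mem_colon_singleton, smul_eq_mul] at hf)) (m + 2)
      have h4 : HS.Hf I (m + 5) ≤ HS.Hf (Ideal.span {g i₀, q₂} ⊔ Ideal.span {g i₁}) (m + 5) :=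
        HS.Hf_anti (sup_le hJI ((Ideal.span_singleton_le_iff_mem _).2 (hgI i₁))) _
      simp only [add_assoc, Nat.reduceAdd] at *
      omega)
  refine ⟨e, he, d, p, hdim, hdeg, he2, ?_⟩
  filter_upwards [hp] with m hm
  exact ⟨HS.Hf I m, hm, HS.Hf_length I m⟩
end

section
/- Let R be a polynomial ring over a field K and let I be an ideal of R minimally generated by n ≥ 3 quadrics with ht(I) = 2. If p is a minimal prime of I with ht(p) = 2, then e(R/p) ≤ 3. -/
open MvPolynomial Filter

universe u

section comb

/-- eventually polynomial functions -/
def EvPoly (f : ℕ → ℕ) : Prop :=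
  ∃ P : Polynomial ℚ, ∀ᶠ n : ℕ in atTop, (f n : ℚ) = P.eval (n : ℚ)

lemma EvPoly.congr {f g : ℕ → ℕ} (hf : EvPoly f) (h : ∀ᶠ n in atTop, g n = f n) : EvPoly g := by
  obtain ⟨P, hP⟩ := hf
  refine ⟨P, ?_⟩
  filter_upwards [hP, h] with n h1 h2
  rw [h2, h1]

lemma EvPoly.add {f g : ℕ → ℕ} (hf : EvPoly f) (hg : EvPoly g) : EvPoly (fun n => f n + g n) := by
  obtain ⟨P, hP⟩ := hf
  obtain ⟨Q, hQ⟩ := hg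
  refine ⟨P + Q, ?_⟩
  filter_upwards [hP, hQ] with n h1 h2
  simp [h1, h2]

lemma EvPoly.const (c : ℕ) : EvPoly (fun _ => c) :=
  ⟨Polynomial.C (c : ℚ), by simp⟩

lemma EvPoly.sum {ι : Type*} (s : Finset ι) (f : ι → ℕ → ℕ) (hf : ∀ i ∈ s, EvPoly (f i)) :
    EvPoly (fun n => ∑ i ∈ s, f i n) := by
  classical
  induction s using Finset.induction_on with
  | empty => simpa using EvPoly.const 0
  | insert a s ha ih =>
    simp only [Finset.sum_insert ha]
    exact (hf a (by simp)).add (ih (fun i hi => hf i (by simp [hi])))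

lemma EvPoly.shift {f : ℕ → ℕ} (hf : EvPoly f) (j : ℕ) : EvPoly (fun n => f (n - j)) := by
  obtain ⟨P, hP⟩ := hf
  refine ⟨P.comp (Polynomial.X - Polynomial.C (j : ℚ)), ?_⟩
  have := (tendsto_sub_atTop_nat j).eventually hP
  filter_upwards [this, eventually_ge_atTop j] with n h1 h2
  rw [h1]
  simp [Nat.cast_sub h2]

lemma poly_cumsum (P : Polynomial ℚ) : ∃ Q : Polynomial ℚ, ∀ n : ℕ,
    ∑ k ∈ Finset.range n, P.eval (k : ℚ) = Q.eval (n : ℚ) := by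
  induction P using Polynomial.induction_on' with
  | add p q hp hq =>
    obtain ⟨Q1, h1⟩ := hp
    obtain ⟨Q2, h2⟩ := hq
    exact ⟨Q1 + Q2, fun n => by simp [Finset.sum_add_distrib, h1, h2]⟩
  | monomial p a =>
    refine ⟨Polynomial.C a * ∑ i ∈ Finset.range (p + 1), Polynomial.C (bernoulli i * ((p + 1).choose i) / (p + 1)) * Polynomial.X ^ (p + 1 - i), fun n => ?_⟩
    simp only [Polynomial.eval_monomial, ← Finset.mul_sum, sum_range_pow, Polynomial.eval_mul, Polynomial.eval_C, Polynomial.eval_finsetSum, Polynomial.eval_pow, Polynomial.eval_X]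
    congr 1
    refine Finset.sum_congr rfl fun i _ => ?_
    ring

lemma EvPoly.cumsum {f : ℕ → ℕ} (hf : EvPoly f) :
    EvPoly (fun n => ∑ k ∈ Finset.range (n + 1), f k) := by
  obtain ⟨P, hP⟩ := hf
  obtain ⟨n0, h0⟩ := eventually_atTop.1 hP
  obtain ⟨Q, hQ⟩ := poly_cumsum P
  refine ⟨Q.comp (Polynomial.X + 1) + Polynomial.C (∑ k ∈ Finset.range n0, ((f k : ℚ) - P.eval (k : ℚ))), ?_⟩
  filter_upwards [eventually_ge_atTop n0] with n hn
  have e1 : ∑ k ∈ Finset.range n0, ((f k : ℚ) - P.eval (k : ℚ)) =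
      ∑ k ∈ Finset.range (n + 1), ((f k : ℚ) - P.eval (k : ℚ)) := by
    apply Finset.sum_subset
    · intro x; simp; omega
    · intro x _ hx
      simp only [Finset.mem_range, not_lt] at hx
      rw [h0 x hx, sub_self]
  rw [e1, Finset.sum_sub_distrib, hQ, Polynomial.eval_add, Polynomial.eval_C]
  simp

lemma chain_stab {α : Type*} [Preorder α] [WellQuasiOrderedLE α] (U : ℕ → Set α)
    (hU : ∀ j, IsUpperSet (U j)) (hm : Monotone U) : ∃ j0, ∀ j, j0 ≤ j → U j = U j0 := by
  by_contra! hcon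
  have h2 : ∀ j0, ∃ j v, j0 ≤ j ∧ v ∈ U j ∧ v ∉ U j0 := by
    intro j0
    obtain ⟨j, hj, hne⟩ := hcon j0
    have : ¬ U j ⊆ U j0 := fun h => hne (h.antisymm (hm hj))
    obtain ⟨v, h1, h2⟩ := Set.not_subset.1 this
    exact ⟨j, v, hj, h1, h2⟩
  choose g v hg hv hv' using h2
  let k : ℕ → ℕ := fun i => g^[i] 0
  have hk1 : ∀ i, k (i + 1) = g (k i) := fun i => Function.iterate_succ_apply' g i 0
  have hk : Monotone k := monotone_nat_of_le_succ (fun i => by rw [hk1]; exact hg _)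
  obtain ⟨i, i', hii, hle⟩ := wellQuasiOrdered_le (α := α) (fun i => v (k i))
  apply hv' (k i')
  apply hU _ hle
  apply hm (hk (Nat.succ_le_of_lt hii))
  rw [Nat.succ_eq_add_one, hk1]
  exact hv _

noncomputable def cntStd {N : ℕ} (U : Set (Fin N → ℕ)) (n : ℕ) : ℕ :=
  Nat.card {v : Fin N → ℕ // v ∉ U ∧ ∑ i, v i ≤ n}

instance finite_std {N : ℕ} (U : Set (Fin N → ℕ)) (n : ℕ) :
    Finite {v : Fin N → ℕ // v ∉ U ∧ ∑ i, v i ≤ n} := by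
  apply Set.Finite.to_subtype (s := {v : Fin N → ℕ | v ∉ U ∧ ∑ i, v i ≤ n})
  apply (Set.finite_Iic (fun _ : Fin N => n)).subset
  rintro v ⟨_, hv⟩ i
  exact (Finset.single_le_sum (f := v) (fun _ _ => Nat.zero_le _) (Finset.mem_univ i)).trans hv

def stdEquiv {N : ℕ} (U : Set (Fin (N + 1) → ℕ)) (n : ℕ) :
    {v : Fin (N + 1) → ℕ // v ∉ U ∧ ∑ i, v i ≤ n} ≃
      Σ j : Fin (n + 1), {w : Fin N → ℕ // w ∉ {w | (Fin.cons j.1 w : Fin (N+1) → ℕ) ∈ U} ∧ ∑ i, w i ≤ n - j.1} where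
  toFun v := ⟨⟨v.1 0, by have := v.2.2; rw [Fin.sum_univ_succ] at this; omega⟩,
    ⟨Fin.tail v.1, by
      have := v.2.2; rw [Fin.sum_univ_succ] at this
      refine ⟨by simpa using v.2.1, ?_⟩
      simp only [Fin.tail]; omega⟩⟩
  invFun x := ⟨Fin.cons x.1.1 x.2.1, by
    refine ⟨by simpa using x.2.2.1, ?_⟩
    rw [Fin.sum_univ_succ]
    have := x.2.2.2
    have h2 := x.1.2
    simp only [Fin.cons_zero, Fin.cons_succ]
    omega⟩
  left_inv v := by simp
  right_inv x := by
    obtain ⟨j, w, hw⟩ := x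
    rfl

lemma cntStd_succ {N : ℕ} (U : Set (Fin (N + 1) → ℕ)) (n : ℕ) :
    cntStd U n = ∑ j ∈ Finset.range (n + 1),
      cntStd {w : Fin N → ℕ | (Fin.cons j w : Fin (N+1) → ℕ) ∈ U} (n - j) := by
  unfold cntStd
  rw [Nat.card_congr (stdEquiv U n), Nat.card_sigma, Finset.sum_range]

lemma cntStd_evPoly {N : ℕ} (U : Set (Fin N → ℕ)) (hU : IsUpperSet U) : EvPoly (cntStd U) := by
  induction N with
  | zero =>
    refine (EvPoly.const (cntStd U 0)).congr ?_
    filter_upwards with n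
    simp [cntStd]
  | succ N ih =>
    set V : ℕ → Set (Fin N → ℕ) := fun j => {w : Fin N → ℕ | (Fin.cons j w : Fin (N+1) → ℕ) ∈ U} with hV
    have hVu : ∀ j, IsUpperSet (V j) := by
      intro j a b hab ha
      exact hU (Fin.cons_le_cons.2 ⟨le_rfl, hab⟩) ha
    have hVm : Monotone V := by
      intro i j hij w hw
      exact hU (Fin.cons_le_cons.2 ⟨hij, le_rfl⟩) hw
    obtain ⟨j0, hj0⟩ := chain_stab V hVu hVm
    have h1 : EvPoly (fun n => ∑ j ∈ Finset.range j0, cntStd (V j) (n - j)) :=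
      EvPoly.sum _ _ (fun j _ => (ih (V j) (hVu j)).shift j)
    have h2 : EvPoly (fun n => ∑ k ∈ Finset.range ((n - j0) + 1), cntStd (V j0) k) :=
      (ih (V j0) (hVu j0)).cumsum.shift j0
    refine (h1.add h2).congr ?_
    filter_upwards [eventually_ge_atTop j0] with n hn
    rw [cntStd_succ]
    obtain ⟨d, rfl⟩ := Nat.exists_eq_add_of_le hn
    rw [add_assoc, Finset.sum_range_add]
    congr 1
    rw [Nat.add_sub_cancel_left, ← Finset.sum_range_reflect]
    refine Finset.sum_congr rfl fun k hk => ?_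
    have hk' := Finset.mem_range.1 hk
    change cntStd (V _) _ = _
    rw [hj0 _ (by omega)]
    congr 1
    omega
end comb


section nag
open Polynomial MvPolynomial Ideal RingHom List

variable {k : Type*} [Field k] {n : ℕ} (f : MvPolynomial (Fin (n + 1)) k)
variable (v w : Fin (n + 1) →₀ ℕ)

noncomputable abbrev NagT1 (c : k) :
    MvPolynomial (Fin (n + 1)) k →ₐ[k] MvPolynomial (Fin (n + 1)) k :=
  aeval fun i ↦ if i = 0 then MvPolynomial.X 0 else MvPolynomial.X i + c • MvPolynomial.X 0 ^ ((2 + f.totalDegree) ^ i.1)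

lemma Nag_t1_comp (c : k) : (NagT1 f c).comp (NagT1 f (-c)) = AlgHom.id _ _ := by
  rw [comp_aeval, ← MvPolynomial.aeval_X_left]
  ext i v
  cases i using Fin.cases <;> simp

noncomputable abbrev NagT := AlgEquiv.ofAlgHom (NagT1 f 1) (NagT1 f (-1))
  (Nag_t1_comp f 1) (by simpa using Nag_t1_comp f (-1))

lemma Nag_sum_r_mul_ne (vlt : ∀ i, v i < 2 + f.totalDegree) (wlt : ∀ i, w i < 2 + f.totalDegree) (ne : v ≠ w) :
    ∑ x : Fin (n + 1), (2 + f.totalDegree) ^ x.1 * v x ≠ ∑ x : Fin (n + 1), (2 + f.totalDegree) ^ x.1 * w x := by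
  intro h
  refine ne <| Finsupp.ext <| congrFun <| ofFn_inj.mp ?_
  apply Nat.ofDigits_inj_of_len_eq (Nat.lt_add_right f.totalDegree one_lt_two)
    (by simp) (by grind) (by grind)
  simpa only [Nat.ofDigits_eq_sum_mapIdx, mapIdx_eq_ofFn, get_ofFn, length_ofFn,
    Fin.val_cast, mul_comm, sum_ofFn] using! h

lemma Nag_degreeOf_zero_t {a : k} (ha : a ≠ 0) : ((NagT f) (MvPolynomial.monomial v a)).degreeOf 0 =
    ∑ i : Fin (n + 1), ((2 + f.totalDegree) ^ i.1) * v i := by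
  rw [← natDegree_finSuccEquiv, MvPolynomial.monomial_eq, Finsupp.prod_pow v fun a ↦ MvPolynomial.X a]
  simp only [Fin.prod_univ_succ, Fin.sum_univ_succ, map_mul, map_prod, map_pow,
    AlgEquiv.ofAlgHom_apply, MvPolynomial.aeval_C, MvPolynomial.aeval_X, if_pos, Fin.succ_ne_zero,
    ite_false, one_smul, map_add, finSuccEquiv_X_zero, finSuccEquiv_X_succ, algebraMap_eq]
  have h (i : Fin n) :
      (Polynomial.C (MvPolynomial.X (R := k) i) + Polynomial.X ^ ((2 + f.totalDegree) ^ i.succ.1)) ^ v i.succ ≠ 0 :=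
    pow_ne_zero (v i.succ) (leadingCoeff_ne_zero.mp <| by simp [add_comm, leadingCoeff_X_pow_add_C])
  rw [natDegree_mul (by simp [ha]) (mul_ne_zero (by simp) (Finset.prod_ne_zero_iff.mpr
    (fun i _ ↦ h i))), natDegree_mul (by simp) (Finset.prod_ne_zero_iff.mpr (fun i _ ↦ h i)),
    natDegree_prod _ _ (fun i _ ↦ h i), natDegree_finSuccEquiv, degreeOf_C]
  simpa only [natDegree_pow, zero_add, natDegree_X, mul_one, Fin.val_zero, pow_zero, one_mul,
    add_right_inj] using Finset.sum_congr rfl (fun i _ ↦ by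
    rw [add_comm (Polynomial.C _), natDegree_X_pow_add_C, mul_comm])

lemma Nag_degreeOf_t_ne_of_ne (hv : v ∈ f.support) (hw : w ∈ f.support) (ne : v ≠ w) :
    (NagT f <| MvPolynomial.monomial v <| MvPolynomial.coeff v f).degreeOf 0 ≠
    (NagT f <| MvPolynomial.monomial w <| MvPolynomial.coeff w f).degreeOf 0 := by
  rw [Nag_degreeOf_zero_t _ _ <| MvPolynomial.mem_support_iff.mp hv, Nag_degreeOf_zero_t _ _ <| MvPolynomial.mem_support_iff.mp hw]
  refine Nag_sum_r_mul_ne f v w (fun i ↦ ?_) (fun i ↦ ?_) ne <;>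
  exact lt_of_le_of_lt ((monomial_le_degreeOf i ‹_›).trans (degreeOf_le_totalDegree f i))
    (by lia)

lemma Nag_leadingCoeff_finSuccEquiv_t :
    (finSuccEquiv k n ((NagT f) ((MvPolynomial.monomial v) (MvPolynomial.coeff v f)))).leadingCoeff =
    algebraMap k _ (MvPolynomial.coeff v f) := by
  rw [MvPolynomial.monomial_eq, Finsupp.prod_fintype]
  · simp only [map_mul, map_prod, leadingCoeff_mul, leadingCoeff_prod]
    rw [AlgEquiv.ofAlgHom_apply, algHom_C, MvPolynomial.algebraMap_eq, finSuccEquiv_apply,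
      eval₂Hom_C, coe_comp]
    simp only [AlgEquiv.ofAlgHom_apply, Function.comp_apply, leadingCoeff_C, map_pow,
      leadingCoeff_pow, MvPolynomial.algebraMap_eq]
    have : ∀ j, ((finSuccEquiv k n) ((NagT1 f) 1 (MvPolynomial.X j))).leadingCoeff = 1 := fun j ↦ by
      by_cases h : j = 0
      · simp [h, finSuccEquiv_apply]
      · simp only [aeval_eq_bind₁, bind₁_X_right, if_neg h, one_smul, map_add, map_pow]
        obtain ⟨i, rfl⟩ := Fin.exists_succ_eq.mpr h
        simp [finSuccEquiv_X_succ, finSuccEquiv_X_zero, add_comm]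
    simp only [this, one_pow, Finset.prod_const_one, mul_one]
  exact fun i ↦ pow_zero _

lemma Nag_T_leadingcoeff_isUnit (fne : f ≠ 0) :
    IsUnit (finSuccEquiv k n (NagT f f)).leadingCoeff := by
  obtain ⟨v, vin, vs⟩ := Finset.exists_max_image f.support
    (fun v ↦ (NagT f ((MvPolynomial.monomial v) (MvPolynomial.coeff v f))).degreeOf 0) (MvPolynomial.support_nonempty.mpr fne)
  set h := fun w ↦ (MvPolynomial.monomial w) (MvPolynomial.coeff w f)
  simp only [← natDegree_finSuccEquiv] at vs
  replace vs : ∀ x ∈ f.support \ {v}, (finSuccEquiv k n ((NagT f) (h x))).degree <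
      (finSuccEquiv k n ((NagT f) (h v))).degree := by
    intro x hx
    obtain ⟨h1, h2⟩ := Finset.mem_sdiff.mp hx
    apply degree_lt_degree <| lt_of_le_of_ne (vs x h1) ?_
    simpa only [natDegree_finSuccEquiv]
      using Nag_degreeOf_t_ne_of_ne f _ _ h1 vin <| ne_of_not_mem_cons h2
  have coeff : (finSuccEquiv k n ((NagT f) (h v + ∑ x ∈ f.support \ {v}, h x))).leadingCoeff =
      (finSuccEquiv k n ((NagT f) (h v))).leadingCoeff := by
    simp only [map_add, map_sum]
    rw [add_comm]
    apply leadingCoeff_add_of_degree_lt <| (lt_of_le_of_lt <| degree_sum_le _ _) ?_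
    have h2 : h v ≠ 0 := by simpa [h] using MvPolynomial.mem_support_iff.mp vin
    replace h2 : (finSuccEquiv k n ((NagT f) (h v))) ≠ 0 := fun eq ↦ h2 <|
      by simpa only [map_eq_zero_iff _ (AlgEquiv.injective _)] using eq
    exact (Finset.sup_lt_iff <| Ne.bot_lt (fun x ↦ h2 <| degree_eq_bot.mp x)).mpr vs
  nth_rw 2 [← f.support_sum_monomial_coeff]
  rw [Finset.sum_eq_add_sum_sdiff_singleton_of_mem vin h]
  rw [Nag_leadingCoeff_finSuccEquiv_t] at coeff
  simpa only [coeff, MvPolynomial.algebraMap_eq] using (MvPolynomial.mem_support_iff.mp vin).isUnit.map MvPolynomial.C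

/-- Nagata's trick: make `f` monic in one variable. -/
lemma Nag_exists (fne : f ≠ 0) :
    ∃ E : MvPolynomial (Fin (n + 1)) k ≃ₐ[k] Polynomial (MvPolynomial (Fin n) k),
      ∃ g : Polynomial (MvPolynomial (Fin n) k), g.Monic ∧ Associated (E f) g := by
  obtain ⟨u, hu⟩ := Nag_T_leadingcoeff_isUnit f fne
  refine ⟨(NagT f).trans (finSuccEquiv k n), (finSuccEquiv k n (NagT f f)) * Polynomial.C ((u⁻¹ : (MvPolynomial (Fin n) k)ˣ) : MvPolynomial (Fin n) k), ?_, ?_⟩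
  · unfold Polynomial.Monic
    rw [leadingCoeff_mul, leadingCoeff_C, ← hu]; simp
  · exact ⟨(u⁻¹).map (Polynomial.C : _ →+* Polynomial (MvPolynomial (Fin n) k)).toMonoidHom, rfl⟩
end nag

section tf
open Polynomial

lemma tf_D2 {S : Type*} [CommRing S] [IsDomain S] (D w : S[X]) (hD : D.Monic) (s : S)
    (h : Polynomial.C s ∣ D * w) : Polynomial.C s ∣ w := by
  have key : ∀ q : S[X], Polynomial.C s ∣ q ↔ q.map (Ideal.Quotient.mk (Ideal.span {s})) = 0 := by
    intro q
    rw [Polynomial.C_dvd_iff_dvd_coeff, Polynomial.ext_iff]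
    simp [Ideal.Quotient.eq_zero_iff_mem, Ideal.mem_span_singleton]
  rw [key] at h ⊢
  rw [Polynomial.map_mul] at h
  exact ((hD.map _).mul_right_eq_zero_iff).1 h

lemma tf_D3 {T : Type*} [CommRing T] [IsDomain T] (a b : T[X]) (ha : a.Monic)
    (hab : ∀ w, a ∣ b * w → a ∣ w) : ∃ D : T, D ≠ 0 ∧ Polynomial.C D ∈ Ideal.span {a, b} := by
  have := ha.finite_adjoinRoot
  have hint : IsIntegral T (AdjoinRoot.mk a b) := Algebra.IsIntegral.isIntegral _
  obtain ⟨D, hD, hd⟩ := hint.isAlgebraic.exists_nonzero_dvd (s := AdjoinRoot.mk a b) (by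
    rw [mem_nonZeroDivisors_iff_right]
    intro x hx
    obtain ⟨w, rfl⟩ := AdjoinRoot.mk_surjective x
    rw [mul_comm, ← map_mul, AdjoinRoot.mk_eq_zero] at hx
    exact AdjoinRoot.mk_eq_zero.2 (hab w hx))
  refine ⟨D, hD, ?_⟩
  obtain ⟨x, hx⟩ := hd
  obtain ⟨w, rfl⟩ := AdjoinRoot.mk_surjective x
  rw [AdjoinRoot.algebraMap_eq, AdjoinRoot.of, RingHom.comp_apply, ← map_mul, ← sub_eq_zero] at hx
  erw [← map_sub, AdjoinRoot.mk_eq_zero] at hx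
  obtain ⟨u, hu⟩ := hx
  rw [Ideal.mem_span_pair]
  exact ⟨u, w, by linear_combination -hu⟩

lemma tf_D4 {T : Type*} [CommRing T] [IsDomain T] (a b : T[X]) (ha : a.Monic) (D s : T)
    (hs : s ≠ 0) (hDs : ∀ w : T, s ∣ D * w → s ∣ w) (hD : Polynomial.C D ∈ Ideal.span {a, b})
    (f : T[X]) (hf : Polynomial.C s * f ∈ Ideal.span {a, b}) : f ∈ Ideal.span {a, b} := by
  rw [Ideal.mem_span_pair] at *
  obtain ⟨c', c, hc⟩ := hD
  obtain ⟨w', w, hw⟩ := hf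
  have h1 : D • (w %ₘ a) = s • ((c * f) %ₘ a) := by
    rw [← Polynomial.smul_modByMonic, ← Polynomial.smul_modByMonic, ← sub_eq_zero,
      ← Polynomial.sub_modByMonic, Polynomial.modByMonic_eq_zero_iff_dvd ha,
      Polynomial.smul_eq_C_mul, Polynomial.smul_eq_C_mul]
    refine ⟨c' * w - c * w', ?_⟩
    linear_combination (-w) * hc + c * hw
  have h2 : Polynomial.C s ∣ w %ₘ a := by
    rw [Polynomial.C_dvd_iff_dvd_coeff]
    intro i
    apply hDs
    have := congrArg (fun q => q.coeff i) h1
    simp only [Polynomial.coeff_smul, smul_eq_mul] at this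
    exact ⟨_, this⟩
  obtain ⟨v, hv⟩ := h2
  have h3 := Polynomial.modByMonic_add_div w a
  rw [hv] at h3
  have h4 : a ∣ Polynomial.C s * (f - b * v) := by
    refine ⟨w' + b * (w /ₘ a), ?_⟩
    linear_combination -hw - b * h3
  have h5 : a ∣ f - b * v := by
    rw [← Polynomial.modByMonic_eq_zero_iff_dvd ha] at h4 ⊢
    rw [← Polynomial.smul_eq_C_mul, Polynomial.smul_modByMonic] at h4
    exact (smul_eq_zero.1 h4).resolve_left hs
  obtain ⟨u, hu⟩ := h5
  exact ⟨u, v, by linear_combination -hu⟩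

lemma tf_map {A B : Type*} [CommRing A] [CommRing B] (E : A ≃+* B) (a b f : A) :
    f ∈ Ideal.span {a, b} ↔ E f ∈ Ideal.span {E a, E b} := by
  rw [Ideal.mem_span_pair, Ideal.mem_span_pair]
  constructor
  · rintro ⟨u, v, h⟩; exact ⟨E u, E v, by rw [← h]; simp⟩
  · rintro ⟨u, v, h⟩; exact ⟨E.symm u, E.symm v, by apply E.injective; simp [h]⟩

lemma tf_int {S B : Type*} [CommRing S] [CommRing B] (D : S[X]) (hD : D.Monic) (F : S[X] →+* B)
    (hF : F.IsIntegral) (hFD : F D = 0) : (F.comp Polynomial.C).IsIntegral := by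
  have e3 := hD.quotient_isIntegral (I := Ideal.span {D}) (Ideal.subset_span (by simp))
  let L : (S[X] ⧸ Ideal.span {D}) →+* B := Ideal.Quotient.lift _ F (by
    intro x hx
    rw [Ideal.mem_span_singleton] at hx
    obtain ⟨y, rfl⟩ := hx
    rw [map_mul, hFD, zero_mul])
  have e4 : L.IsIntegral := RingHom.IsIntegral.tower_top (Ideal.Quotient.mk (Ideal.span {D})) L hF
  have := RingHom.IsIntegral.trans _ _ e3 e4
  exact this

lemma tf_main {K : Type*} [Field K] (m : ℕ) (a b : MvPolynomial (Fin (m + 2)) K) (ha : a ≠ 0)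
    (hab : ∀ w, a ∣ b * w → a ∣ w) :
    ∃ φ : MvPolynomial (Fin m) K →ₐ[K] MvPolynomial (Fin (m + 2)) K,
      (∀ s, s ≠ 0 → ∀ f, φ s * f ∈ Ideal.span {a, b} → f ∈ Ideal.span {a, b}) ∧
      ((Ideal.Quotient.mk (Ideal.span {a, b})).comp (φ : MvPolynomial (Fin m) K →+* MvPolynomial (Fin (m + 2)) K)).IsIntegral := by
  obtain ⟨E₁, a', ha', haa⟩ := Nag_exists a ha
  have hJ : Ideal.span {a', E₁ b} = Ideal.span {E₁ a, E₁ b} := by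
    rw [Ideal.span_insert, Ideal.span_insert, Ideal.span_singleton_eq_span_singleton.2 haa]
  obtain ⟨D, hD0, hD⟩ := tf_D3 a' (E₁ b) ha' (by
    intro w hw
    have : E₁ a ∣ E₁ b * w := haa.dvd.trans hw
    obtain ⟨w, rfl⟩ := E₁.surjective w
    rw [← map_mul, map_dvd_iff] at this
    exact haa.symm.dvd.trans ((map_dvd_iff E₁).2 (hab w this)))
  obtain ⟨E₂, D', hD', hDD⟩ := Nag_exists D hD0
  set ψ : MvPolynomial (Fin (m+1)) K →ₐ[K] MvPolynomial (Fin (m+2)) K :=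
    (E₁.symm : _ →ₐ[K] _).comp (IsScalarTower.toAlgHom K (MvPolynomial (Fin (m+1)) K) (Polynomial (MvPolynomial (Fin (m+1)) K))) with hψ
  have hψE : ∀ t, E₁ (ψ t) = Polynomial.C t := by intro t; simp [hψ]
  set χ : MvPolynomial (Fin m) K →ₐ[K] MvPolynomial (Fin (m+1)) K :=
    (E₂.symm : _ →ₐ[K] _).comp (IsScalarTower.toAlgHom K (MvPolynomial (Fin (m)) K) (Polynomial (MvPolynomial (Fin (m)) K))) with hχ
  have hχE : ∀ t, E₂ (χ t) = Polynomial.C t := by intro t; simp [hχ]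
  have hDJ : ψ D ∈ Ideal.span {a, b} := by
    rw [tf_map E₁.toRingEquiv]
    change E₁ (ψ D) ∈ Ideal.span {E₁ a, E₁ b}
    rw [← hJ, hψE]; exact hD
  refine ⟨ψ.comp χ, ?_, ?_⟩
  · intro s hs f hf
    rw [tf_map E₁.toRingEquiv] at hf ⊢
    change E₁ (ψ (χ s) * f) ∈ Ideal.span {E₁ a, E₁ b} at hf
    change E₁ f ∈ Ideal.span {E₁ a, E₁ b}
    rw [← hJ] at hf ⊢
    rw [map_mul, hψE] at hf
    refine tf_D4 a' (E₁ b) ha' D (χ s) ?_ ?_ hD _ hf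
    · intro h
      have := hχE s
      rw [h, map_zero] at this
      exact hs (Polynomial.C_eq_zero.1 this.symm)
    · intro w hw
      rw [← map_dvd_iff E₂, hχE] at hw ⊢
      refine tf_D2 D' _ hD' s (hw.trans ?_)
      rw [map_mul]
      exact mul_dvd_mul hDD.dvd dvd_rfl
  · set J := Ideal.span {a, b}
    have e1 : ((Ideal.Quotient.mk J).comp (ψ : MvPolynomial (Fin (m+1)) K →+* MvPolynomial (Fin (m+2)) K)).IsIntegral := by
      have h0 := ha'.quotient_isIntegral (I := Ideal.span {a', E₁ b}) (Ideal.subset_span (by simp))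
      set J' := Ideal.span {a', E₁ b}
      have h1 : J' ≤ J.comap E₁.symm.toRingEquiv := by
        intro x hx
        rw [Ideal.mem_comap, tf_map E₁.toRingEquiv]
        change E₁ (E₁.symm x) ∈ Ideal.span {E₁ a, E₁ b}
        rw [← hJ]; simpa using hx
      let L : (MvPolynomial (Fin (m+1)) K)[X] ⧸ J' →+* MvPolynomial (Fin (m+2)) K ⧸ J :=
        Ideal.quotientMap J (E₁.symm.toRingEquiv : _ →+* _) h1
      have hL : Function.Surjective L := Ideal.quotientMap_surjective (E₁.symm.surjective)
      have := RingHom.IsIntegral.trans _ _ h0 (RingHom.isIntegral_of_surjective L hL)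
      exact this
    set F := ((Ideal.Quotient.mk J).comp (ψ : MvPolynomial (Fin (m+1)) K →+* _)).comp (E₂.symm.toRingEquiv).toRingHom with hF
    have e2 : F.IsIntegral :=
      RingHom.IsIntegral.trans _ _ (RingHom.isIntegral_of_surjective _ E₂.symm.surjective) e1
    have hFD : F D' = 0 := by
      obtain ⟨y, hy⟩ := hDD.dvd
      rw [hy, map_mul]
      have : F (E₂ D) = 0 := by
        simp only [hF, RingHom.comp_apply]
        rw [Ideal.Quotient.eq_zero_iff_mem]
        simpa using hDJ
      rw [this, zero_mul]
    exact tf_int D' hD' F e2 hFD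
end tf

section partB
open MonomialOrder

noncomputable def Hf {K : Type*} [Field K] {N : ℕ} (I : Ideal (MvPolynomial (Fin N) K)) (n : ℕ) : ℕ :=
  Module.finrank K ((restrictTotalDegree (Fin N) K n).map (Ideal.Quotient.mkₐ K I).toLinearMap)

def stdSet {K : Type*} [Field K] {N : ℕ} (I : Ideal (MvPolynomial (Fin N) K)) : Set (Fin N →₀ ℕ) :=
  {v | ∃ f ∈ I, f ≠ 0 ∧ degLex.degree f = v}

lemma stdSet_upper {K : Type*} [Field K] {N : ℕ} (I : Ideal (MvPolynomial (Fin N) K)) :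
    IsUpperSet (stdSet I) := by
  rintro v w hvw ⟨f, hf, hf0, rfl⟩
  have h1 : (monomial (w - degLex.degree f) (1 : K)) ≠ 0 := by simp
  refine ⟨monomial (w - degLex.degree f) 1 * f, I.mul_mem_left _ hf, mul_ne_zero h1 hf0, ?_⟩
  rw [degLex.degree_mul h1 hf0]
  classical
  rw [degLex.degree_monomial]
  simp [tsub_add_cancel_of_le hvw]

lemma finrank_restrictSupport {K : Type*} [Field K] {N : ℕ} (s : Set (Fin N →₀ ℕ)) :
    Module.finrank K (restrictSupport K s) = Nat.card s :=
  Module.finrank_eq_nat_card_basis (basisRestrictSupport K s)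

lemma finrank_map_of_disj {K V W : Type*} [Field K] [AddCommGroup V] [Module K V] [AddCommGroup W]
    [Module K W] (f : V →ₗ[K] W) (S : Submodule K V) (h : ∀ x ∈ S, f x = 0 → x = 0) :
    Module.finrank K (S.map f) = Module.finrank K S := by
  have hr : LinearMap.range (f.domRestrict S) = S.map f := LinearMap.range_domRestrict _ _
  rw [← hr]
  apply LinearMap.finrank_range_of_inj
  rw [← LinearMap.ker_eq_bot, LinearMap.ker_eq_bot']
  intro x hx
  exact Subtype.ext (h x x.2 hx)

lemma Hf_eq {K : Type*} [Field K] {N : ℕ} (I : Ideal (MvPolynomial (Fin N) K)) (n : ℕ) :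
    Hf I n = Nat.card {v : Fin N →₀ ℕ // v ∉ stdSet I ∧ v.degree ≤ n} := by
  have key : (restrictTotalDegree (Fin N) K n).map (Ideal.Quotient.mkₐ K I).toLinearMap =
      (restrictSupport K {v | v ∉ stdSet I ∧ v.degree ≤ n}).map
        (Ideal.Quotient.mkₐ K I).toLinearMap := by
    apply le_antisymm
    · rintro _ ⟨f, hf, rfl⟩
      have hf' : f.totalDegree ≤ n := (mem_restrictTotalDegree _ _ _).1 hf
      obtain ⟨g, r, h1, h2, h3⟩ := degLex.div_set (B := {b | b ∈ I ∧ b ≠ 0})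
        (fun b hb => by simpa using hb.2) f
      have hlc : Finsupp.linearCombination _ (fun (b : {b | b ∈ I ∧ b ≠ 0}) ↦ (b : MvPolynomial (Fin N) K)) g ∈ I := by
        rw [Finsupp.linearCombination_apply]
        exact Ideal.sum_mem _ fun b _ => I.mul_mem_left _ b.2.1
      have hdeg : (Finsupp.linearCombination _ (fun (b : {b | b ∈ I ∧ b ≠ 0}) ↦ (b : MvPolynomial (Fin N) K)) g).totalDegree ≤ n := by
        rw [Finsupp.linearCombination_apply, Finsupp.sum]
        refine totalDegree_finsetSum_le fun b _ => ?_
        rw [smul_eq_mul, mul_comm]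
        exact (degLex_totalDegree_monotone (h2 b)).trans hf'
      refine ⟨r, ?_, ?_⟩
      · rw [SetLike.mem_coe, mem_restrictSupport_iff]
        intro c hc
        refine ⟨?_, ?_⟩
        · rintro ⟨b, hb, hb0, rfl⟩
          exact h3 _ hc b ⟨hb, hb0⟩ le_rfl
        · have hr : r = f - _ := (sub_eq_of_eq_add' h1).symm
          have : r.totalDegree ≤ n := by
            rw [hr]
            exact (totalDegree_sub _ _).trans (max_le hf' hdeg)
          exact (le_totalDegree hc).trans this
      · conv_rhs => rw [h1]
        simp only [AlgHom.toLinearMap_apply, map_add]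
        rw [show (Ideal.Quotient.mkₐ K I) _ = 0 from Ideal.Quotient.eq_zero_iff_mem.2 hlc, zero_add]
    · apply Submodule.map_mono
      apply restrictSupport_mono
      intro v hv
      exact hv.2
  rw [Hf, key, finrank_map_of_disj, finrank_restrictSupport]
  · rfl
  · intro x hx h0
    by_contra hx0
    have hxI : x ∈ I := Ideal.Quotient.eq_zero_iff_mem.1 h0
    exact (hx (degLex.degree_mem_support hx0)).1 ⟨x, hxI, hx0, rfl⟩

lemma Hf_evPoly {K : Type*} [Field K] {N : ℕ} (I : Ideal (MvPolynomial (Fin N) K)) :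
    EvPoly (Hf I) := by
  have hU : IsUpperSet {v : Fin N → ℕ | Finsupp.equivFunOnFinite.symm v ∈ stdSet I} := by
    intro v w hvw hv
    exact stdSet_upper I (fun i => hvw i) hv
  refine (cntStd_evPoly _ hU).congr (Eventually.of_forall fun n => ?_)
  rw [Hf_eq, cntStd]
  refine Nat.card_congr ((Finsupp.equivFunOnFinite).subtypeEquiv fun v => ?_)
  simp [Finsupp.degree_eq_sum]

end partB

section partC

lemma length_one_step {K : Type*} [Field K] {N : ℕ} (M : Type*) [AddCommGroup M]
    [Module (MvPolynomial (Fin N) K) M] [Module K M] [IsScalarTower K (MvPolynomial (Fin N) K) M]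
    (h : ∀ r ∈ idealOfVars (Fin N) K, ∀ x : M, r • x = 0) :
    Module.length (MvPolynomial (Fin N) K) M = Module.length K M := by
  have hs : ∀ (r : MvPolynomial (Fin N) K) (x : M), r • x = (coeff 0 r) • x := by
    intro r x
    have h1 : r - C (coeff 0 r) ∈ idealOfVars (Fin N) K := by
      rw [← pow_one (idealOfVars (Fin N) K), mem_pow_idealOfVars_iff']
      intro y hy
      have : y = 0 := by
        rw [← Finsupp.degree_eq_zero_iff]; omega
      subst this
      simp
    have h2 := h _ h1 x
    rw [sub_smul, sub_eq_zero] at h2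
    rw [h2, ← algebraMap_eq, algebraMap_smul]
  apply WithBot.coe_injective
  rw [Module.coe_length, Module.coe_length]
  refine Order.krullDim_eq_of_orderIso
    { toFun := fun S => S.restrictScalars K
      invFun := fun S => { S with smul_mem' := fun r x hx => by
                                    rw [hs]; exact S.smul_mem _ hx }
      left_inv := fun S => rfl
      right_inv := fun S => rfl
      map_rel_iff' := Iff.rfl }

lemma length_eq_lengthK {K : Type*} [Field K] {N : ℕ} (k : ℕ) : ∀ (M : Type u) [AddCommGroup M]
    [Module (MvPolynomial (Fin N) K) M] [Module K M] [IsScalarTower K (MvPolynomial (Fin N) K) M]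
    (_ : ∀ r ∈ idealOfVars (Fin N) K ^ k, ∀ x : M, r • x = 0),
    Module.length (MvPolynomial (Fin N) K) M = Module.length K M := by
  induction k with
  | zero =>
    intro M _ _ _ _ h
    have : Subsingleton M := by
      refine ⟨fun a b => ?_⟩
      have := fun x => h 1 (by simp) x
      simp only [one_smul] at this
      rw [this a, this b]
    simp
  | succ k ih =>
    intro M _ _ _ _ h
    let S : Submodule (MvPolynomial (Fin N) K) M := idealOfVars (Fin N) K • ⊤
    rw [Module.length_eq_add_of_exact S.subtype S.mkQ S.injective_subtype S.mkQ_surjective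
      (LinearMap.exact_subtype_mkQ S),
      Module.length_eq_add_of_exact (R := K) (M := M) (S.subtype.restrictScalars K)
        (S.mkQ.restrictScalars K) S.injective_subtype S.mkQ_surjective
      (LinearMap.exact_subtype_mkQ S)]
    congr 1
    · apply ih
      rintro r hr ⟨x, hx⟩
      apply Subtype.ext
      change r • x = 0
      induction hx using Submodule.smul_induction_on' with
      | smul a ha y hy =>
        rw [smul_smul]
        exact h _ (by rw [pow_succ]; exact Ideal.mul_mem_mul hr ha) _
      | add x hx y hy h1 h2 => rw [smul_add, h1, h2, add_zero]
    · apply length_one_step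
      intro r hr x
      obtain ⟨x, rfl⟩ := S.mkQ_surjective x
      rw [← map_smul]
      exact (Submodule.Quotient.mk_eq_zero _).2 (Submodule.smul_mem_smul hr trivial)

instance finite_rtd {K : Type*} [Field K] {N : ℕ} (n : ℕ) :
    Module.Finite K (restrictTotalDegree (Fin N) K n) := by
  have : Finite {v : Fin N →₀ ℕ | (v.sum fun _ e => e) ≤ n} := by
    have := finite_std (N := N) (∅ : Set (Fin N → ℕ)) n
    refine Finite.of_injective (β := {v : Fin N → ℕ // v ∉ (∅ : Set (Fin N → ℕ)) ∧ ∑ i, v i ≤ n})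
      (fun v => ⟨v.1, by simp, ?_⟩) ?_
    · have := v.2
      simp only [Set.mem_ofPred_eq] at this
      rwa [Finsupp.sum_fintype _ _ (by simp)] at this
    · intro v w h
      apply Subtype.ext
      exact DFunLike.coe_injective (congrArg Subtype.val h)
  exact Module.Finite.of_basis (basisRestrictSupport K _)

/-- truncation by total degree ≤ n -/
lemma exists_trunc {K : Type*} [Field K] {N : ℕ} (p : Ideal (MvPolynomial (Fin N) K))
    (hp : ∀ f ∈ p, ∀ i, homogeneousComponent i f ∈ p) (n : ℕ) (f : MvPolynomial (Fin N) K) :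
    ∃ g ∈ restrictTotalDegree (Fin N) K n, f - g ∈ idealOfVars (Fin N) K ^ (n+1) ∧ (f ∈ p → g ∈ p) := by
  refine ⟨∑ i ∈ Finset.range (n+1), homogeneousComponent i f, ?_, ?_, ?_⟩
  · refine Submodule.sum_mem _ fun i hi => ?_
    rw [mem_restrictTotalDegree]
    exact (homogeneousComponent_isHomogeneous i f).totalDegree_le.trans (by simp at hi; omega)
  · rw [mem_pow_idealOfVars_iff']
    intro x hx
    rw [coeff_sub, coeff_sum]
    simp only [coeff_homogeneousComponent]
    simp [hx]
  · intro hf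
    refine Ideal.sum_mem _ fun i _ => ?_
    exact hp f hf i

lemma length_eq_Hf {K : Type u} [Field K] {N : ℕ} (p : Ideal (MvPolynomial (Fin N) K))
    (hp : ∀ f ∈ p, ∀ i, homogeneousComponent i f ∈ p) (n : ℕ) :
    moduleLength (MvPolynomial (Fin N) K) (MvPolynomial (Fin N) K ⧸ (p ⊔ maxIdeal K (Fin N) ^ (n+1))) =
      ((Hf p n : ℕ∞) : WithBot ℕ∞) := by
  set J := p ⊔ maxIdeal K (Fin N) ^ (n+1) with hJ
  rw [moduleLength, ← Module.coe_length, length_eq_lengthK (n+1)]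
  · have hsurj : Function.Surjective ((Ideal.Quotient.mkₐ K J).toLinearMap.domRestrict
        (restrictTotalDegree (Fin N) K n)) := by
      intro x
      obtain ⟨f, rfl⟩ := Ideal.Quotient.mk_surjective x
      obtain ⟨g, hg, h1, -⟩ := exists_trunc p hp n f
      refine ⟨⟨g, hg⟩, ?_⟩
      change Ideal.Quotient.mk J g = Ideal.Quotient.mk J f
      rw [eq_comm, Ideal.Quotient.eq]
      exact Ideal.mem_sup_right h1
    have hfin : Module.Finite K (MvPolynomial (Fin N) K ⧸ J) := Module.Finite.of_surjective _ hsurj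
    rw [Module.length_eq_finrank]
    congr 2
    rw [Hf, ← LinearMap.range_domRestrict]
    have e1 := LinearMap.finrank_range_add_finrank_ker ((Ideal.Quotient.mkₐ K J).toLinearMap.domRestrict
        (restrictTotalDegree (Fin N) K n))
    have e2 := LinearMap.finrank_range_add_finrank_ker ((Ideal.Quotient.mkₐ K p).toLinearMap.domRestrict
        (restrictTotalDegree (Fin N) K n))
    have e3 : LinearMap.ker ((Ideal.Quotient.mkₐ K J).toLinearMap.domRestrict
        (restrictTotalDegree (Fin N) K n)) = LinearMap.ker ((Ideal.Quotient.mkₐ K p).toLinearMap.domRestrict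
        (restrictTotalDegree (Fin N) K n)) := by
      ext ⟨f, hf⟩
      rw [LinearMap.mem_ker, LinearMap.mem_ker]
      change Ideal.Quotient.mk J f = 0 ↔ Ideal.Quotient.mk p f = 0
      rw [Ideal.Quotient.eq_zero_iff_mem, Ideal.Quotient.eq_zero_iff_mem]
      refine ⟨fun h => ?_, fun h => Ideal.mem_sup_left h⟩
      obtain ⟨a, ha, b, hb, hab⟩ := Submodule.mem_sup.1 h
      obtain ⟨a', ha', h1, h2⟩ := exists_trunc p hp n a
      have hfa : f - a' ∈ idealOfVars (Fin N) K ^ (n+1) := by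
        have : f - a' = (a - a') + b := by rw [← hab]; ring
        rw [this]
        exact Ideal.add_mem _ h1 hb
      have h0 : f - a' = 0 := by
        ext x
        rw [mem_pow_idealOfVars_iff'] at hfa
        by_cases hx : x.degree < n + 1
        · simpa using hfa x hx
        · have := (mem_restrictTotalDegree _ _ _).1 (Submodule.sub_mem _ hf ha')
          rw [coeff_zero]
          apply coeff_eq_zero_of_totalDegree_lt
          have hd : x.degree = ∑ i ∈ x.support, x i := rfl
          omega
      rw [sub_eq_zero.1 h0]
      exact h2 ha
    rw [e3] at e1
    rw [LinearMap.range_eq_top.2 hsurj, finrank_top] at e1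
    omega
  · intro r hr x
    obtain ⟨f, rfl⟩ := Ideal.Quotient.mk_surjective x
    rw [← Ideal.Quotient.mk_eq_mk, ← Submodule.Quotient.mk_smul, Ideal.Quotient.mk_eq_mk,
      Ideal.Quotient.eq_zero_iff_mem]
    exact Ideal.mul_mem_right _ _ (Ideal.mem_sup_right hr)


lemma homog_min {K : Type*} [Field K] {N : ℕ} {ι : Type*} (g : ι → MvPolynomial (Fin N) K) (d : ℕ)
    (hg : ∀ i, (g i).IsHomogeneous d) (p : Ideal (MvPolynomial (Fin N) K))
    (hp : p ∈ (Ideal.span (Set.range g)).minimalPrimes) :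
    ∀ f ∈ p, ∀ i, homogeneousComponent i f ∈ p := by
  let _ := MvPolynomial.gradedAlgebra (σ := Fin N) (R := K)
  have hprime : p.IsPrime := hp.1.1
  have hI : (Ideal.span (Set.range g)).IsHomogeneous (homogeneousSubmodule (Fin N) K) := by
    apply Ideal.homogeneous_span
    rintro _ ⟨i, rfl⟩
    exact ⟨d, hg i⟩
  have h1 := hprime.homogeneousCore (𝒜 := homogeneousSubmodule (Fin N) K)
  have h2 : Ideal.span (Set.range g) ≤ (Ideal.homogeneousCore (homogeneousSubmodule (Fin N) K) p).toIdeal := by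
    rw [← hI.toIdeal_homogeneousCore_eq_self]
    exact Ideal.homogeneousCore_mono _ hp.1.2
  have h3 := hp.2 ⟨h1, h2⟩ (Ideal.toIdeal_homogeneousCore_le _ _)
  have h4 : p = (Ideal.homogeneousCore (homogeneousSubmodule (Fin N) K) p).toIdeal :=
    le_antisymm h3 (Ideal.toIdeal_homogeneousCore_le _ _)
  have h5 : p.IsHomogeneous (homogeneousSubmodule (Fin N) K) := by
    rw [h4]; exact HomogeneousIdeal.isHomogeneous _
  intro f hf i
  exact (mem_iff_homogeneousComponent_mem h5 f).1 hf i

end partC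

section partE

lemma idealHeight_eq {R : Type*} [CommRing R] (I : Ideal R) : idealHeight I = I.height := by
  apply le_antisymm
  · rw [Ideal.height_eq_inf_minimalPrimes]
    refine le_iInf₂ fun J hJ => ?_
    have := PrimeSpectrum.height_eq_orderHeight ⟨J, hJ.1.1⟩
    rw [show J.height = _ from this]
    exact iInf₂_le (⟨J, hJ.1.1⟩ : PrimeSpectrum R) hJ.1.2
  · refine le_iInf₂ fun J hJ => ?_
    rw [← PrimeSpectrum.height_eq_orderHeight]
    exact Ideal.height_mono hJ

variable {K : Type*} [Field K] {N : ℕ}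

lemma isUnit_of_td_zero {f : MvPolynomial (Fin N) K} (hf : f ≠ 0) (h : f.totalDegree = 0) :
    IsUnit f := by
  rw [totalDegree_eq_zero_iff_eq_C] at h
  rw [h]
  refine IsUnit.map C (IsUnit.mk0 _ fun h0 => hf ?_)
  rw [h, h0, C_0]

lemma choose_ab {n : ℕ} (g : Fin n → MvPolynomial (Fin N) K) (hg : ∀ i, (g i).IsHomogeneous 2)
    (h0 : ∃ i, g i ≠ 0) (hirr : ∀ π, Irreducible π → ∃ i, ¬ π ∣ g i) :
    ∃ a b, a ∈ Ideal.span (Set.range g) ∧ b ∈ Ideal.span (Set.range g) ∧ a.totalDegree = 2 ∧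
      b.totalDegree = 2 ∧ a ≠ 0 ∧ b ≠ 0 ∧ IsRelPrime a b := by
  obtain ⟨i0, hi0⟩ := h0
  have hmem : ∀ i, g i ∈ Ideal.span (Set.range g) := fun i => Ideal.subset_span ⟨i, rfl⟩
  have hda : (g i0).totalDegree = 2 := (hg i0).totalDegree hi0
  have hnu : ¬ IsUnit (g i0) := by
    intro hu
    rw [isUnit_iff_totalDegree_of_isReduced] at hu
    omega
  obtain ⟨π1, hπ1, c, hc⟩ := WfDvdMonoid.exists_irreducible_factor hnu hi0
  have hc0 : c ≠ 0 := by rintro rfl; simp at hc; exact hi0 hc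
  -- the key: two irreducibles controlling all irreducible factors
  obtain ⟨π2, hπ2, hall⟩ : ∃ π2, Irreducible π2 ∧ ∀ π, Irreducible π → π ∣ g i0 → π1 ∣ π ∨ π2 ∣ π := by
    by_cases hcu : IsUnit c
    · refine ⟨π1, hπ1, fun π hπ hd => Or.inl ?_⟩
      rw [hc] at hd
      have := hcu.dvd_mul_right.1 hd
      exact (hπ.dvd_comm hπ1).1 this
    · obtain ⟨π2, hπ2, d, hd⟩ := WfDvdMonoid.exists_irreducible_factor hcu hc0
      have hd0 : d ≠ 0 := by rintro rfl; simp at hd; exact hc0 hd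
      have e1 := totalDegree_mul_of_isDomain hπ1.ne_zero hc0
      have e2 := totalDegree_mul_of_isDomain hπ2.ne_zero hd0
      rw [← hc] at e1
      rw [← hd] at e2
      have e3 : π1.totalDegree ≠ 0 := fun h => hπ1.not_isUnit (isUnit_of_td_zero hπ1.ne_zero h)
      have e4 : π2.totalDegree ≠ 0 := fun h => hπ2.not_isUnit (isUnit_of_td_zero hπ2.ne_zero h)
      have hdu : IsUnit d := isUnit_of_td_zero hd0 (by omega)
      refine ⟨π2, hπ2, fun π hπ hdv => ?_⟩
      rw [hc, hd] at hdv
      rcases hπ.prime.dvd_or_dvd hdv with h | h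
      · exact Or.inl ((hπ.dvd_comm hπ1).1 h)
      · exact Or.inr ((hπ.dvd_comm hπ2).1 (hdu.dvd_mul_right.1 h))
  obtain ⟨b, hbI, hbh, hb1, hb2⟩ : ∃ b ∈ Ideal.span (Set.range g), b.IsHomogeneous 2 ∧ ¬ π1 ∣ b ∧ ¬ π2 ∣ b := by
    obtain ⟨i, hi⟩ := hirr π1 hπ1
    obtain ⟨j, hj⟩ := hirr π2 hπ2
    by_cases h1 : π2 ∣ g i
    · by_cases h2 : π1 ∣ g j
      · refine ⟨g i + g j, Ideal.add_mem _ (hmem i) (hmem j), (hg i).add (hg j), ?_, ?_⟩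
        · rwa [← dvd_add_left h2] at hi
        · rwa [← dvd_add_right h1] at hj
      · exact ⟨g j, hmem j, hg j, h2, hj⟩
    · exact ⟨g i, hmem i, hg i, hi, h1⟩
  have hb0 : b ≠ 0 := by rintro rfl; simp at hb1
  refine ⟨g i0, b, hmem i0, hbI, hda, hbh.totalDegree hb0, hi0, hb0, ?_⟩
  apply isRelPrime_of_no_nonunits_factors (fun h => hi0 h.1)
  intro z hz hz0 hza hzb
  obtain ⟨π, hπ, hπz⟩ := WfDvdMonoid.exists_irreducible_factor hz hz0
  rcases hall π hπ (hπz.trans hza) with h | h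
  · exact hb1 (h.trans (hπz.trans hzb))
  · exact hb2 (h.trans (hπz.trans hzb))

lemma height_span_irred {π : MvPolynomial (Fin N) K} (h : Irreducible π) :
    (Ideal.span {π}).height ≤ 1 := by
  have hp : (Ideal.span {π}).IsPrime := (Ideal.span_singleton_prime h.ne_zero).2 h.prime
  apply Ideal.height_le_one_of_isPrincipal_of_mem_minimalPrimes (Ideal.span {π})
  rw [Ideal.minimalPrimes_eq_subsingleton_self]
  rfl

lemma two_le_height {a b : MvPolynomial (Fin N) K} (ha : a ≠ 0) (hab : IsRelPrime a b) :
    2 ≤ (Ideal.span {a, b}).height := by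
  rw [Ideal.height_eq_inf_minimalPrimes]
  refine le_iInf₂ fun Q hQ => ?_
  have hQp : Q.IsPrime := hQ.1.1
  have haQ : a ∈ Q := hQ.1.2 (Ideal.subset_span (by simp))
  have hbQ : b ∈ Q := hQ.1.2 (Ideal.subset_span (by simp))
  obtain ⟨π, hπ, hd⟩ : ∃ π ∈ Q, Irreducible π ∧ π ∣ a := by
    obtain ⟨f, hf1, hf2⟩ := UniqueFactorizationMonoid.exists_prime_factors a ha
    obtain ⟨u, hu⟩ := hf2.symm
    have : f.prod ∈ Q := by rw [← hu]; exact Ideal.mul_mem_right _ _ haQ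
    obtain ⟨π, hπf, hπQ⟩ := (hQp.multiset_prod_mem_iff_exists_mem f).1 this
    exact ⟨π, hπQ, (hf1 π hπf).irreducible, (Multiset.dvd_prod hπf).trans hf2.dvd⟩
  have hp : (Ideal.span {π}).IsPrime := (Ideal.span_singleton_prime hd.1.ne_zero).2 hd.1.prime
  have h1 : (⊥ : Ideal (MvPolynomial (Fin N) K)) < Ideal.span {π} := by
    rw [bot_lt_iff_ne_bot, Ne, Ideal.span_singleton_eq_bot]
    exact hd.1.ne_zero
  have h2 : Ideal.span {π} < Q := by
    refine lt_of_le_of_ne ((Ideal.span_singleton_le_iff_mem _).2 hπ) ?_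
    intro h
    rw [← h, Ideal.mem_span_singleton] at hbQ
    exact hd.1.not_isUnit (hab hd.2 hbQ)
  have h3 := Ideal.height_add_one_le_of_lt_of_isPrime h1
  have h4 := Ideal.height_add_one_le_of_lt_of_isPrime h2
  calc (2 : ℕ∞) = 0 + 1 + 1 := by norm_num
    _ ≤ (⊥ : Ideal (MvPolynomial (Fin N) K)).height + 1 + 1 := by gcongr; exact zero_le
    _ ≤ _ := (add_le_add_left h3 1).trans h4

end partE

section partG

lemma dim_mv {K : Type*} [Field K] (m : ℕ) :
    ringKrullDim (MvPolynomial (Fin m) K) = m := by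
  rw [MvPolynomial.ringKrullDim_of_isNoetherianRing, ringKrullDim_eq_zero_of_field]
  simp

lemma dim_le {S T : Type*} [CommRing S] [CommRing T] (f : S →+* T) (hint : f.IsIntegral) :
    ringKrullDim T ≤ ringKrullDim S := by
  algebraize [f]
  refine Order.krullDim_le_of_strictMono (fun q => PrimeSpectrum.comap (algebraMap S T) q) ?_
  intro q q' h
  rw [← PrimeSpectrum.asIdeal_lt_asIdeal] at h ⊢
  exact Ideal.IsIntegral.comap_lt_comap h

lemma dim_ge {S T : Type*} [CommRing S] [IsDomain S] [CommRing T] [IsDomain T] (f : S →+* T)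
    (hinj : Function.Injective f) (hint : f.IsIntegral) :
    ringKrullDim S ≤ ringKrullDim T := by
  algebraize [f]
  rw [ringKrullDim, Order.krullDim]
  refine iSup_le fun l => ?_
  by_cases hl : l.head.asIdeal = ⊥
  · have : (⊥ : Ideal T).LiesOver l.head.asIdeal := ⟨by
      rw [hl]; ext x; simp [Ideal.under, RingHom.algebraMap_toAlgebra]
      exact (map_eq_zero_iff f hinj).symm⟩
    obtain ⟨L, hL, -⟩ := Ideal.exists_ltSeries_of_hasGoingUp l (⊥ : Ideal T)
    rw [← hL]
    exact Order.LTSeries.length_le_krullDim L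
  · have hlt : (⟨⊥, Ideal.isPrime_bot⟩ : PrimeSpectrum S) < l.head := by
      rw [← PrimeSpectrum.asIdeal_lt_asIdeal]
      exact bot_lt_iff_ne_bot.2 hl
    let l' := l.cons ⟨⊥, Ideal.isPrime_bot⟩ hlt
    have : (⊥ : Ideal T).LiesOver l'.head.asIdeal := ⟨by
      have : l'.head.asIdeal = ⊥ := by simp [l']
      rw [this]; ext x; simp [Ideal.under, RingHom.algebraMap_toAlgebra]
      exact (map_eq_zero_iff f hinj).symm⟩
    obtain ⟨L, hL, -⟩ := Ideal.exists_ltSeries_of_hasGoingUp l' (⊥ : Ideal T)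
    refine le_trans ?_ (Order.LTSeries.length_le_krullDim L)
    rw [hL]
    have : l.length ≤ l'.length := by simp [l']
    exact_mod_cast this

lemma dim_eq {K : Type*} [Field K] (m : ℕ) {T : Type*} [CommRing T] [IsDomain T]
    (f : MvPolynomial (Fin m) K →+* T)
    (hinj : Function.Injective f) (hint : f.IsIntegral) :
    ringKrullDim T = m := by
  rw [← dim_mv (K := K)]
  exact le_antisymm (dim_le f hint) (dim_ge f hinj hint)

end partG

section partF1

lemma cntStd_empty (N : ℕ) : ∀ n, cntStd (∅ : Set (Fin N → ℕ)) n = (n + N).choose N := by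
  induction N with
  | zero =>
    intro n
    simp [cntStd]
  | succ N ih =>
    intro n
    rw [cntStd_succ]
    have : ∀ j, {w : Fin N → ℕ | (Fin.cons j w : Fin (N+1) → ℕ) ∈ (∅ : Set (Fin (N+1) → ℕ))} = ∅ := by
      intro j; ext; simp
    simp only [this, ih]
    rw [← Finset.sum_range_reflect]
    have h2 : ∀ j ∈ Finset.range (n+1), (n - (n + 1 - 1 - j) + N).choose N = (j + N).choose N := by
      intro j hj
      rw [Finset.mem_range] at hj
      congr 1; omega
    rw [Finset.sum_congr rfl h2, Nat.sum_range_add_choose]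
    congr 1

lemma finrank_rtd {K : Type*} [Field K] (N n : ℕ) :
    Module.finrank K (restrictTotalDegree (Fin N) K n) = (n + N).choose N := by
  rw [← cntStd_empty]
  unfold restrictTotalDegree
  rw [finrank_restrictSupport, cntStd]
  refine Nat.card_congr (Finsupp.equivFunOnFinite.subtypeEquiv ?_)
  intro v
  simp [Finsupp.sum_fintype]

end partF1


lemma binom_ineq (x m : ℕ) : (x+4).choose (m+2) + x.choose (m+2) ≤ 2 * (x+2).choose (m+2) + 4 * (x+2).choose m := by
  have e1 := Nat.choose_succ_succ (x+3) (m+1)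
  have e2 := Nat.choose_succ_succ (x+2) (m+1)
  have e3 := Nat.choose_succ_succ (x+1) (m+1)
  have e4 := Nat.choose_succ_succ (x) (m+1)
  have f1 := Nat.choose_succ_succ (x+2) m
  have f2 := Nat.choose_succ_succ (x+1) m
  have f3 := Nat.choose_succ_succ (x) m
  have g1 : x.choose m ≤ (x+2).choose m := Nat.choose_le_choose _ (by omega)
  have g2 : (x+1).choose m ≤ (x+2).choose m := Nat.choose_le_choose _ (by omega)
  simp only [Nat.succ_eq_add_one, add_assoc, Nat.reduceAdd] at *
  omega


section partF2
variable {K : Type*} [Field K]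

lemma phi_deg {m N : ℕ} (φ : MvPolynomial (Fin m) K →ₐ[K] MvPolynomial (Fin N) K) :
    ∃ D, 1 ≤ D ∧ ∀ k, ∀ x ∈ restrictTotalDegree (Fin m) K k,
      φ x ∈ restrictTotalDegree (Fin N) K (D * k) := by
  refine ⟨1 + ∑ i, (φ (X i)).totalDegree, by omega, ?_⟩
  intro k x hx
  rw [mem_restrictTotalDegree] at hx
  set D := 1 + ∑ i, (φ (X i)).totalDegree with hD
  have hDi : ∀ i, (φ (X i)).totalDegree ≤ D := fun i => by
    have := Finset.single_le_sum (f := fun i => (φ (X i)).totalDegree) (fun _ _ => Nat.zero_le _)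
      (Finset.mem_univ i)
    omega
  rw [x.as_sum, map_sum]
  refine Submodule.sum_mem _ fun v hv => ?_
  rw [mem_restrictTotalDegree, monomial_eq, map_mul, Finsupp.prod_fintype _ _ (by simp), map_prod]
  have hC : φ (C (coeff v x)) = C (coeff v x) := φ.commutes _
  rw [hC]
  refine (totalDegree_mul _ _).trans ?_
  rw [totalDegree_C, zero_add]
  refine (totalDegree_finsetProd _ _).trans ?_
  have h1 : ∑ i, v i ≤ k := by
    have := le_totalDegree hv
    rw [Finsupp.sum_fintype _ _ (by simp)] at this
    omega
  calc ∑ i, (φ (X i ^ v i)).totalDegree ≤ ∑ i, v i * D := by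
        refine Finset.sum_le_sum fun i _ => ?_
        rw [map_pow]
        exact (totalDegree_pow _ _).trans (Nat.mul_le_mul_left _ (hDi i))
    _ = D * ∑ i, v i := by rw [← Finset.sum_mul, mul_comm]
    _ ≤ D * k := Nat.mul_le_mul_left _ h1

lemma lower_bd {m N : ℕ} (φ : MvPolynomial (Fin m) K →ₐ[K] MvPolynomial (Fin N) K)
    (p : Ideal (MvPolynomial (Fin N) K)) (hp : ∀ s, φ s ∈ p → s = 0) (D : ℕ)
    (hD : ∀ k, ∀ x ∈ restrictTotalDegree (Fin m) K k, φ x ∈ restrictTotalDegree (Fin N) K (D * k))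
    (k : ℕ) : (k + m).choose m ≤ Hf p (D * k) := by
  rw [← finrank_rtd (K := K)]
  rw [← finrank_map_of_disj ((Ideal.Quotient.mkₐ K p).comp φ).toLinearMap
    (restrictTotalDegree (Fin m) K k)]
  · unfold Hf
    refine Submodule.finrank_mono ?_
    rintro _ ⟨x, hx, rfl⟩
    exact ⟨φ x, hD k x hx, rfl⟩
  · intro x _ hx
    apply hp
    simpa [Ideal.Quotient.eq_zero_iff_mem] using hx

lemma Hf_add {N : ℕ} (p : Ideal (MvPolynomial (Fin N) K)) (n : ℕ) :
    Hf p n + Module.finrank K ↥(restrictTotalDegree (Fin N) K n ⊓ p.restrictScalars K) =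
      (n + N).choose N := by
  rw [← finrank_rtd (K := K)]
  have h := LinearMap.finrank_range_add_finrank_ker
    ((Ideal.Quotient.mkₐ K p).toLinearMap.domRestrict (restrictTotalDegree (Fin N) K n))
  rw [← h]
  congr 1
  · unfold Hf
    rw [LinearMap.range_domRestrict]
  · rw [LinearMap.ker_domRestrict]
    rw [← Submodule.finrank_map_subtype_eq, Submodule.map_comap_subtype]
    have hk : p.restrictScalars K = (Ideal.Quotient.mkₐ K p).toLinearMap.ker := by
      ext x
      simp [Ideal.Quotient.eq_zero_iff_mem]
    rw [hk]

lemma upper_bd {m : ℕ} (a b q : MvPolynomial (Fin (m+2)) K) (ha : a ≠ 0) (hb : b ≠ 0)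
    (ha2 : a.totalDegree = 2) (hb2 : b.totalDegree = 2) (hq2 : q.totalDegree ≤ 2)
    (hab : IsRelPrime a b) (p : Ideal (MvPolynomial (Fin (m+2)) K))
    (hap : a ∈ p) (hbp : b ∈ p) (hqp : q ∈ p) (hq : q ∉ Ideal.span {a, b})
    (φ : MvPolynomial (Fin m) K →ₐ[K] MvPolynomial (Fin (m+2)) K)
    (hφ : ∀ s, s ≠ 0 → ∀ f, φ s * f ∈ Ideal.span {a,b} → f ∈ Ideal.span {a,b}) (D : ℕ)
    (hD : ∀ k, ∀ x ∈ restrictTotalDegree (Fin m) K k,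
      φ x ∈ restrictTotalDegree (Fin (m+2)) K (D * k)) (k : ℕ) :
    Hf p (D * k + 4) + (k + m).choose m ≤ 4 * (D * k + m + 4).choose m := by
  set t := D * k with ht
  let V := fun n => restrictTotalDegree (Fin (m+2)) K n
  let L := fun c : MvPolynomial (Fin (m+2)) K => LinearMap.mulLeft K c
  have hL : ∀ c, c ≠ 0 → ∀ n, Module.finrank K ((V n).map (L c)) = (n + (m + 2)).choose (m + 2) := by
    intro c hc n
    rw [finrank_map_of_disj, finrank_rtd]
    intro x _ hx
    exact (mul_eq_zero.1 hx).resolve_left hc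
  set A := (V (t+2)).map (L a) with hA
  set B := (V (t+2)).map (L b) with hB
  set Q := (restrictTotalDegree (Fin m) K k).map ((L q).comp φ.toLinearMap) with hQ
  have hABJ : A ⊔ B ≤ (Ideal.span {a, b}).restrictScalars K := by
    refine sup_le ?_ ?_
    · rintro _ ⟨x, _, rfl⟩
      exact Ideal.mul_mem_right _ _ (Ideal.subset_span (by simp))
    · rintro _ ⟨x, _, rfl⟩
      exact Ideal.mul_mem_right _ _ (Ideal.subset_span (by simp))
  have key : ∀ x, q * φ x ∈ Ideal.span {a, b} → x = 0 := by
    intro x hx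
    by_contra h0
    exact hq (hφ x h0 q (by rwa [mul_comm]))
  have hQr : Module.finrank K Q = (k + m).choose m := by
    rw [hQ, finrank_map_of_disj, finrank_rtd]
    intro x _ hx
    apply key
    have : q * φ x = 0 := hx
    rw [this]; exact zero_mem _
  have hdisj : (A ⊔ B) ⊓ Q = ⊥ := by
    rw [eq_bot_iff]
    rintro y ⟨hy1, ⟨x, _, rfl⟩⟩
    have h1 : q * φ x ∈ Ideal.span {a, b} := hABJ hy1
    rw [key x h1]; simp
  have hinf : A ⊓ B ≤ (V t).map (L (a * b)) := by
    rintro y ⟨⟨x, hx, rfl⟩, ⟨z, hz, hxz⟩⟩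
    have e : b * z = a * x := hxz
    have hd : b ∣ a * x := ⟨z, e.symm⟩
    obtain ⟨w, rfl⟩ := hab.symm.dvd_of_dvd_mul_left hd
    refine ⟨w, ?_, ?_⟩
    · change w ∈ restrictTotalDegree _ _ _
      have hx' : b * w ∈ restrictTotalDegree _ _ _ := hx
      rw [mem_restrictTotalDegree] at hx' ⊢
      by_cases hw : w = 0
      · subst hw; simp
      · rw [totalDegree_mul_of_isDomain hb hw] at hx'
        omega
    · change a * b * w = a * (b * w)
      ring
  have hV : ∀ c x s, c ∈ p → c.totalDegree ≤ 2 → x ∈ V s → s ≤ t + 2 →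
      c * x ∈ V (t+4) ⊓ p.restrictScalars K := by
    intro c x s hc hc2 hx hs
    refine ⟨?_, Ideal.mul_mem_right _ _ hc⟩
    change _ ∈ restrictTotalDegree _ _ _
    have hx' : x ∈ restrictTotalDegree _ _ _ := hx
    rw [mem_restrictTotalDegree] at hx' ⊢
    have := totalDegree_mul c x
    omega
  have hle : (A ⊔ B) ⊔ Q ≤ V (t+4) ⊓ p.restrictScalars K := by
    refine sup_le (sup_le ?_ ?_) ?_
    · rintro _ ⟨x, hx, rfl⟩
      exact hV a x _ hap ha2.le hx le_rfl
    · rintro _ ⟨x, hx, rfl⟩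
      exact hV b x _ hbp hb2.le hx le_rfl
    · rintro _ ⟨x, hx, rfl⟩
      exact hV q (φ x) _ hqp hq2 (hD k x hx) (by omega)
  have : ∀ n, Module.Finite K (V n) := fun n => finite_rtd n
  have i1 := Submodule.finrank_sup_add_finrank_inf_eq A B
  have i2 := Submodule.finrank_sup_add_finrank_inf_eq (A ⊔ B) Q
  have : Module.Finite K ↥(V (t+4) ⊓ p.restrictScalars K) :=
    Submodule.finiteDimensional_inf_left _ _
  have i3 := Submodule.finrank_mono hle
  have i4 := Submodule.finrank_mono hinf
  rw [hL _ (mul_ne_zero ha hb)] at i4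
  rw [hL a ha, hL b hb] at i1
  rw [hdisj, finrank_bot, hQr] at i2
  have i5 := Hf_add p (t+4)
  change Hf p (t+4) + Module.finrank K ↥(V (t+4) ⊓ p.restrictScalars K) = _ at i5
  have i6 := binom_ineq (t + m + 2) m
  rw [show t + 4 + (m + 2) = t + m + 2 + 4 by ring] at i5
  rw [show t + 2 + (m + 2) = t + m + 2 + 2 by ring] at i1
  rw [show t + (m + 2) = t + m + 2 by ring] at i4
  rw [show t + m + 4 = t + m + 2 + 2 by ring]
  omega

lemma p_inter {m : ℕ} (a b : MvPolynomial (Fin (m+2)) K) (ha : a ≠ 0)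
    (hab : IsRelPrime a b) (p : Ideal (MvPolynomial (Fin (m+2)) K)) [p.IsPrime]
    (hap : a ∈ p) (hbp : b ∈ p) (hht : p.height = 2)
    (φ : MvPolynomial (Fin m) K →ₐ[K] MvPolynomial (Fin (m+2)) K)
    (hφ : ∀ s, s ≠ 0 → ∀ f, φ s * f ∈ Ideal.span {a,b} → f ∈ Ideal.span {a,b}) :
    ∀ s, φ s ∈ p → s = 0 := by
  intro s hs
  by_contra h0
  have hle : Ideal.span {a, b} ≤ p := by
    rw [Ideal.span_le]; rintro x (rfl | rfl) <;> assumption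
  have hmin : p ∈ (Ideal.span {a, b}).minimalPrimes :=
    Ideal.mem_minimalPrimes_of_height_le hle (hht ▸ two_le_height ha hab)
  obtain ⟨y, hy, hxy⟩ := Ideal.exists_mul_mem_of_mem_minimalPrimes hmin hs
  exact hy (hφ s h0 y hxy)

end partF2

namespace Polynomial

lemma coeff_nonneg_of_ev (F : ℚ[X]) (h : ∀ᶠ k : ℕ in atTop, 0 ≤ F.eval (k : ℚ)) (M : ℕ)
    (hM : F.natDegree ≤ M) : 0 ≤ F.coeff M := by
  by_contra hneg
  push Not at hneg
  have hd : F.natDegree = M := le_antisymm hM (le_natDegree_of_ne_zero hneg.ne)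
  have hl : F.leadingCoeff = F.coeff M := by rw [leadingCoeff, hd]
  by_cases h0 : M = 0
  · subst h0
    rw [eq_C_of_natDegree_eq_zero hd] at h
    obtain ⟨k, hk⟩ := h.exists
    simp at hk
    linarith
  · have ht := (F.tendsto_atBot_of_leadingCoeff_nonpos
      (by rw [← natDegree_pos_iff_degree_pos]; omega) (by rw [hl]; exact hneg.le)).comp
        (tendsto_natCast_atTop_atTop (R := ℚ))
    obtain ⟨k, hk1, hk2⟩ := (h.and (ht.eventually_lt_atBot 0)).exists
    simp only [Function.comp] at hk2
    linarith

lemma natDegree_lin (D : ℚ) (hD : D ≠ 0) (b : ℚ) : (C D * X + C b).natDegree = 1 :=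
  natDegree_linear hD

lemma coeff_comp_lin (P : ℚ[X]) (D : ℚ) (hD : D ≠ 0) (b : ℚ) (M : ℕ) (hM : P.natDegree ≤ M) :
    (P.comp (C D * X + C b)).coeff M = P.coeff M * D ^ M := by
  rcases hM.lt_or_eq with h | rfl
  · rw [coeff_eq_zero_of_natDegree_lt h, coeff_eq_zero_of_natDegree_lt, zero_mul]
    rw [natDegree_comp, natDegree_lin D hD, mul_one]
    exact h
  · have := coeff_comp_degree_mul_degree (p := P) (q := C D * X + C b) (by rw [natDegree_lin D hD]; simp)
    rw [natDegree_lin D hD, mul_one, leadingCoeff_linear hD] at this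
    exact this

lemma lead_int (P : ℚ[X]) (h : ∀ᶠ n : ℕ in atTop, ∃ z : ℤ, P.eval (n : ℚ) = z) :
    ∃ z : ℤ, P.leadingCoeff * (P.natDegree.factorial : ℚ) = z := by
  obtain ⟨n0, hn0⟩ := eventually_atTop.1 h
  have h1 := congrFun (Polynomial.fwdDiff_iter_degree_eq_factorial P) (n0 : ℚ)
  rw [fwdDiff_iter_eq_sum_shift] at h1
  choose! z hz using hn0
  refine ⟨∑ k ∈ Finset.range (P.natDegree + 1), ((-1 : ℤ) ^ (P.natDegree - k) * P.natDegree.choose k) * z (n0 + k), ?_⟩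
  have h2 : P.leadingCoeff * (P.natDegree.factorial : ℚ) = ∑ k ∈ Finset.range (P.natDegree + 1), ((-1 : ℤ) ^ (P.natDegree - k) * P.natDegree.choose k) • P.eval ((n0 : ℚ) + k • (1 : ℚ)) := by
    rw [h1]; simp
  rw [h2, Int.cast_sum]
  refine Finset.sum_congr rfl fun k _ => ?_
  have := hz (n0 + k) (by omega)
  push_cast at this
  rw [nsmul_eq_mul, mul_one, this, zsmul_eq_mul]
  push_cast
  ring

lemma numerics (H : ℕ → ℕ) (m D : ℕ) (hD : 1 ≤ D) (P : ℚ[X])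
    (hP : ∀ᶠ n : ℕ in atTop, (H n : ℚ) = P.eval (n : ℚ))
    (hL : ∀ k, (k + m).choose m ≤ H (D * k))
    (hU : ∀ k, H (D * k + 4) + (k + m).choose m ≤ 4 * (D * k + m + 4).choose m) :
    P.natDegree = m ∧ ∃ e : ℕ, e ≤ 3 ∧ (e : ℚ) = P.leadingCoeff * (m.factorial : ℚ) := by
  have hDq : (D : ℚ) ≠ 0 := by positivity
  have hDp : (0 : ℚ) < D := by positivity
  have hm : (0 : ℚ) < m.factorial := by positivity
  have hlow : ∀ k : ℕ, (k : ℚ) ^ m ≤ m.factorial * ((k + m).choose m : ℚ) := by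
    intro k
    have := Nat.pow_le_choose (α := ℚ) m (k + m)
    rw [div_le_iff₀ hm] at this
    rw [mul_comm]
    refine le_trans ?_ this
    gcongr
    exact_mod_cast (by omega : k ≤ k + m + 1 - m)
  have hup : ∀ y : ℕ, m.factorial * (y.choose m : ℚ) ≤ (y : ℚ) ^ m := by
    intro y
    have := Nat.choose_le_pow_div (α := ℚ) m y
    rw [le_div_iff₀ hm] at this
    linarith
  have t1 : Tendsto (fun k : ℕ => D * k) atTop atTop :=
    tendsto_id.const_mul_atTop' (by omega)
  have t2 : Tendsto (fun k : ℕ => D * k + 4) atTop atTop := tendsto_atTop_mono (fun k => Nat.le_add_right _ _) t1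
  set A : ℚ[X] := C (m.factorial : ℚ) * P.comp (C (D : ℚ) * X + C 0) - X ^ m with hA
  set B : ℚ[X] := C 4 * (X ^ m).comp (C (D : ℚ) * X + C ((m : ℚ) + 4)) - X ^ m -
    C (m.factorial : ℚ) * P.comp (C (D : ℚ) * X + C 4) with hB
  have hAn : ∀ᶠ k : ℕ in atTop, 0 ≤ A.eval (k : ℚ) := by
    filter_upwards [t1.eventually hP] with k hk
    have h1 := hlow k
    have h2 : ((k + m).choose m : ℚ) ≤ H (D * k) := by exact_mod_cast hL k
    rw [hk] at h2
    push_cast at h2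
    simp only [hA, eval_sub, eval_mul, eval_C, eval_comp, eval_add, eval_X, eval_pow, add_zero]
    have := mul_le_mul_of_nonneg_left h2 hm.le
    linarith
  have hBn : ∀ᶠ k : ℕ in atTop, 0 ≤ B.eval (k : ℚ) := by
    filter_upwards [t2.eventually hP] with k hk
    have h1 := hlow k
    have h3 := hup (D * k + m + 4)
    have h2 : (H (D * k + 4) : ℚ) + ((k + m).choose m : ℚ) ≤ 4 * ((D * k + m + 4).choose m : ℚ) := by
      exact_mod_cast hU k
    rw [hk] at h2
    push_cast at h2 h3
    simp only [hB, eval_sub, eval_mul, eval_C, eval_comp, eval_add, eval_X, eval_pow]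
    have := mul_le_mul_of_nonneg_left h2 hm.le
    rw [← add_assoc]
    linarith
  have hAdeg : ∀ M, P.natDegree ≤ M → m ≤ M → A.natDegree ≤ M ∧ B.natDegree ≤ M := by
    intro M h1 h2
    have c1 : ∀ b, (P.comp (C (D : ℚ) * X + C b)).natDegree ≤ M := by
      intro b; rw [natDegree_comp, natDegree_lin _ hDq, mul_one]; exact h1
    have c2 : ∀ b, ((X ^ m : ℚ[X]).comp (C (D : ℚ) * X + C b)).natDegree ≤ M := by
      intro b; rw [natDegree_comp, natDegree_lin _ hDq, mul_one, natDegree_X_pow]; exact h2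
    have c3 : (X ^ m : ℚ[X]).natDegree ≤ M := by rw [natDegree_X_pow]; exact h2
    constructor
    · exact (natDegree_sub_le _ _).trans (max_le ((natDegree_C_mul_le _ _).trans (c1 _)) c3)
    · refine (natDegree_sub_le _ _).trans (max_le ((natDegree_sub_le _ _).trans (max_le ?_ c3)) ?_)
      · exact (natDegree_C_mul_le _ _).trans (c2 _)
      · exact (natDegree_C_mul_le _ _).trans (c1 _)
  have hAc : ∀ M, P.natDegree ≤ M → m ≤ M → A.coeff M = m.factorial * (P.coeff M * D ^ M) - (if M = m then 1 else 0) := by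
    intro M h1 h2
    rw [hA, coeff_sub, coeff_C_mul, coeff_comp_lin _ _ hDq _ _ h1, coeff_X_pow]
  have hBc : ∀ M, P.natDegree ≤ M → m ≤ M → B.coeff M = 4 * ((if M = m then 1 else 0) * D ^ M) - (if M = m then 1 else 0) - m.factorial * (P.coeff M * D ^ M) := by
    intro M h1 h2
    rw [hB, coeff_sub, coeff_sub, coeff_C_mul, coeff_C_mul, coeff_comp_lin _ _ hDq _ _ h1,
      coeff_comp_lin _ _ hDq _ _ (by rw [natDegree_X_pow]; exact h2), coeff_X_pow]
  have hdm : P.natDegree ≤ m := by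
    by_contra hlt
    push Not at hlt
    have a1 := coeff_nonneg_of_ev A hAn _ (hAdeg _ le_rfl hlt.le).1
    have b1 := coeff_nonneg_of_ev B hBn _ (hAdeg _ le_rfl hlt.le).2
    rw [hAc _ le_rfl hlt.le, if_neg hlt.ne'] at a1
    rw [hBc _ le_rfl hlt.le, if_neg hlt.ne'] at b1
    have : (m.factorial : ℚ) * (P.coeff P.natDegree * D ^ P.natDegree) = 0 := by linarith
    have hc : P.coeff P.natDegree ≠ 0 := by
      change P.leadingCoeff ≠ 0
      rw [leadingCoeff_ne_zero]
      rintro rfl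
      simp at hlt
    have : (m.factorial : ℚ) * (P.coeff P.natDegree * D ^ P.natDegree) ≠ 0 := by positivity
    contradiction
  have a1 := coeff_nonneg_of_ev A hAn _ (hAdeg _ hdm le_rfl).1
  have b1 := coeff_nonneg_of_ev B hBn _ (hAdeg _ hdm le_rfl).2
  rw [hAc _ hdm le_rfl, if_pos rfl] at a1
  rw [hBc _ hdm le_rfl, if_pos rfl] at b1
  have hDm : (0 : ℚ) < D ^ m := by positivity
  have hpos : 0 < P.leadingCoeff * (m.factorial : ℚ) ∧ P.leadingCoeff * (m.factorial : ℚ) < 4 ∧ P.natDegree = m := by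
    have hcne : P.coeff m ≠ 0 := by
      intro h; rw [h] at a1; simp at a1; linarith
    have hd : P.natDegree = m := le_antisymm hdm (le_natDegree_of_ne_zero hcne)
    have hl : P.leadingCoeff = P.coeff m := by rw [leadingCoeff, hd]
    rw [hl]
    refine ⟨?_, ?_, hd⟩
    · by_contra hn
      push Not at hn
      have := mul_nonpos_of_nonpos_of_nonneg hn hDm.le
      linarith
    · by_contra hn
      push Not at hn
      have := mul_le_mul_of_nonneg_right hn hDm.le
      linarith
  obtain ⟨z, hz⟩ := lead_int P (by
    filter_upwards [hP] with n hn
    exact ⟨H n, by rw [← hn]; simp⟩)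
  rw [hpos.2.2] at hz
  rw [hz] at hpos
  have z1 : 0 < z := by exact_mod_cast hpos.1
  have z2 : z < 4 := by exact_mod_cast hpos.2.1
  refine ⟨hpos.2.2, z.toNat, by omega, ?_⟩
  rw [hz]
  exact_mod_cast Int.toNat_of_nonneg z1.le

end Polynomial

/-- for an ideal minimally generated by `n ≥ 3` quadrics with `ht I = 2`,
any minimal prime `p` of `I` with `ht p = 2` has `e(R/p) ≤ 3`. -/
theorem stmt3 (K : Type u) [Field K] (N n : ℕ) (hn : 3 ≤ n)
    (I : Ideal (MvPolynomial (Fin N) K)) (g : Fin n → MvPolynomial (Fin N) K)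
    (hg : ∀ i, (g i).IsHomogeneous 2)
    (hI : I = Ideal.span (Set.range g))
    (hmin : ∀ (k : ℕ) (h : Fin k → MvPolynomial (Fin N) K),
      I = Ideal.span (Set.range h) → n ≤ k)
    (hht : idealHeight I = 2)
    (p : Ideal (MvPolynomial (Fin N) K)) (hp : p ∈ I.minimalPrimes)
    (hpht : idealHeight p = 2) :
    ∃ e : ℕ, e ≤ 3 ∧ IsHSMultiplicity (MvPolynomial (Fin N) K) (maxIdeal K (Fin N)) p e := by
  have hht' : I.height = 2 := by rw [← idealHeight_eq]; exact hht
  have hpht' : p.height = 2 := by rw [← idealHeight_eq]; exact hpht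
  have hpp : p.IsPrime := hp.1.1
  have hN : 2 ≤ N := by
    have h1 := Ideal.height_le_ringKrullDim_of_isPrime (I := p)
    rw [hpht', dim_mv] at h1
    exact_mod_cast h1
  obtain ⟨m, rfl⟩ : ∃ m, N = m + 2 := ⟨N - 2, by omega⟩
  have hgI : ∀ i, g i ∈ I := fun i => hI ▸ Ideal.subset_span ⟨i, rfl⟩
  have hirr : ∀ π, Irreducible π → ∃ i, ¬ π ∣ g i := by
    intro π hπ
    by_contra hc
    push Not at hc
    have h1 : I ≤ Ideal.span {π} := by
      rw [hI, Ideal.span_le]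
      rintro _ ⟨i, rfl⟩
      exact Ideal.mem_span_singleton.2 (hc i)
    have h2 := (Ideal.height_mono h1).trans (height_span_irred hπ)
    rw [hht'] at h2
    exact absurd h2 (by decide)
  have h0 : ∃ i, g i ≠ 0 := by
    by_contra hc
    push Not at hc
    have h1 : I = Ideal.span (Set.range (fun _ : Fin 0 => (0 : MvPolynomial (Fin (m+2)) K))) := by
      rw [hI]
      apply le_antisymm
      · rw [Ideal.span_le]
        rintro _ ⟨i, rfl⟩
        rw [hc i]; exact zero_mem _
      · rw [Ideal.span_le]
        rintro _ ⟨i, rfl⟩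
        exact zero_mem _
    have := hmin 0 _ h1
    omega
  obtain ⟨a, b, haI, hbI, ha2, hb2, ha0, hb0, hab⟩ := choose_ab g hg h0 hirr
  rw [← hI] at haI hbI
  obtain ⟨i, hq⟩ : ∃ i, g i ∉ Ideal.span {a, b} := by
    by_contra hc
    push Not at hc
    have h1 : I = Ideal.span (Set.range ![a, b]) := by
      have hr : Set.range ![a, b] = {a, b} := by simp [Set.pair_comm]
      rw [hr]
      apply le_antisymm
      · rw [hI, Ideal.span_le]
        rintro _ ⟨i, rfl⟩
        exact hc i
      · rw [Ideal.span_le]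
        rintro x (rfl | rfl) <;> assumption
    have := hmin 2 _ h1
    omega
  obtain ⟨φ, hφ, hint⟩ := tf_main m a b ha0 (fun w hw => hab.dvd_of_dvd_mul_left hw)
  have hIp : I ≤ p := hp.1.2
  have hinter := p_inter a b ha0 hab p (hIp haI) (hIp hbI) hpht' φ hφ
  obtain ⟨D, hD1, hD⟩ := phi_deg φ
  obtain ⟨P, hP⟩ := Hf_evPoly p
  obtain ⟨hdeg, e, he, hlead⟩ := Polynomial.numerics (Hf p) m D hD1 P hP
    (lower_bd φ p hinter D hD)
    (upper_bd a b (g i) ha0 hb0 ha2 hb2 (hg i).totalDegree_le hab p (hIp haI) (hIp hbI)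
      (hIp (hgI i)) hq φ hφ D hD)
  have hJp : Ideal.span {a, b} ≤ p := by
    rw [Ideal.span_le]
    rintro x (rfl | rfl)
    · exact hIp haI
    · exact hIp hbI
  have hdim : ringKrullDim (MvPolynomial (Fin (m+2)) K ⧸ p) = m := by
    refine dim_eq (K := K) m ((Ideal.Quotient.mk p).comp (φ : MvPolynomial (Fin m) K →+* MvPolynomial (Fin (m+2)) K)) ?_ ?_
    · rw [injective_iff_map_eq_zero]
      intro s hs
      exact hinter s (Ideal.Quotient.eq_zero_iff_mem.1 hs)
    · have h2 : (Ideal.Quotient.factor hJp).IsIntegral :=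
        RingHom.isIntegral_of_surjective _ (Ideal.Quotient.factor_surjective hJp)
      have h3 := RingHom.IsIntegral.trans _ _ hint h2
      exact h3
  have hhom := homog_min g 2 hg p (hI ▸ hp)
  refine ⟨e, he, m, P.comp (Polynomial.X - Polynomial.C 1), hdim, ?_, ?_, ?_⟩
  · rw [Polynomial.natDegree_comp, Polynomial.natDegree_X_sub_C, mul_one, hdeg]
  · rw [hlead, Polynomial.leadingCoeff_comp (by rw [Polynomial.natDegree_X_sub_C]; exact one_ne_zero),
      Polynomial.leadingCoeff_X_sub_C, one_pow, mul_one]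
  · rw [← Filter.map_add_atTop_eq_nat 1, Filter.eventually_map]
    filter_upwards [hP] with n hn
    refine ⟨Hf p n, ?_, length_eq_Hf p hhom n⟩
    rw [hn]
    simp
end
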